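/- arXiv:2011.00932 — 11 statements merged into one kernel-verified Lean document; each statement's English description precedes it below -/
import Mathlib

section
/- Let F be a field, τ : F → F a ring homomorphism, k := F^τ = {a ∈ F : τ(a) = a} its fixed field, and K a subfield of F with τ(K) ⊆ K and k ⊆ K. Let R ⊆ F be a K-subalgebra with τ(R) ⊆ R, and let B be a commutative k-algebra; endow R ⊗_k B with the ring endomorphism determined by τ(r ⊗ b) = τ(r) ⊗ b. Then: (i) the natural map R ⊗_k B → F ⊗_k B is injective; and (ii) the subring of τ-fixed elements of R ⊗_k B is exactly the image of k ⊗_k B, i.e. (R ⊗_k B)^τ = 1 ⊗ B. -/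
open scoped TensorProduct

set_option synthInstance.maxHeartbeats 400000
set_option maxHeartbeats 1000000

/-- Lemma on linear disjointness: for a `τ`-stable `K`-subalgebra `R ⊆ F` and a `k`-algebra `B`
with trivial `τ`-action, the natural map `R ⊗[k] B → F ⊗[k] B` is injective and the `τ`-fixed
elements of `R ⊗[k] B` are exactly the image of `1 ⊗ B`. -/
theorem linear_disjointness_tensor
    (F : Type*) [Field F] (τ : F →+* F)
    (k : Subfield F) (hk : ∀ a : F, a ∈ k ↔ τ a = a)
    (K : Subfield F) (hkK : (k : Set F) ⊆ (K : Set F)) (hτK : ∀ a ∈ K, τ a ∈ K)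
    (R : Subalgebra k F) (hKR : (K : Set F) ⊆ (R : Set F))
    (hτR : ∀ r ∈ R, τ r ∈ R)
    (B : Type*) [CommRing B] [Algebra k B]
    (T : (R ⊗[k] B) →+* (R ⊗[k] B))
    (hT : ∀ (r : R) (b : B),
      T (r ⊗ₜ[k] b) = (⟨τ r, hτR r r.2⟩ : R) ⊗ₜ[k] b) :
    Function.Injective
      (Algebra.TensorProduct.map R.val (AlgHom.id k B) : R ⊗[k] B →ₐ[k] F ⊗[k] B)
    ∧ ∀ x : R ⊗[k] B, T x = x ↔ ∃ b : B, x = 1 ⊗ₜ[k] b := by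
  constructor
  · have h := Module.Flat.rTensor_preserves_injective_linearMap (M := B) R.val.toLinearMap
      Subtype.val_injective
    exact h
  · intro x
    let bs := Module.Basis.ofVectorSpace k B
    let e := Algebra.TensorProduct.basis R bs
    have key : ∀ (x : R ⊗[k] B) i, ((e.repr (T x) i : R) : F) = τ ((e.repr x i : R) : F) := by
      intro x i
      induction x using TensorProduct.induction_on with
      | zero => simp
      | add x y hx hy =>
        simp only [map_add, Finsupp.add_apply, Subalgebra.coe_add, hx, hy]
      | tmul r b =>
        rw [hT]
        simp only [e, Algebra.TensorProduct.basis_repr_tmul, Finsupp.smul_apply,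
          Finsupp.mapRange_apply, smul_eq_mul, Subalgebra.coe_mul, map_mul]
        congr 1
        exact ((hk _).1 (bs.repr b i).2).symm
    constructor
    · intro hx
      have hc : ∀ i, ∃ c : k, algebraMap k R c = e.repr x i := fun i =>
        ⟨⟨((e.repr x i : R) : F), (hk _).2 (by rw [← key, hx])⟩, rfl⟩
      choose c hc using hc
      refine ⟨∑ i ∈ (e.repr x).support, c i • bs i, ?_⟩
      conv_lhs => rw [← e.linearCombination_repr x]
      rw [Finsupp.linearCombination_apply, Finsupp.sum, TensorProduct.tmul_sum]
      refine Finset.sum_congr rfl fun i _ => ?_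
      rw [← hc, Algebra.TensorProduct.basis_apply, algebraMap_smul, TensorProduct.tmul_smul]
    · rintro ⟨b, rfl⟩
      rw [hT]
      congr 1
      exact Subtype.ext (map_one τ)
end

section
/- Let F be a field, τ : F → F a ring homomorphism, k := F^τ its fixed field, and K a subfield of F with τ(K) ⊆ K and k ⊆ K. Let A ∈ GL_d(K) and let U ∈ GL_d(F) satisfy τ(U) = A·U (τ applied entrywise). Let R be the K-subalgebra of F generated by the entries of U together with (det U)⁻¹. Then τ(R) ⊆ R, and R is τ-simple: every ideal I of R with τ(I) ⊆ I satisfies I = (0) or I = R. -/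
set_option synthInstance.maxHeartbeats 400000
set_option maxHeartbeats 1000000

open MvPolynomial in
theorem pv_exists_inv {F : Type*} [Field F] (τ : F →+* F) {σ : Type*}
    (Q : Submodule F (MvPolynomial σ F)) (hQ : ∀ g ∈ Q, map τ g ∈ Q) :
    ∀ (n : ℕ) (g : MvPolynomial σ F), g.support.card ≤ n → g ∈ Q → g ≠ 0 →
      ∃ c ∈ Q, c ≠ 0 ∧ map τ c = c ∧ c.support ⊆ g.support := by
  classical
  intro n
  induction n with
  | zero =>
    intro g hn hg h0
    exact absurd (support_eq_empty.1 (Finset.card_eq_zero.1 (Nat.le_zero.1 hn))) h0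
  | succ n ih =>
    intro g hn hg h0
    obtain ⟨m, hm⟩ := Finset.nonempty_iff_ne_empty.2 (fun h => h0 (support_eq_empty.1 h))
    have ha : coeff m g ≠ 0 := mem_support_iff.1 hm
    have hgQ : (coeff m g)⁻¹ • g ∈ Q := Q.smul_mem _ hg
    set g' := (coeff m g)⁻¹ • g with hg'
    have h1 : coeff m g' = 1 := by simp [hg', ha]
    have hsup : ∀ x, x ∉ g.support → coeff x g' = 0 := by
      intro x hx
      simp [hg', notMem_support_iff.1 hx]
    by_cases hh : map τ g' - g' = 0
    · refine ⟨g', hgQ, ?_, sub_eq_zero.1 hh, ?_⟩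
      · intro h; rw [h] at h1; simp at h1
      · intro x hx
        by_contra hc
        exact (mem_support_iff.1 hx) (hsup x hc)
    · have hs : (map τ g' - g').support ⊆ g.support.erase m := by
        intro x hx
        rw [mem_support_iff, coeff_sub, coeff_map] at hx
        rw [Finset.mem_erase]
        constructor
        · rintro rfl; simp [h1] at hx
        · by_contra hc
          simp [hsup x hc] at hx
      have hc := Finset.card_le_card hs
      rw [Finset.card_erase_of_mem hm] at hc
      obtain ⟨c, c1, c2, c3, c4⟩ := ih _ (by omega) (Q.sub_mem (hQ _ hgQ) hgQ) hh
      exact ⟨c, c1, c2, c3, c4.trans (hs.trans (Finset.erase_subset _ _))⟩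

open MvPolynomial in
theorem pv_exists_inv' {F : Type*} [Field F] (τ : F →+* F) {σ : Type*}
    (Q : Submodule F (MvPolynomial σ F)) (hQ : ∀ g ∈ Q, map τ g ∈ Q)
    (e : MvPolynomial σ F →ₗ[F] F) :
    ∀ (n : ℕ) (g : MvPolynomial σ F), g.support.card ≤ n → g ∈ Q → e g ≠ 0 →
      ∃ c ∈ Q, e c ≠ 0 ∧ map τ c = c := by
  classical
  intro n
  induction n with
  | zero =>
    intro g hn hg h0
    rw [support_eq_empty.1 (Finset.card_eq_zero.1 (Nat.le_zero.1 hn))] at h0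
    simp at h0
  | succ n ih =>
    intro g hn hg h0
    have hg0 : g ≠ 0 := by rintro rfl; simp at h0
    obtain ⟨c, c1, c2, c3, c4⟩ := pv_exists_inv τ Q hQ _ g le_rfl hg hg0
    by_cases hc : e c = 0
    swap
    · exact ⟨c, c1, hc, c3⟩
    obtain ⟨m, hm⟩ := Finset.nonempty_iff_ne_empty.2 (fun h => c2 (support_eq_empty.1 h))
    have ha : coeff m c ≠ 0 := mem_support_iff.1 hm
    have hs : (g - (coeff m g / coeff m c) • c).support ⊆ g.support.erase m := by
      intro x hx
      rw [mem_support_iff, coeff_sub, coeff_smul] at hx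
      rw [Finset.mem_erase]
      constructor
      · rintro rfl; simp [ha] at hx
      · by_contra hc
        have : x ∉ c.support := fun h => hc (c4 h)
        simp [notMem_support_iff.1 hc, notMem_support_iff.1 this] at hx
    have hcc := Finset.card_le_card hs
    rw [Finset.card_erase_of_mem (c4 hm)] at hcc
    exact ih (g - (coeff m g / coeff m c) • c) (by omega) (Q.sub_mem hg (Q.smul_mem _ c1)) (by simpa [hc] using h0)

open MvPolynomial in
/-- descent of coefficients -/
theorem pv_descent {F : Type*} [Field F] (K : Subfield F) {σ : Type*} (R : Subalgebra K F)
    (v : σ → F) (I : Ideal R) (g : MvPolynomial σ F)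
    (hg : g ∈ Submodule.span F
      {q | ∃ p : MvPolynomial σ K, (∃ y ∈ I, (y : F) = aeval v p) ∧ q = map (algebraMap K F) p})
    (hgR : ∀ m, coeff m g ∈ R) : ∃ y ∈ I, (y : F) = aeval v g := by
  classical
  obtain ⟨π, hπ⟩ := (R.toSubmodule.subtype).exists_leftInverse_of_injective
    (by simp)
  have hπ' : ∀ x : R, ((π x : R.toSubmodule) : F) = x := fun x => by
    have := LinearMap.congr_fun hπ x
    exact congrArg Subtype.val this
  let π' : F →ₗ[K] F := R.toSubmodule.subtype ∘ₗ π
  have hπR : ∀ x ∈ R, π' x = x := fun x hx => hπ' ⟨x, hx⟩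
  have hπmem : ∀ x, π' x ∈ R := fun x => (π x).2
  let L : MvPolynomial σ F →ₗ[K] F :=
    (Finsupp.lsum K fun m : σ →₀ ℕ =>
      (LinearMap.mulRight K (m.prod fun i n => v i ^ n)) ∘ₗ π') ∘ₗ
      ((basisMonomials σ F).repr.toLinearMap.restrictScalars K)
  have hLmon : ∀ m a, L (monomial m a) = π' a * m.prod fun i n => v i ^ n := by
    intro m a
    have : (basisMonomials σ F).repr (monomial m a) = Finsupp.single m a := by
      have : monomial m a = a • (basisMonomials σ F) m := by simp [smul_monomial]
      rw [this, map_smul, Module.Basis.repr_self]; simp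
    simp [L, this]
  have hL1 : ∀ (f : F) (p : MvPolynomial σ K),
      L (f • map (algebraMap K F) p) = π' f * aeval v p := by
    intro f p
    induction p using MvPolynomial.induction_on' with
    | monomial m a =>
      rw [map_monomial, smul_monomial, hLmon, aeval_monomial]
      have : f • (algebraMap K F a) = a • f := by
        rw [smul_eq_mul, mul_comm]; rfl
      rw [this, map_smul, Algebra.smul_def]; ring
    | add p q hp hq => rw [map_add, smul_add, map_add, map_add, mul_add, hp, hq]
  have hL2 : L g = aeval v g := by
    conv_lhs => rw [g.as_sum]
    conv_rhs => rw [g.as_sum]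
    rw [map_sum, map_sum]
    refine Finset.sum_congr rfl fun m _ => ?_
    rw [hLmon, aeval_monomial, hπR _ (hgR m)]; rfl
  rw [← hL2]
  clear hL2 hgR
  have key : ∀ f : F, ∃ y ∈ I, (y : F) = L (f • g) := by
    induction hg using Submodule.span_induction with
    | mem x hx =>
      obtain ⟨p, ⟨y, hy, hyp⟩, rfl⟩ := hx
      intro f
      refine ⟨⟨π' f, hπmem f⟩ * y, I.mul_mem_left _ hy, ?_⟩
      rw [hL1, ← hyp]; rfl
    | zero => intro f; exact ⟨0, I.zero_mem, by simp⟩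
    | add x y _ _ hx hy =>
      intro f
      obtain ⟨a, ha, ha'⟩ := hx f
      obtain ⟨b, hb, hb'⟩ := hy f
      exact ⟨a + b, I.add_mem ha hb, by rw [smul_add, map_add, ← ha', ← hb']; rfl⟩
    | smul a x _ hx =>
      intro f
      rw [smul_smul]
      exact hx _
  simpa using key 1

open MvPolynomial in
/-- The `K`-subalgebra `R = K[U, (det U)⁻¹]` of `F` generated by the entries of a fundamental
solution matrix `U` of `τ(Y) = A·Y` (with `A ∈ GL_d(K)`) together with `(det U)⁻¹` is stable
under `τ` and is `τ`-simple. -/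
theorem picardVessiot_ring_tau_simple
    (F : Type*) [Field F] (τ : F →+* F)
    (k : Subfield F) (hk : ∀ a : F, a ∈ k ↔ τ a = a)
    (K : Subfield F) (hkK : (k : Set F) ⊆ (K : Set F)) (hτK : ∀ a ∈ K, τ a ∈ K)
    (d : ℕ) (A U : Matrix (Fin d) (Fin d) F)
    (hA : ∀ i j, A i j ∈ K) (hAdet : A.det ≠ 0) (hUdet : U.det ≠ 0)
    (hU : U.map τ = A * U)
    (R : Subalgebra K F)
    (hR : R = Algebra.adjoin K
      ((Set.range fun p : Fin d × Fin d => U p.1 p.2) ∪ {(U.det)⁻¹})) :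
    (∀ x ∈ R, τ x ∈ R) ∧
    ∀ I : Ideal R,
      (∀ x : R, x ∈ I → ∀ hx : τ (x : F) ∈ R, (⟨τ (x : F), hx⟩ : R) ∈ I) →
      I = ⊥ ∨ I = ⊤ := by
  classical
  let σ := Option (Fin d × Fin d)
  -- linear substitutions
  let s : Matrix (Fin d) (Fin d) F → F → σ → MvPolynomial σ F := fun B b o =>
    o.elim (C b * X none) (fun p => ∑ l, C (B p.1 l) * X (some (l, p.2)))
  let v : σ → F := fun o => o.elim (U.det)⁻¹ (fun p => U p.1 p.2)
  let e₀ : σ → F := fun o => o.elim 1 (fun p => (1 : Matrix (Fin d) (Fin d) F) p.1 p.2)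
  have hRv : R = (aeval v : MvPolynomial σ K →ₐ[K] F).range := by
    rw [hR, ← Algebra.adjoin_range_eq_range_aeval]
    congr 1
    ext x
    constructor
    · rintro (⟨p, rfl⟩ | h)
      · exact ⟨some p, rfl⟩
      · exact ⟨none, h.symm⟩
    · rintro ⟨_ | p, rfl⟩
      · exact Or.inr rfl
      · exact Or.inl ⟨p, rfl⟩
  have hvR : ∀ o, v o ∈ R := fun o => by
    rw [hRv]; exact ⟨X o, by simp⟩
  have hUR : ∀ i j, U i j ∈ R := fun i j => hvR (some (i, j))
  have hdR : (U.det)⁻¹ ∈ R := hvR none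
  have hKR : ∀ a ∈ K, a ∈ R := fun a ha => R.algebraMap_mem ⟨a, ha⟩
  have hτdet : τ U.det = A.det * U.det := by
    rw [← Matrix.det_mul, ← hU]; exact RingHom.map_det τ U
  have hτU : ∀ i j, τ (U i j) = ∑ l, A i l * U l j := fun i j => by
    have := congrFun (congrFun hU i) j
    simpa [Matrix.mul_apply] using this
  -- twisted Frobenius on K-polynomials
  let τK : K →+* K := τ.restrict K K hτK
  let AK : Matrix (Fin d) (Fin d) K := fun i j => ⟨A i j, hA i j⟩
  have hAK : ∀ i j, ((AK i j : K) : F) = A i j := fun i j => rfl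
  have hAdetK : A.det ∈ K := by
    have : A.det = ((AK.det : K) : F) := by
      have := RingHom.map_det K.subtype AK
      exact this.symm
    rw [this]; exact (AK.det).2
  let tK : σ → MvPolynomial σ K := fun o =>
    o.elim (C (⟨A.det⁻¹, K.inv_mem hAdetK⟩ : K) * X none) (fun p => ∑ l, C (AK p.1 l) * X (some (l, p.2)))
  let Φ : MvPolynomial σ K → MvPolynomial σ K := fun p => aeval tK (map τK p)
  have hΦ : ∀ p : MvPolynomial σ K, aeval v (Φ p) = τ (aeval v p) := by
    intro p
    have : ((aeval v : MvPolynomial σ K →ₐ[K] F).toRingHom.comp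
        ((aeval tK : MvPolynomial σ K →ₐ[K] MvPolynomial σ K).toRingHom.comp (map τK)))
        = τ.comp (aeval v : MvPolynomial σ K →ₐ[K] F).toRingHom := by
      apply MvPolynomial.ringHom_ext
      · intro a
        simp
        rfl
      · rintro (_ | ⟨i, j⟩)
        · simp [tK, v, hτdet]
          rw [mul_comm]; rfl
        · simp [tK, v, hτU]
          rfl
    exact RingHom.congr_fun this p
  have hstab : ∀ x ∈ R, τ x ∈ R := by
    intro x hx
    rw [hRv] at hx ⊢
    obtain ⟨p, rfl⟩ := hx
    exact ⟨Φ p, hΦ p⟩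
  refine ⟨hstab, fun I hI => ?_⟩
  by_cases hI0 : I = ⊥
  · exact Or.inl hI0
  right
  obtain ⟨x, hxI, hx0⟩ := Submodule.exists_mem_ne_zero_of_ne_bot hI0
  let S : MvPolynomial σ F →ₐ[F] MvPolynomial σ F := aeval (s U (U.det)⁻¹)
  let S' : MvPolynomial σ F →ₐ[F] MvPolynomial σ F := aeval (s U⁻¹ U.det)
  let e : MvPolynomial σ F →ₐ[F] F := aeval e₀
  have heS : ∀ p, e (S p) = aeval v p := by
    intro p
    have : e.comp S = aeval v := by
      apply MvPolynomial.algHom_ext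
      rintro (_ | ⟨i, j⟩)
      · simp [e, S, s, v, e₀]
      · simp [e, S, s, v, e₀, Matrix.one_apply]
    exact AlgHom.congr_fun this p
  have hUU : ∀ i j, ∑ l, U⁻¹ i l * U l j = (1 : Matrix (Fin d) (Fin d) F) i j := by
    intro i j
    rw [← Matrix.mul_apply, Matrix.nonsing_inv_mul _ (isUnit_iff_ne_zero.2 hUdet)]
  have hvS' : ∀ p, aeval v (S' p) = e p := by
    intro p
    have : (aeval v : MvPolynomial σ F →ₐ[F] F).comp S' = e := by
      apply MvPolynomial.algHom_ext
      rintro (_ | ⟨i, j⟩)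
      · simp [e, S', s, v, e₀, hUdet]
      · simp [e, S', s, v, e₀, hUU]
    exact AlgHom.congr_fun this p
  have hS'S : ∀ p, S' (S p) = p := by
    intro p
    have : S'.comp S = AlgHom.id F _ := by
      apply MvPolynomial.algHom_ext
      rintro (_ | ⟨i, j⟩)
      · simp [S, S', s, ← mul_assoc, ← C_mul, hUdet]
      · have h2 : ∀ m, ∑ l, U i l * U⁻¹ l m = (1 : Matrix (Fin d) (Fin d) F) i m := by
          intro m
          rw [← Matrix.mul_apply, Matrix.mul_nonsing_inv _ (isUnit_iff_ne_zero.2 hUdet)]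
        simp only [S, S', s, AlgHom.comp_apply, aeval_X, Option.elim, map_sum, map_mul,
          algHom_C, algebraMap_eq, AlgHom.id_apply, Finset.mul_sum]
        rw [Finset.sum_comm]
        simp only [← mul_assoc, ← C_mul, ← Finset.sum_mul, ← map_sum, h2]
        simp [Matrix.one_apply]
    exact AlgHom.congr_fun this p
  let ι : MvPolynomial σ K →+* MvPolynomial σ F := map (algebraMap K F)
  have hτS : ∀ p : MvPolynomial σ K, map τ (S (ι p)) = S (ι (Φ p)) := by
    intro p
    have : (map τ).comp (S.toRingHom.comp ι) = S.toRingHom.comp (ι.comp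
        ((aeval tK : MvPolynomial σ K →ₐ[K] MvPolynomial σ K).toRingHom.comp (map τK))) := by
      apply MvPolynomial.ringHom_ext
      · intro a
        simp [ι, S]
        rfl
      · rintro (_ | ⟨i, j⟩)
        · simp [ι, S, s, tK, hτdet]
          rw [mul_comm (C _) (C _), mul_assoc]; rfl
        · simp [ι, S, s, tK, hτU, Finset.sum_mul, Finset.mul_sum, mul_assoc]
          rw [Finset.sum_comm]
          rfl
    exact RingHom.congr_fun this p
  let P : Set (MvPolynomial σ K) := {p | ∃ y ∈ I, (y : F) = aeval v p}
  let Q : Submodule F (MvPolynomial σ F) := Submodule.span F ((fun p => S (ι p)) '' P)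
  have hQ : ∀ g ∈ Q, map τ g ∈ Q := by
    intro g hg
    induction hg using Submodule.span_induction with
    | mem x hx =>
      obtain ⟨p, ⟨y, hy, hyp⟩, rfl⟩ := hx
      apply Submodule.subset_span
      refine ⟨Φ p, ⟨⟨τ y, hstab _ y.2⟩, hI y hy _, ?_⟩, (hτS p).symm⟩
      rw [hΦ, ← hyp]
    | zero => simp
    | add x y _ _ hx hy => rw [map_add]; exact Q.add_mem hx hy
    | smul a x _ hx =>
      rw [smul_eq_C_mul, map_mul, map_C, ← smul_eq_C_mul]
      exact Q.smul_mem _ hx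
  have hxR : (x : F) ∈ (aeval v : MvPolynomial σ K →ₐ[K] F).range := hRv ▸ x.2
  obtain ⟨p, hp⟩ := hxR
  have hp' : aeval v p = (x : F) := hp
  obtain ⟨c, hcQ, hce, hcτ⟩ := pv_exists_inv' τ Q hQ e.toLinearMap _ (S (ι p)) le_rfl
    (Submodule.subset_span ⟨p, ⟨x, hxI, hp'.symm⟩, rfl⟩) (by
      rw [AlgHom.toLinearMap_apply, heS, aeval_map_algebraMap, hp']
      simpa using hx0)
  rw [AlgHom.toLinearMap_apply] at hce
  have hck : ∀ m, coeff m c ∈ K := fun m => hkK ((hk _).2 (by rw [← coeff_map, hcτ]))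
  have hdetR : U.det ∈ R := by
    rw [Matrix.det_apply]
    exact R.sum_mem fun i _ => by
      rw [Units.smul_def]
      exact R.zsmul_mem (R.prod_mem fun j _ => hUR _ _) _
  have hUinvR : ∀ i j, U⁻¹ i j ∈ R := by
    intro i j
    rw [Matrix.inv_def, Matrix.smul_apply, Ring.inverse_eq_inv', smul_eq_mul]
    refine R.mul_mem hdR ?_
    rw [Matrix.adjugate_apply, Matrix.det_apply]
    exact R.sum_mem fun i _ => by
      rw [Units.smul_def]
      refine R.zsmul_mem (R.prod_mem fun l _ => ?_) _
      rw [Matrix.updateRow_apply]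
      split_ifs
      · rw [Pi.single_apply]; split_ifs
        · exact R.one_mem
        · exact R.zero_mem
      · exact hUR _ _
  -- polynomials with coefficients in R
  let G : Subsemiring (MvPolynomial σ F) :=
    (map (R.val : R →+* F) : MvPolynomial σ R →+* MvPolynomial σ F).rangeS
  have hGC : ∀ a ∈ R, C a ∈ G := fun a ha => ⟨C ⟨a, ha⟩, by simp⟩
  have hGX : ∀ o, X o ∈ G := fun o => ⟨X o, by simp⟩
  have hcG : S' c ∈ G := by
    rw [c.as_sum, map_sum]
    refine G.sum_mem fun m _ => ?_
    simp only [S', aeval_monomial]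
    refine G.mul_mem (hGC _ (hKR _ (hck m))) (G.prod_mem fun o _ => G.pow_mem ?_ _)
    rcases o with _ | ⟨i, j⟩
    · exact G.mul_mem (hGC _ hdetR) (hGX _)
    · exact G.sum_mem fun l _ => G.mul_mem (hGC _ (hUinvR _ _)) (hGX _)
  have hcR : ∀ m, coeff m (S' c) ∈ R := by
    obtain ⟨q, hq⟩ := hcG
    intro m
    rw [← hq, coeff_map]
    exact (coeff m q).2
  have hspan : S' c ∈ Submodule.span F {q | ∃ p : MvPolynomial σ K,
      (∃ y ∈ I, (y : F) = aeval v p) ∧ q = map (algebraMap K F) p} := by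
    have h1 : S' c ∈ Q.map S'.toLinearMap := ⟨c, hcQ, rfl⟩
    rw [Submodule.map_span] at h1
    refine Submodule.span_mono ?_ h1
    rintro _ ⟨_, ⟨p, hp, rfl⟩, rfl⟩
    exact ⟨p, hp, hS'S _⟩
  obtain ⟨y, hyI, hy⟩ := pv_descent K R v I (S' c) hspan hcR
  rw [hvS'] at hy
  have hyK : (y : F) ∈ K := by
    rw [hy, c.as_sum, map_sum]
    refine K.sum_mem fun m _ => ?_
    simp only [e, aeval_monomial]
    refine K.mul_mem (hck m) (K.prod_mem fun o _ => K.pow_mem ?_ _)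
    rcases o with _ | ⟨i, j⟩
    · exact K.one_mem
    · simp only [e₀, Option.elim, Matrix.one_apply]
      split_ifs
      · exact K.one_mem
      · exact K.zero_mem
  rw [Ideal.eq_top_iff_one]
  have : (1 : R) = ⟨(y : F)⁻¹, hKR _ (K.inv_mem hyK)⟩ * y := by
    apply Subtype.ext
    rw [← hy] at hce
    simp [hce]
  rw [this]
  exact I.mul_mem_left _ hyI
end

section
/- Let F be a field, τ : F → F a ring homomorphism, k := F^τ its fixed field, and K a subfield of F with τ(K) ⊆ K and k ⊆ K. Let A ∈ GL_d(K) and suppose U, V ∈ GL_d(F) both satisfy τ(U) = A·U and τ(V) = A·V (τ applied entrywise). Then U⁻¹V ∈ GL_d(k) (i.e. every entry of U⁻¹V lies in the fixed field k), and consequently the K-subalgebra of F generated by the entries of U and (det U)⁻¹ coincides with the K-subalgebra of F generated by the entries of V and (det V)⁻¹. -/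
set_option synthInstance.maxHeartbeats 400000
set_option maxHeartbeats 1000000

theorem pv_fixed {F : Type*} [Field F] (τ : F →+* F) (d : ℕ) (A U V : Matrix (Fin d) (Fin d) F)
    (hAdet : A.det ≠ 0) (hUdet : U.det ≠ 0)
    (hU : U.map τ = A * U) (hV : V.map τ = A * V) (i j : Fin d) :
    τ ((U⁻¹ * V) i j) = (U⁻¹ * V) i j := by
  have hUu : IsUnit U.det := isUnit_iff_ne_zero.mpr hUdet
  have hAU : IsUnit (A * U).det := by
    rw [Matrix.det_mul]
    exact isUnit_iff_ne_zero.mpr (mul_ne_zero hAdet hUdet)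
  have hUC : U * (U⁻¹ * V) = V := Matrix.mul_nonsing_inv_cancel_left U V hUu
  have h1 : (A * U) * (U⁻¹ * V).map τ = (A * U) * (U⁻¹ * V) := by
    rw [Matrix.mul_assoc A U (U⁻¹ * V), hUC, ← hU, ← Matrix.map_mul, hUC, hV]
  have h2 : (U⁻¹ * V).map τ = U⁻¹ * V := by
    have := congrArg (fun M => (A * U)⁻¹ * M) h1
    simpa only [Matrix.nonsing_inv_mul_cancel_left _ _ hAU] using this
  exact congrFun (congrFun h2 i) j

theorem pv_le {F : Type*} [Field F] (K : Subfield F) (d : ℕ) (U V C : Matrix (Fin d) (Fin d) F)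
    (hC : ∀ i j, C i j ∈ K) (hV : V = U * C) :
    Algebra.adjoin K ((Set.range fun p : Fin d × Fin d => V p.1 p.2) ∪ {(V.det)⁻¹}) ≤
      Algebra.adjoin K ((Set.range fun p : Fin d × Fin d => U p.1 p.2) ∪ {(U.det)⁻¹}) := by
  have hK : ∀ a ∈ K, a ∈ Algebra.adjoin K
      ((Set.range fun p : Fin d × Fin d => U p.1 p.2) ∪ {(U.det)⁻¹}) := fun a ha =>
    Subalgebra.algebraMap_mem _ (⟨a, ha⟩ : K)
  refine Algebra.adjoin_le ?_
  rintro x (⟨p, rfl⟩ | hx)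
  · simp only [hV, Matrix.mul_apply]
    exact Subalgebra.sum_mem _ fun l _ => Subalgebra.mul_mem _
      (Algebra.subset_adjoin (Or.inl ⟨(p.1, l), rfl⟩)) (hK _ (hC _ _))
  · rw [Set.mem_singleton_iff.mp hx, hV, Matrix.det_mul, mul_inv]
    refine Subalgebra.mul_mem _ (Algebra.subset_adjoin (Or.inr rfl)) (hK _ (inv_mem ?_))
    rw [Matrix.det_apply']
    exact sum_mem fun σ _ => mul_mem (intCast_mem K _) (prod_mem fun l _ => hC _ _)

/-- If `U, V ∈ GL_d(F)` are two fundamental solutions of the same system `τ(Y) = A·Y`, then all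
entries of `U⁻¹V` lie in the fixed field `k`, and the `K`-subalgebras
`K[U, (det U)⁻¹]` and `K[V, (det V)⁻¹]` of `F` coincide. -/
theorem picardVessiot_ring_unique_inside_F
    (F : Type*) [Field F] (τ : F →+* F)
    (k : Subfield F) (hk : ∀ a : F, a ∈ k ↔ τ a = a)
    (K : Subfield F) (hkK : (k : Set F) ⊆ (K : Set F)) (hτK : ∀ a ∈ K, τ a ∈ K)
    (d : ℕ) (A U V : Matrix (Fin d) (Fin d) F)
    (hA : ∀ i j, A i j ∈ K) (hAdet : A.det ≠ 0)
    (hUdet : U.det ≠ 0) (hVdet : V.det ≠ 0)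
    (hU : U.map τ = A * U) (hV : V.map τ = A * V) :
    (∀ i j, (U⁻¹ * V) i j ∈ k) ∧
    Algebra.adjoin K ((Set.range fun p : Fin d × Fin d => U p.1 p.2) ∪ {(U.det)⁻¹}) =
      Algebra.adjoin K ((Set.range fun p : Fin d × Fin d => V p.1 p.2) ∪ {(V.det)⁻¹}) := by
  have key1 := pv_fixed τ d A U V hAdet hUdet hU hV
  have key2 := pv_fixed τ d A V U hAdet hVdet hV hU
  refine ⟨fun i j => (hk _).mpr (key1 i j), le_antisymm ?_ ?_⟩
  · exact pv_le K d V U (V⁻¹ * U) (fun i j => hkK ((hk _).mpr (key2 i j)))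
      (Matrix.mul_nonsing_inv_cancel_left V U (isUnit_iff_ne_zero.mpr hVdet)).symm
  · exact pv_le K d U V (U⁻¹ * V) (fun i j => hkK ((hk _).mpr (key1 i j)))
      (Matrix.mul_nonsing_inv_cancel_left U V (isUnit_iff_ne_zero.mpr hUdet)).symm
end

section
/- Let F be a field of characteristic zero, τ : F → F a ring homomorphism, k := F^τ its fixed field, and K a subfield of F with τ(K) ⊆ K and k ⊆ K. Let f₁, …, f_d ∈ K be nonzero and let z₁, …, z_d ∈ F satisfy τ(z_i) = z_i + f_i for i = 1, …, d. Then the following are equivalent: (1) there exist λ₁, …, λ_d ∈ k, not all zero, and g ∈ K such that λ₁f₁ + ⋯ + λ_d f_d = τ(g) − g; (2) there exist λ₁, …, λ_d ∈ k, not all zero, such that λ₁z₁ + ⋯ + λ_d z_d ∈ K; (3) there exist λ₁, …, λ_d ∈ K, not all zero, such that λ₁z₁ + ⋯ + λ_d z_d ∈ K; (4) z₁, …, z_d are algebraically dependent over K. -/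
set_option synthInstance.maxHeartbeats 400000
set_option maxHeartbeats 1000000

open MvPolynomial in
/-- Second order shift error. -/
noncomputable def shiftErr {R : Type*} [CommRing R] {d : ℕ} (f : Fin d → R) :
    MvPolynomial (Fin d) R →ₗ[R] MvPolynomial (Fin d) R :=
  (aeval (fun i => X i + C (f i)) : MvPolynomial (Fin d) R →ₐ[R] MvPolynomial (Fin d) R).toLinearMap
    - LinearMap.id - ∑ i, f i • (pderiv i : Derivation R _ (MvPolynomial (Fin d) R)).toLinearMap

open MvPolynomial in
theorem shiftErr_apply {R : Type*} [CommRing R] {d : ℕ} (f : Fin d → R)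
    (p : MvPolynomial (Fin d) R) :
    shiftErr f p = aeval (fun i => X i + C (f i)) p - p - ∑ i, f i • pderiv i p := by
  simp [shiftErr, LinearMap.sum_apply]

open MvPolynomial in
theorem shiftErr_mul_X {R : Type*} [CommRing R] {d : ℕ} (f : Fin d → R)
    (p : MvPolynomial (Fin d) R) (j : Fin d) :
    shiftErr f (p * X j) = shiftErr f p * X j +
      C (f j) * (aeval (fun i => X i + C (f i)) p - p) := by
  have h : ∑ i, f i • pderiv i (p * X j) = C (f j) * p + (∑ i, f i • pderiv i p) * X j := by
    simp only [pderiv_mul, pderiv_X, smul_add, Finset.sum_add_distrib, Finset.sum_mul]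
    rw [add_comm]
    congr 1
    · rw [Finset.sum_eq_single j]
      · simp [smul_eq_C_mul]
      · intro b _ hb
        simp [Pi.single_apply, hb, hb.symm]
      · simp
    · simp
  rw [shiftErr_apply, shiftErr_apply, h, map_mul, aeval_X]
  ring

open MvPolynomial in
theorem shift_monomial {R : Type*} [CommRing R] {d : ℕ} (f : Fin d → R)
    (s : Fin d →₀ ℕ) (a : R) :
    ∃ n, (monomial s a).IsHomogeneous n ∧
      (∀ m : Fin d →₀ ℕ, n ≤ m.degree →
        coeff m (aeval (fun i => X i + C (f i)) (monomial s a) - monomial s a) = 0) ∧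
      (∀ m : Fin d →₀ ℕ, n ≤ m.degree + 1 → coeff m (shiftErr f (monomial s a)) = 0) := by
  refine induction_on_monomial (motive := fun p => ∃ n, p.IsHomogeneous n ∧
      (∀ m : Fin d →₀ ℕ, n ≤ m.degree →
        coeff m (aeval (fun i => X i + C (f i)) p - p) = 0) ∧
      (∀ m : Fin d →₀ ℕ, n ≤ m.degree + 1 → coeff m (shiftErr f p) = 0)) ?_ ?_ s a
  · intro a
    refine ⟨0, isHomogeneous_C _ _, ?_, ?_⟩
    · intro m _
      simp [aeval_C, algebraMap_eq]
    · intro m _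
      simp [shiftErr_apply, aeval_C, algebraMap_eq]
  · rintro p j ⟨n, hp, hA, hB⟩
    have hdeg : ∀ m : Fin d →₀ ℕ, j ∈ m.support →
        (m - Finsupp.single j 1).degree + 1 = m.degree := by
      intro m hm
      have h1 : Finsupp.single j 1 ≤ m := by
        rw [Finsupp.single_le_iff]
        exact Nat.one_le_iff_ne_zero.2 (Finsupp.mem_support_iff.1 hm)
      conv_rhs => rw [← tsub_add_cancel_of_le h1]
      simp
    refine ⟨n + 1, hp.mul (isHomogeneous_X _ _), ?_, ?_⟩
    · intro m hm
      have : aeval (fun i => X i + C (f i)) (p * X j) - p * X j =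
          (aeval (fun i => X i + C (f i)) p - p) * X j +
            C (f j) * (aeval (fun i => X i + C (f i)) p - p) + C (f j) * p := by
        rw [map_mul, aeval_X]; ring
      rw [this, coeff_add, coeff_add, coeff_C_mul, coeff_C_mul, hA m (by omega),
        hp.coeff_eq_zero (by omega), coeff_mul_X']
      split_ifs with h
      · rw [hA _ (by have := hdeg m h; omega)]; simp
      · simp
    · intro m hm
      rw [shiftErr_mul_X, coeff_add, coeff_C_mul, hA m (by omega), coeff_mul_X']
      split_ifs with h
      · rw [hB _ (by have := hdeg m h; omega)]; simp
      · simp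

open MvPolynomial in
theorem coeff_shiftErr {R : Type*} [CommRing R] {d : ℕ} (f : Fin d → R)
    (p : MvPolynomial (Fin d) R) (m : Fin d →₀ ℕ) (hm : p.totalDegree ≤ m.degree + 1) :
    coeff m (shiftErr f p) = 0 := by
  conv_lhs => rw [← support_sum_monomial_coeff p]
  rw [map_sum, coeff_sum]
  refine Finset.sum_eq_zero fun s hs => ?_
  obtain ⟨n, h1, -, h3⟩ := shift_monomial f s (coeff s p)
  have h4 : n = s.degree := by
    refine h1.inj_right (isHomogeneous_monomial _ rfl) ?_
    rw [Ne, monomial_eq_zero]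
    exact mem_support_iff.1 hs
  apply h3
  have : s.degree ≤ p.totalDegree := le_totalDegree hs
  omega

open MvPolynomial in
theorem coeff_shift {R : Type*} [CommRing R] {d : ℕ} (f : Fin d → R)
    (p : MvPolynomial (Fin d) R) (m : Fin d →₀ ℕ) (hm : p.totalDegree ≤ m.degree + 1) :
    coeff m (aeval (fun i => X i + C (f i)) p : MvPolynomial (Fin d) R) =
      coeff m p + ∑ i, f i * (coeff (m + Finsupp.single i 1) p * (m i + 1)) := by
  have h := coeff_shiftErr f p m hm
  rw [shiftErr_apply, coeff_sub, coeff_sub, coeff_sum] at h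
  simp only [coeff_smul, coeff_pderiv, smul_eq_mul] at h
  linear_combination h

open MvPolynomial in
theorem dep_core {R A : Type*} [Field R] [CharZero R] [CommRing A] [Algebra R A] (σ : R →+* R)
    (τ : A →+* A) (hτ : ∀ a, τ (algebraMap R A a) = algebraMap R A (σ a))
    {d : ℕ} (f : Fin d → R) (z : Fin d → A) (hz : ∀ i, τ (z i) = z i + algebraMap R A (f i))
    (hdep : ∃ p : MvPolynomial (Fin d) R, aeval z p = 0 ∧ p ≠ 0)
    (hinj : Function.Injective (algebraMap R A)) :
    ∃ lam : Fin d → R, (∀ i, σ (lam i) = lam i) ∧ (∃ i, lam i ≠ 0) ∧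
      ∃ g, ∑ i, lam i * f i = σ g - g := by
  classical
  let mo : MonomialOrder (Fin d) := MonomialOrder.degLex
  let S : Set (MvPolynomial (Fin d) R) := {p | aeval z p = 0 ∧ p ≠ 0}
  have hwf : WellFounded (fun p q : MvPolynomial (Fin d) R =>
      mo.toSyn (mo.degree p) < mo.toSyn (mo.degree q)) :=
    InvImage.wf (fun p => mo.toSyn (mo.degree p)) mo.wf.wf
  obtain ⟨p0, ⟨hp0z, hp0⟩, hmin0⟩ := hwf.has_min S hdep
  -- normalise
  set D := mo.degree p0 with hD
  obtain ⟨p, hpz, hpD, hpc⟩ : ∃ p : MvPolynomial (Fin d) R, aeval z p = 0 ∧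
      mo.degree p = D ∧ coeff D p = 1 := by
    have hc : coeff D p0 ≠ 0 := mo.coeff_degree_ne_zero_iff.2 hp0
    refine ⟨(coeff D p0)⁻¹ • p0, by simp [hp0z], ?_, ?_⟩
    · exact mo.degree_smul_of_isRegular (IsUnit.isRegular (inv_ne_zero hc).isUnit)
    · simp [hc]
  have hmin : ∀ q : MvPolynomial (Fin d) R, aeval z q = 0 →
      (∀ m, mo.toSyn D ≤ mo.toSyn m → coeff m q = 0) → q = 0 := by
    intro q hq h
    by_contra hne
    refine hmin0 q ⟨hq, hne⟩ ?_
    by_contra hlt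
    exact mo.coeff_degree_ne_zero_iff.2 hne (h _ (not_lt.1 hlt))
  have htd : p.totalDegree = D.degree := by
    rw [← hpD]; exact degree_degLexDegree.symm
  have htd' : (map σ p).totalDegree ≤ D.degree := by
    rw [← htd]
    exact Finset.sup_mono (support_map_subset _ _)
  have hbig : ∀ m : Fin d →₀ ℕ, D.degree < m.degree → coeff m p = 0 := by
    intro m hm
    apply coeff_eq_zero_of_totalDegree_lt
    rw [htd]; exact hm
  set q : MvPolynomial (Fin d) R := aeval (fun i => X i + C (f i)) (map σ p) with hq
  have hqz : aeval z q = 0 := by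
    have : ∀ r : MvPolynomial (Fin d) R,
        aeval z (aeval (fun i => X i + C (f i)) (map σ r) : MvPolynomial (Fin d) R)
          = τ (aeval z r) := by
      intro r
      induction r using MvPolynomial.induction_on with
      | C a => simp [hτ]
      | add p q hp hq => simp only [map_add, hp, hq]
      | mul_X p n hp => simp only [map_mul, hp, map_X, aeval_X, map_add, aeval_C, hz, algHom_C]
    rw [hq, this, hpz, map_zero]
  have hcoef : ∀ m : Fin d →₀ ℕ, D.degree ≤ m.degree + 1 → coeff m q =
      σ (coeff m p) + ∑ i, f i * (σ (coeff (m + Finsupp.single i 1) p) * (m i + 1)) := by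
    intro m hm
    rw [hq, coeff_shift f _ m (htd'.trans hm)]
    simp only [coeff_map]
  have hcoef' : ∀ m : Fin d →₀ ℕ, D.degree ≤ m.degree → coeff m q = σ (coeff m p) := by
    intro m hm
    rw [hcoef m (by omega), Finset.sum_eq_zero, add_zero]
    intro i _
    rw [hbig]
    · simp
    · simp; omega
  have hqp : q - p = 0 := by
    apply hmin
    · rw [map_sub, hqz, hpz, sub_zero]
    · intro m hm
      have h1 : D.degree ≤ m.degree := Finsupp.DegLex.monotone_degree hm
      rw [coeff_sub, hcoef' m h1]
      rcases hm.eq_or_lt with h | h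
      · rw [← mo.toSyn.injective h, hpc]; simp
      · rw [mo.coeff_eq_zero_of_lt (hpD ▸ h)]; simp
  have hqp' : q = p := sub_eq_zero.1 hqp
  have hfix : ∀ m : Fin d →₀ ℕ, D.degree ≤ m.degree → σ (coeff m p) = coeff m p := by
    intro m hm
    rw [← hcoef' m hm, hqp']
  have hD0 : D ≠ 0 := by
    intro h0
    have h1 : p = C (coeff 0 p) := totalDegree_eq_zero_iff_eq_C.1 (by rw [htd, h0]; simp)
    rw [h0] at hpc
    rw [h1, hpc] at hpz
    simp only [C_1, map_one] at hpz
    exact one_ne_zero (hinj (by rw [map_one, map_zero, hpz]))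
  obtain ⟨j, hj⟩ := Finsupp.ne_iff.1 hD0
  have hj' : Finsupp.single j 1 ≤ D := by
    rw [Finsupp.single_le_iff]; exact Nat.one_le_iff_ne_zero.2 hj
  obtain ⟨m, hm⟩ : ∃ m, D = m + Finsupp.single j 1 := ⟨_, (tsub_add_cancel_of_le hj').symm⟩
  have hmd : D.degree = m.degree + 1 := by rw [hm]; simp
  have hfx : ∀ i, σ (coeff (m + Finsupp.single i 1) p) = coeff (m + Finsupp.single i 1) p :=
    fun i => hfix _ (by simp [hmd])
  refine ⟨fun i => coeff (m + Finsupp.single i 1) p * (m i + 1), ?_, ⟨j, ?_⟩, - coeff m p, ?_⟩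
  · intro i
    simp [hfx]
  · simp only [← hm, hpc, one_mul]
    exact_mod_cast Nat.succ_ne_zero (m j)
  · have h := hcoef m hmd.le
    rw [hqp'] at h
    simp only [hfx] at h
    simp only [map_neg]
    have h2 : ∑ i, coeff (m + Finsupp.single i 1) p * (m i + 1) * f i =
      ∑ i, f i * (coeff (m + Finsupp.single i 1) p * (m i + 1)) :=
      Finset.sum_congr rfl fun i _ => mul_comm _ _
    rw [h2]
    linear_combination -h

/-- Characterization of the algebraic dependence over `K` of solutions `z_i ∈ F` of the
inhomogeneous difference equations `τ(z_i) = z_i + f_i` with `f_i ∈ K*`. -/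
theorem algebraic_dependence_inhomogeneous
    (F : Type*) [Field F] [CharZero F] (τ : F →+* F)
    (k : Subfield F) (hk : ∀ a : F, a ∈ k ↔ τ a = a)
    (K : Subfield F) (hkK : (k : Set F) ⊆ (K : Set F)) (hτK : ∀ a ∈ K, τ a ∈ K)
    (d : ℕ) (f z : Fin d → F)
    (hfK : ∀ i, f i ∈ K) (hf0 : ∀ i, f i ≠ 0)
    (hz : ∀ i, τ (z i) = z i + f i) :
    List.TFAE
      [ ∃ lam : Fin d → F, (∀ i, lam i ∈ k) ∧ (∃ i, lam i ≠ 0) ∧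
          ∃ g ∈ K, ∑ i, lam i * f i = τ g - g,
        ∃ lam : Fin d → F, (∀ i, lam i ∈ k) ∧ (∃ i, lam i ≠ 0) ∧
          (∑ i, lam i * z i) ∈ K,
        ∃ lam : Fin d → F, (∀ i, lam i ∈ K) ∧ (∃ i, lam i ≠ 0) ∧
          (∑ i, lam i * z i) ∈ K,
        ¬ AlgebraicIndependent K z ] := by
  have h12 : ∀ lam : Fin d → F, (∀ i, lam i ∈ k) →
      τ (∑ i, lam i * z i) = ∑ i, lam i * z i + ∑ i, lam i * f i := by
    intro lam hl
    rw [map_sum, ← Finset.sum_add_distrib]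
    refine Finset.sum_congr rfl fun i _ => ?_
    rw [map_mul, (hk _).1 (hl i), hz, mul_add]
  tfae_have 1 → 2 := by
    rintro ⟨lam, hl, hne, g, hg, h⟩
    refine ⟨lam, hl, hne, ?_⟩
    have : ∑ i, lam i * z i - g ∈ k := by
      rw [hk, map_sub, h12 lam hl, h]; ring
    have := K.add_mem (hkK this) hg
    simpa using this
  tfae_have 2 → 3 := by
    rintro ⟨lam, hl, hne, h⟩
    exact ⟨lam, fun i => hkK (hl i), hne, h⟩
  tfae_have 3 → 4 := by
    rintro ⟨lam, hl, ⟨j, hj⟩, h⟩ hind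
    rw [algebraicIndependent_iff] at hind
    have h0 := hind (∑ i, MvPolynomial.C (⟨lam i, hl i⟩ : K) * MvPolynomial.X i
      - MvPolynomial.C ⟨_, h⟩) (by
        simp only [map_sub, map_sum, map_mul, MvPolynomial.aeval_X, MvPolynomial.aeval_C]
        exact sub_self _)
    have h1 := congrArg (MvPolynomial.coeff (Finsupp.single j 1)) h0
    rw [MvPolynomial.coeff_sub, MvPolynomial.coeff_sum, Finset.sum_eq_single j] at h1
    · have hne : (0 : Fin d →₀ ℕ) ≠ Finsupp.single j 1 := by
        intro h
        simpa using congrArg (fun m => m j) h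
      rw [MvPolynomial.coeff_C, if_neg hne, MvPolynomial.coeff_C_mul, MvPolynomial.coeff_X,
        if_pos rfl, mul_one, sub_zero, MvPolynomial.coeff_zero] at h1
      exact hj (congrArg Subtype.val h1)
    · intro b _ hb
      rw [MvPolynomial.coeff_C_mul, MvPolynomial.coeff_X, if_neg, mul_zero]
      intro h
      exact hb (Finsupp.single_left_injective one_ne_zero h)
    · simp
  tfae_have 4 → 1 := by
    intro h
    rw [algebraicIndependent_iff] at h
    push Not at h
    obtain ⟨lam, h1, ⟨j, hj⟩, g, hg⟩ := dep_core (R := K) (A := F)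
      (τ.restrict K K hτK) τ (fun a => rfl) (fun i => ⟨f i, hfK i⟩) z hz h
      (algebraMap K F).injective
    refine ⟨fun i => lam i, fun i => ?_, ⟨j, fun h => hj (Subtype.ext h)⟩, g, g.2, ?_⟩
    · rw [hk]
      exact congrArg Subtype.val (h1 i)
    · have := congrArg (algebraMap K F) hg
      rw [map_sum, map_sub] at this
      exact this
  tfae_finish
end

section
/- Let F be a field of characteristic zero, τ : F → F a ring homomorphism, k := F^τ its fixed field, and K a subfield of F with τ(K) ⊆ K and k ⊆ K. Let a₁, …, a_d ∈ K be nonzero and let z₁, …, z_d ∈ F be nonzero elements satisfying τ(z_i) = a_i z_i for i = 1, …, d. Then the following are equivalent: (1) there exist λ₁, …, λ_d ∈ ℤ, not all zero, and g ∈ K, g ≠ 0, such that a₁^{λ₁} ⋯ a_d^{λ_d} = τ(g)/g; (2) there exist λ₁, …, λ_d ∈ ℤ, not all zero, such that z₁^{λ₁} ⋯ z_d^{λ_d} ∈ K; (3) z₁, …, z_d are algebraically dependent over K. -/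
set_option synthInstance.maxHeartbeats 400000
set_option maxHeartbeats 1000000

theorem aux_lin {F ι : Type*} [Field F] (τ : F →+* F) (K : Subfield F)
    (hfix : ∀ x : F, τ x = x → x ∈ K) (hτK : ∀ a ∈ K, τ a ∈ K)
    (b v : ι → F) (hbK : ∀ i, b i ∈ K) (hb0 : ∀ i, b i ≠ 0) (hv0 : ∀ i, v i ≠ 0)
    (hv : ∀ i, τ (v i) = b i * v i)
    (hne : ∀ i j, i ≠ j → v i / v j ∉ K) (s : Finset ι) :
    ∀ c : ι → F, (∀ i, c i ∈ K) → ∑ i ∈ s, c i * v i = 0 → ∀ i ∈ s, c i = 0 := by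
  classical
  induction s using Finset.induction_on with
  | empty => simp
  | insert j s hj ih =>
    intro c hc hsum
    rw [Finset.sum_insert hj] at hsum
    by_cases hcj : c j = 0
    · have h0 : ∑ i ∈ s, c i * v i = 0 := by simpa [hcj] using hsum
      intro i hi
      rcases Finset.mem_insert.1 hi with rfl | hi
      · exact hcj
      · exact ih c hc h0 i hi
    · have hτ : τ (c j) * (b j * v j) + ∑ i ∈ s, τ (c i) * (b i * v i) = 0 := by
        have := congrArg τ hsum
        simpa [map_sum, hv] using this
      have hd : ∑ i ∈ s, (τ (c i) * b i * c j - b j * τ (c j) * c i) * v i = 0 := by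
        have e : ∑ i ∈ s, (τ (c i) * b i * c j - b j * τ (c j) * c i) * v i
            = c j * ∑ i ∈ s, τ (c i) * (b i * v i) - b j * τ (c j) * ∑ i ∈ s, c i * v i := by
          rw [Finset.mul_sum, Finset.mul_sum, ← Finset.sum_sub_distrib]
          exact Finset.sum_congr rfl fun i _ => by ring
        rw [e]
        linear_combination c j * hτ - b j * τ (c j) * hsum
      have hz := ih (fun i => τ (c i) * b i * c j - b j * τ (c j) * c i)
        (fun i => K.sub_mem (K.mul_mem (K.mul_mem (hτK _ (hc i)) (hbK i)) (hc j))
          (K.mul_mem (K.mul_mem (hbK j) (hτK _ (hc j))) (hc i))) hd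
      have hs0 : ∀ i ∈ s, c i = 0 := by
        intro i hi
        by_contra hci
        have hij : i ≠ j := fun h => hj (h ▸ hi)
        have h1 := hz i hi
        have hτj : τ (c j) ≠ 0 := (map_ne_zero τ).2 hcj
        have hbj := hb0 j
        have hvj := hv0 j
        have hf : c i * v i / (c j * v j) ∈ K := by
          apply hfix
          rw [map_div₀, map_mul, map_mul, hv, hv, div_eq_div_iff (by simp [*]) (by simp [*])]
          linear_combination v i * v j * h1
        apply hne i j hij
        have e : v i / v j = (c j / c i) * (c i * v i / (c j * v j)) := by
          field_simp
        rw [e]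
        exact K.mul_mem (K.div_mem (hc j) (hc i)) hf
      rw [Finset.sum_eq_zero (fun i hi => by rw [hs0 i hi, zero_mul]), add_zero] at hsum
      exact absurd hsum (mul_ne_zero hcj (hv0 j))

/-- Characterization of the algebraic dependence over `K` of nonzero solutions `z_i ∈ F` of
the homogeneous difference equations `τ(z_i) = a_i z_i` with `a_i ∈ K*`. -/
theorem algebraic_dependence_homogeneous
    (F : Type*) [Field F] [CharZero F] (τ : F →+* F)
    (k : Subfield F) (hk : ∀ a : F, a ∈ k ↔ τ a = a)
    (K : Subfield F) (hkK : (k : Set F) ⊆ (K : Set F)) (hτK : ∀ a ∈ K, τ a ∈ K)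
    (d : ℕ) (a z : Fin d → F)
    (haK : ∀ i, a i ∈ K) (ha0 : ∀ i, a i ≠ 0) (hz0 : ∀ i, z i ≠ 0)
    (hz : ∀ i, τ (z i) = a i * z i) :
    List.TFAE
      [ ∃ lam : Fin d → ℤ, (∃ i, lam i ≠ 0) ∧
          ∃ g ∈ K, g ≠ 0 ∧ (∏ i, a i ^ lam i) = τ g / g,
        ∃ lam : Fin d → ℤ, (∃ i, lam i ≠ 0) ∧
          (∏ i, z i ^ lam i) ∈ K,
        ¬ AlgebraicIndependent K z ] := by
  have hfix : ∀ x : F, τ x = x → x ∈ K := fun x hx => hkK ((hk x).2 hx)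
  have hτw : ∀ lam : Fin d → ℤ,
      τ (∏ i, z i ^ lam i) = (∏ i, a i ^ lam i) * ∏ i, z i ^ lam i := by
    intro lam
    rw [map_prod, ← Finset.prod_mul_distrib]
    exact Finset.prod_congr rfl fun i _ => by rw [map_zpow₀, hz, mul_zpow]
  have hw0 : ∀ lam : Fin d → ℤ, (∏ i, z i ^ lam i) ≠ 0 := fun lam =>
    Finset.prod_ne_zero_iff.2 fun i _ => zpow_ne_zero _ (hz0 i)
  tfae_have 1 → 2 := by
    rintro ⟨lam, hl, g, hg, hg0, h⟩
    refine ⟨lam, hl, ?_⟩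
    have hτg : τ g ≠ 0 := (map_ne_zero τ).2 hg0
    have hf : (∏ i, z i ^ lam i) / g ∈ K := by
      apply hfix
      rw [map_div₀, hτw, h]
      field_simp
    have := K.mul_mem hf hg
    rwa [div_mul_cancel₀ _ hg0] at this
  tfae_have 2 → 1 := by
    rintro ⟨lam, hl, h⟩
    refine ⟨lam, hl, _, h, hw0 lam, ?_⟩
    rw [hτw, mul_div_cancel_right₀ _ (hw0 lam)]
  tfae_have 2 → 3 := by
    rintro ⟨lam, ⟨i₀, hi₀⟩, h⟩ hind
    rw [algebraicIndependent_iff] at hind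
    let p : Fin d →₀ ℕ := Finsupp.equivFunOnFinite.symm fun i => (lam i).toNat
    let q : Fin d →₀ ℕ := Finsupp.equivFunOnFinite.symm fun i => (-lam i).toNat
    have hpq : p ≠ q := by
      intro e
      have := DFunLike.congr_fun e i₀
      simp only [p, q, Finsupp.equivFunOnFinite_symm_apply_apply] at this
      omega
    have key := hind (MvPolynomial.monomial p (1 : K)
      - MvPolynomial.monomial q (⟨_, h⟩ : K)) (by
        rw [map_sub, MvPolynomial.aeval_monomial, MvPolynomial.aeval_monomial, sub_eq_zero,
          Finsupp.prod_fintype _ _ (by simp), Finsupp.prod_fintype _ _ (by simp), map_one, one_mul]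
        change _ = (∏ i, z i ^ lam i) * _
        rw [← Finset.prod_mul_distrib]
        refine Finset.prod_congr rfl fun i _ => ?_
        simp only [p, q, Finsupp.equivFunOnFinite_symm_apply_apply]
        rw [← zpow_natCast, ← zpow_natCast, ← zpow_add₀ (hz0 i)]
        congr 1
        omega)
    have := congrArg (MvPolynomial.coeff p) key
    simp [MvPolynomial.coeff_monomial, hpq.symm] at this
  tfae_have 3 → 2 := by
    intro h3
    by_contra h2
    apply h3
    rw [algebraicIndependent_iff]
    intro P hP
    rw [MvPolynomial.aeval_def, MvPolynomial.eval₂_eq'] at hP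
    have := aux_lin τ K hfix hτK (fun m : Fin d →₀ ℕ => ∏ i, a i ^ m i)
      (fun m => ∏ i, z i ^ m i)
      (fun m => K.prod_mem fun i _ => K.pow_mem (haK i) _)
      (fun m => Finset.prod_ne_zero_iff.2 fun i _ => pow_ne_zero _ (ha0 i))
      (fun m => Finset.prod_ne_zero_iff.2 fun i _ => pow_ne_zero _ (hz0 i))
      (fun m => by
        rw [map_prod, ← Finset.prod_mul_distrib]
        exact Finset.prod_congr rfl fun i _ => by rw [map_pow, hz, mul_pow])
      (fun m n hmn hK => by
        apply h2
        refine ⟨fun i => (m i : ℤ) - n i, ?_, ?_⟩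
        · by_contra! hall
          apply hmn
          ext i
          have := hall i
          omega
        · rw [← Finset.prod_div_distrib] at hK
          convert hK using 2 with i
          rw [zpow_sub₀ (hz0 i), zpow_natCast, zpow_natCast])
      P.support (fun m => ((P.coeff m : K) : F)) (fun m => (P.coeff m).2) hP
    ext m
    by_cases hm : m ∈ P.support
    · simpa using this m hm
    · simpa using hm
  tfae_finish
end

section
/- Let F be a field of characteristic zero, τ : F → F a ring homomorphism, k := F^τ its fixed field, K a subfield of F with τ(K) ⊆ K and k ⊆ K, and ∂ : F → F a derivation with ∂ ∘ τ = τ ∘ ∂ and ∂(K) ⊆ K. Let f ∈ K be nonzero and let z ∈ F satisfy τ(z) = z + f. Then the following are equivalent: (1) there exist n ≥ 0, λ₀, …, λₙ ∈ k, not all zero, and g ∈ K such that λ₀f + λ₁∂(f) + ⋯ + λₙ∂ⁿ(f) = τ(g) − g; (2) there exist n ≥ 0 and λ₀, …, λₙ ∈ k, not all zero, such that λ₀z + λ₁∂(z) + ⋯ + λₙ∂ⁿ(z) ∈ K; (3) z is D-finite over K; (4) z is differentially algebraic over K. -/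
set_option synthInstance.maxHeartbeats 400000
set_option maxHeartbeats 1000000

open MvPolynomial in
/-- coefficients vanish in degrees at least `d` -/
def DegLt {R ι : Type*} [Field R] (d : ℕ) (P : MvPolynomial ι R) : Prop :=
  ∀ s : ι →₀ ℕ, d ≤ s.degree → coeff s P = 0

open MvPolynomial in
/-- twisted shift -/
noncomputable def Phi {R ι : Type*} [Field R] (σ : R →+* R) (f : ι → R) :
    MvPolynomial ι R →+* MvPolynomial ι R :=
  eval₂Hom (C.comp σ) (fun i => X i + C (f i))

open MvPolynomial in
theorem Phi_coeff_mono {R ι : Type*} [Field R] (σ : R →+* R) (f : ι → R) (t : ι →₀ ℕ) (a : R) :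
    ∀ d, DegLt (d+1) (monomial t a) → ∀ s : ι →₀ ℕ, d ≤ s.degree →
      coeff s (Phi σ f (monomial t a)) = σ (coeff s (monomial t a)) := by
  classical
  refine induction_on_monomial (motive := fun P => ∀ d, DegLt (d+1) P → ∀ s : ι →₀ ℕ, d ≤ s.degree →
      coeff s (Phi σ f P) = σ (coeff s P)) ?_ ?_ t a
  · intro a d _ s _
    simp only [Phi, eval₂Hom_C, RingHom.comp_apply, coeff_C]
    split_ifs <;> simp
  · intro p i ih d hB s hs
    have hp : DegLt d p := by
      intro s hs
      have := hB (s + Finsupp.single i 1) (by simpa using hs)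
      rwa [coeff_mul_X] at this
    rcases d with _ | e
    · have : p = 0 := by ext s; simpa using hp s (Nat.zero_le _)
      simp [this]
    · have e1 : coeff s (Phi σ f p) = 0 := by
        rw [ih e hp s (by omega), hp s hs, map_zero]
      have e2 : Phi σ f (X i) = X i + C (f i) := by simp [Phi]
      rw [map_mul, e2, mul_add, coeff_add, mul_comm _ (C (f i)), coeff_C_mul, e1, mul_zero, add_zero, coeff_mul_X',
        coeff_mul_X']
      split_ifs with h
      · apply ih e hp
        have h1 : s - Finsupp.single i 1 + Finsupp.single i 1 = s :=
          Finsupp.sub_add_single_one_cancel (by simpa using h)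
        have := congrArg Finsupp.degree h1
        simp at this
        omega
      · simp

open MvPolynomial in
theorem Phi_coeff {R ι : Type*} [Field R] (σ : R →+* R) (f : ι → R) (P : MvPolynomial ι R)
    (d : ℕ) (hP : DegLt (d+1) P) (s : ι →₀ ℕ) (hs : d ≤ s.degree) :
      coeff s (Phi σ f P) = σ (coeff s P) := by
  classical
  conv_lhs => rw [P.as_sum]
  conv_rhs => rw [P.as_sum]
  simp only [map_sum, coeff_sum]
  refine Finset.sum_congr rfl fun t _ => Phi_coeff_mono σ f t _ d ?_ s hs
  intro s hs
  rw [coeff_monomial]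
  split_ifs with h
  · subst h; exact hP _ hs
  · rfl

open MvPolynomial in
theorem Phi_pderiv {R ι : Type*} [Field R] (σ : R →+* R) (f : ι → R) (i : ι)
    (P : MvPolynomial ι R) : Phi σ f (pderiv i P) = pderiv i (Phi σ f P) := by
  classical
  induction P using MvPolynomial.induction_on with
  | C a => simp [Phi]
  | add p q hp hq => simp [hp, hq]
  | mul_X p j h =>
    have e2 : Phi σ f (X j) = X j + C (f j) := by simp [Phi]
    simp only [map_mul, pderiv_mul, map_add, h, e2, pderiv_C, pderiv_X, add_zero]
    congr 2
    rcases eq_or_ne j i with rfl | hj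
    · simp
    · simp [hj]

open MvPolynomial in
theorem stage_one {R ι : Type*} [Field R] (σ : R →+* R) (f : ι → R) (I : Ideal (MvPolynomial ι R))
    (hI : ∀ P ∈ I, Phi σ f P ∈ I) (d : ℕ) (hmin : ∀ P ∈ I, DegLt d P → P = 0) (N : ℕ) :
    ∀ P ∈ I, P ≠ 0 → DegLt (d+1) P → (P.support.filter (fun s => s.degree = d)).card ≤ N →
      ∃ Q ∈ I, Q ≠ 0 ∧ Phi σ f Q = Q := by
  classical
  induction N with
  | zero =>
    intro P hP h0 hB hc
    exfalso
    apply h0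
    apply hmin P hP
    intro s hs
    by_contra hne
    have : s ∈ P.support.filter (fun s => s.degree = d) := by
      simp only [Finset.mem_filter, mem_support_iff]
      refine ⟨hne, ?_⟩
      by_contra hh
      exact hne (hB s (by omega))
    simp only [Nat.le_zero, Finset.card_eq_zero] at hc
    rw [hc] at this
    simp at this
  | succ N ih =>
    intro P hP h0 hB hc
    by_cases hs : ∃ s, d ≤ s.degree ∧ coeff s P ≠ 0
    swap
    · push Not at hs
      exact absurd (hmin P hP hs) h0
    obtain ⟨s, hs, hne⟩ := hs
    set P' := C (coeff s P)⁻¹ * P with hP'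
    have c' : ∀ t, coeff t P' = (coeff s P)⁻¹ * coeff t P := fun t => by rw [hP', coeff_C_mul]
    have hPI : P' ∈ I := I.mul_mem_left _ hP
    have hB' : DegLt (d+1) P' := fun t ht => by rw [c', hB t ht, mul_zero]
    have h1 : coeff s P' = 1 := by rw [c', inv_mul_cancel₀ hne]
    by_cases hQ : Phi σ f P' = P'
    · exact ⟨P', hPI, fun h => by simp [h] at h1, hQ⟩
    have cQ : ∀ t : ι →₀ ℕ, d ≤ t.degree → coeff t (Phi σ f P' - P') = σ (coeff t P') - coeff t P' := by
      intro t ht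
      rw [coeff_sub, Phi_coeff σ f P' d hB' t ht]
    refine ih (Phi σ f P' - P') (I.sub_mem (hI _ hPI) hPI) (sub_ne_zero.2 hQ) ?_ ?_
    · intro t ht
      rw [cQ t (by omega), hB' t ht]; simp
    · have : (((Phi σ f P' - P').support.filter (fun s => s.degree = d))) ⊂
         (P.support.filter (fun s => s.degree = d)) := by
        rw [Finset.ssubset_iff_of_subset]
        · refine ⟨s, ?_, ?_⟩
          · simp only [Finset.mem_filter, mem_support_iff]
            refine ⟨hne, ?_⟩
            by_contra hh
            exact hne (hB s (by omega))
          · simp only [Finset.mem_filter, mem_support_iff, not_and]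
            intro h
            rw [cQ s hs, h1] at h
            simp at h
        · intro t
          simp only [Finset.mem_filter, mem_support_iff]
          rintro ⟨h, hd⟩
          refine ⟨fun h0 => h ?_, hd⟩
          rw [cQ t hd.ge, c', h0]; simp
      have := Finset.card_lt_card this
      omega

open MvPolynomial in
theorem stage_two {R ι : Type*} [Field R] [CharZero R] [Fintype ι] (σ : R →+* R) (f : ι → R) (d : ℕ) :
    ∀ P, DegLt (d+1) P → Phi σ f P = P → (∀ c, P ≠ C c) →
      ∃ c : ι → R, (∀ i, σ (c i) = c i) ∧ (∃ i, c i ≠ 0) ∧ ∃ g, ∑ i, c i * f i = σ g - g := by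
  classical
  have PC : ∀ c, Phi σ f (C c) = C (σ c) := fun c => by simp [Phi]
  induction d with
  | zero =>
    intro P hP _ hc
    exfalso
    apply hc (coeff 0 P)
    ext s
    rw [coeff_C]
    split_ifs with h
    · rw [h]
    · apply hP
      rw [zero_add, Nat.one_le_iff_ne_zero]
      intro h'
      exact h ((Finsupp.degree_eq_zero_iff s).1 h').symm
  | succ d ih =>
    intro P hP hinv hc
    by_cases hex : ∃ i, ∀ c, pderiv i P ≠ C c
    · obtain ⟨i, hi⟩ := hex
      refine ih (pderiv i P) ?_ (by rw [Phi_pderiv, hinv]) hi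
      intro s hs
      rw [coeff_pderiv, hP _ (by simpa using hs), zero_mul]
    push Not at hex
    choose c hc' using hex
    have hPe : P = C (coeff 0 P) + ∑ i, C (c i) * X i := by
      rw [← sub_eq_iff_eq_add]
      set Q := P - ∑ i, C (c i) * X i with hQ
      have hd : ∀ i, pderiv i Q = 0 := by
        intro i
        rw [hQ, map_sub, hc', map_sum, Finset.sum_eq_single i]
        · simp
        · intro j _ hj
          simp [hj]
        · simp
      ext s
      rw [coeff_C]
      split_ifs with h
      · subst h
        simp [hQ, coeff_sum]
      · have : ∃ i, s i ≠ 0 := by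
          by_contra hh
          push Not at hh
          exact h (by ext i; simp [hh])
        obtain ⟨i, hi⟩ := this
        have h2 := congrArg (coeff (s - Finsupp.single i 1)) (hd i)
        rw [coeff_pderiv, Finsupp.sub_add_single_one_cancel hi, coeff_zero, mul_eq_zero] at h2
        rcases h2 with h2 | h2
        · exact h2
        · exact absurd h2 (Nat.cast_add_one_ne_zero _)
    have hfix : ∀ i, σ (c i) = c i := by
      intro i
      have := Phi_pderiv σ f i P
      rw [hinv, hc', PC] at this
      exact C_injective _ _ this
    refine ⟨c, hfix, ?_, -coeff 0 P, ?_⟩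
    · by_contra hh
      push Not at hh
      exact hc (coeff 0 P) (by conv_lhs => rw [hPe]
                               simp [hh])
    · have h3 := congrArg (coeff 0) hinv
      conv_lhs at h3 => rw [hPe]
      simp [Phi, coeff_sum, mul_add, hfix, Finset.sum_add_distrib] at h3
      rw [map_neg]
      linear_combination h3

open MvPolynomial in
theorem stage_three {R F ι : Type*} [Field R] [CharZero R] [Field F] [Algebra R F] [Fintype ι]
    (σ : R →+* R) (τ : F →+* F) (hσ : ∀ a, τ (algebraMap R F a) = algebraMap R F (σ a))
    (f : ι → R) (z : ι → F) (hz : ∀ i, τ (z i) = z i + algebraMap R F (f i))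
    (hdep : ¬ AlgebraicIndependent R z) :
      ∃ c : ι → R, (∀ i, σ (c i) = c i) ∧ (∃ i, c i ≠ 0) ∧ ∃ g, ∑ i, c i * f i = σ g - g := by
  classical
  have hev : ∀ P, aeval z (Phi σ f P) = τ (aeval z P) := by
    intro P
    induction P using MvPolynomial.induction_on with
    | C a => simp [Phi, hσ]
    | add p q hp hq => simp [hp, hq]
    | mul_X p j h =>
      have e2 : Phi σ f (X j) = X j + C (f j) := by simp [Phi]
      simp [h, e2, hz]
  set I : Ideal (MvPolynomial ι R) := RingHom.ker (aeval z : MvPolynomial ι R →ₐ[R] F) with hI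
  have memI : ∀ P, P ∈ I ↔ aeval z P = 0 := fun P => RingHom.mem_ker
  have hbd : ∀ P : MvPolynomial ι R, ∃ d, DegLt d P := by
    intro P
    refine ⟨P.support.sup Finsupp.degree + 1, fun s hs => ?_⟩
    by_contra hne
    have := Finset.le_sup (f := Finsupp.degree) (mem_support_iff.2 hne)
    omega
  have hex : ∃ d, ∃ P ∈ I, P ≠ 0 ∧ DegLt d P := by
    rw [algebraicIndependent_iff] at hdep
    push Not at hdep
    obtain ⟨P, hP, h0⟩ := hdep
    obtain ⟨d, hd⟩ := hbd P
    exact ⟨d, P, (memI P).2 hP, h0, hd⟩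
  obtain ⟨P, hPI, hP0, hPd⟩ := Nat.find_spec hex
  have hmin := fun m => Nat.find_min hex (m := m)
  generalize Nat.find hex = D at hPd hmin
  rcases D with _ | d
  · exact absurd (by ext s; simpa using hPd s (Nat.zero_le _)) hP0
  obtain ⟨Q, hQI, hQ0, hQ⟩ := stage_one σ f I
    (fun P hP => by rw [memI] at hP ⊢; rw [hev, hP, map_zero]) d
    (fun P hP hd => by
      by_contra h0
      exact hmin d (Nat.lt_succ_self d) ⟨P, hP, h0, hd⟩) _ P hPI hP0 hPd le_rfl
  obtain ⟨e, he⟩ := hbd Q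
  refine stage_two σ f e Q (fun s hs => he s (by omega)) hQ ?_
  rintro c rfl
  rw [memI] at hQI
  simp at hQI
  exact hQ0 (by rw [hQI, C_0])

/-- Characterization of differential algebraicity over `K` of a solution `z ∈ F` of the
inhomogeneous difference equation `τ(z) = z + f` with `f ∈ K*`, in the presence of a
derivation `del` commuting with `τ`. -/
theorem differential_algebraicity_inhomogeneous
    (F : Type*) [Field F] [CharZero F] (τ : F →+* F)
    (k : Subfield F) (hk : ∀ a : F, a ∈ k ↔ τ a = a)
    (K : Subfield F) (hkK : (k : Set F) ⊆ (K : Set F)) (hτK : ∀ a ∈ K, τ a ∈ K)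
    (del : F → F)
    (hdeladd : ∀ x y : F, del (x + y) = del x + del y)
    (hdelmul : ∀ x y : F, del (x * y) = x * del y + del x * y)
    (hdelτ : ∀ x : F, del (τ x) = τ (del x))
    (hdelK : ∀ x ∈ K, del x ∈ K)
    (f : F) (hfK : f ∈ K) (hf0 : f ≠ 0)
    (z : F) (hz : τ z = z + f) :
    List.TFAE
      [ ∃ n : ℕ, ∃ lam : Fin (n + 1) → F, (∀ i, lam i ∈ k) ∧ (∃ i, lam i ≠ 0) ∧
          ∃ g ∈ K, ∑ i : Fin (n + 1), lam i * del^[(i : ℕ)] f = τ g - g,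
        ∃ n : ℕ, ∃ lam : Fin (n + 1) → F, (∀ i, lam i ∈ k) ∧ (∃ i, lam i ≠ 0) ∧
          (∑ i : Fin (n + 1), lam i * del^[(i : ℕ)] z) ∈ K,
        ∃ n : ℕ, ∃ a : Fin (n + 1) → F, (∀ i, a i ∈ K) ∧ (∃ i, a i ≠ 0) ∧
          ∑ i : Fin (n + 1), a i * del^[(i : ℕ)] z = 0,
        ∃ n : ℕ, ¬ AlgebraicIndependent K (fun i : Fin (n + 1) => del^[(i : ℕ)] z) ] := by
  have hdel0 : del 0 = 0 := by have := hdeladd 0 0; simpa using this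
  have hdelsum : ∀ (s : Finset ℕ) (u : ℕ → F), del (∑ i ∈ s, u i) = ∑ i ∈ s, del (u i) := by
    intro s u
    exact map_sum (⟨⟨del, hdel0⟩, hdeladd⟩ : F →+ F) u s
  have hiterK : ∀ (i : ℕ) (x : F), x ∈ K → del^[i] x ∈ K := by
    intro i
    induction i with
    | zero => intro x hx; simpa using hx
    | succ i ih => intro x hx; rw [Function.iterate_succ_apply]; exact ih _ (hdelK x hx)
  have hiter : ∀ i : ℕ, τ (del^[i] z) = del^[i] z + del^[i] f := by
    intro i
    induction i with
    | zero => simpa using hz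
    | succ i ih =>
      simp only [Function.iterate_succ_apply']
      rw [← hdelτ, ih, hdeladd]
  have hτsum : ∀ (n : ℕ) (lam : Fin (n + 1) → F), (∀ i, lam i ∈ k) →
      τ (∑ i : Fin (n + 1), lam i * del^[(i : ℕ)] z) =
        ∑ i : Fin (n + 1), lam i * del^[(i : ℕ)] z + ∑ i : Fin (n + 1), lam i * del^[(i : ℕ)] f := by
    intro n lam hl
    rw [map_sum, ← Finset.sum_add_distrib]
    refine Finset.sum_congr rfl fun i _ => ?_
    rw [map_mul, (hk _).1 (hl i), hiter, mul_add]
  tfae_have 1 → 2 := by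
    rintro ⟨n, lam, hl, hne, g, hg, h⟩
    refine ⟨n, lam, hl, hne, ?_⟩
    have hw := hτsum n lam hl
    set w := ∑ i : Fin (n + 1), lam i * del^[(i : ℕ)] z
    have : w - g ∈ k := by
      rw [hk, map_sub, hw, h]; ring
    have := K.add_mem (hkK this) hg
    simpa using this
  tfae_have 2 → 3 := by
    rintro ⟨n, lam, hl, ⟨i0, hne⟩, hw⟩
    by_cases h0 : ∑ i : Fin (n + 1), lam i * del^[(i : ℕ)] z = 0
    · exact ⟨n, lam, fun i => hkK (hl i), ⟨i0, hne⟩, h0⟩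
    obtain ⟨l, hl1, hl2⟩ : ∃ l : ℕ → F, (∀ i : Fin (n+1), lam i = l i) ∧ ∀ j, n + 1 ≤ j → l j = 0 :=
      ⟨fun j => if h : j < n + 1 then lam ⟨j, h⟩ else 0, fun i => by simp only [i.2, dite_true],
        fun j hj => dif_neg (by omega)⟩
    have hlK : ∀ j, l j ∈ K := by
      intro j
      by_cases h : j < n + 1
      · have := hl1 ⟨j, h⟩
        simp only at this
        rw [← this]; exact hkK (hl _)
      · rw [hl2 j (by omega)]; exact K.zero_mem
    simp only [hl1] at hw h0 hne
    rw [Fin.sum_univ_eq_sum_range (fun j => l j * del^[j] z) (n+1)] at hw h0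
    have hwdef : ∃ w, w = ∑ j ∈ Finset.range (n+1), l j * del^[j] z := ⟨_, rfl⟩
    obtain ⟨w, hwd⟩ := hwdef
    rw [← hwd] at hw h0
    have hdw : del w = ∑ j ∈ Finset.range (n+1), l j * del^[j+1] z +
        ∑ j ∈ Finset.range (n+1), del (l j) * del^[j] z := by
      rw [hwd, hdelsum, ← Finset.sum_add_distrib]
      refine Finset.sum_congr rfl fun j _ => ?_
      rw [hdelmul, Function.iterate_succ_apply']
    let sh : ℕ → F := fun j => Nat.casesOn j 0 l
    have hsh : ∀ j, sh j ∈ K := by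
      intro j
      cases j with
      | zero => exact K.zero_mem
      | succ j => exact hlK j
    refine ⟨n+1, fun j => w * (del (l j) + sh j) - del w * l j, ?_, ?_, ?_⟩
    · intro j
      exact K.sub_mem (K.mul_mem hw (K.add_mem (hdelK _ (hlK _)) (hsh _)))
        (K.mul_mem (hdelK _ hw) (hlK _))
    · by_contra hh
      push Not at hh
      have key : ∀ m j, j + m = n + 1 → l j = 0 := by
        intro m
        induction m with
        | zero => intro j hj; exact hl2 j (by omega)
        | succ m ih =>
          intro j hj
          have h1 := ih (j+1) (by omega)
          have h2 := hh ⟨j+1, by omega⟩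
          simp only [h1, hdel0, mul_zero, sub_zero, zero_add, mul_eq_zero] at h2
          exact h2.resolve_left h0
      exact hne (key (n + 1 - i0) i0 (by have := i0.2; omega))
    · rw [Fin.sum_univ_eq_sum_range (fun j => (w * (del (l j) + sh j) - del w * l j) * del^[j] z)
        (n+1+1)]
      have s1 : ∑ j ∈ Finset.range (n+1+1), l j * del^[j] z = w := by
        rw [Finset.sum_range_succ, ← hwd, hl2 (n+1) le_rfl]; simp
      have s2 : ∑ j ∈ Finset.range (n+1+1), del (l j) * del^[j] z =
          ∑ j ∈ Finset.range (n+1), del (l j) * del^[j] z := by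
        rw [Finset.sum_range_succ, hl2 (n+1) le_rfl, hdel0]; simp
      have s3 : ∑ j ∈ Finset.range (n+1+1), sh j * del^[j] z =
          ∑ j ∈ Finset.range (n+1), l j * del^[j+1] z := by
        rw [Finset.sum_range_succ']
        simp [sh]
      have s4 : ∑ j ∈ Finset.range (n+1+1), (w * (del (l j) + sh j) - del w * l j) * del^[j] z =
          w * (∑ j ∈ Finset.range (n+1+1), del (l j) * del^[j] z +
            ∑ j ∈ Finset.range (n+1+1), sh j * del^[j] z) -
          del w * ∑ j ∈ Finset.range (n+1+1), l j * del^[j] z := by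
        rw [← Finset.sum_add_distrib, Finset.mul_sum, Finset.mul_sum, ← Finset.sum_sub_distrib]
        exact Finset.sum_congr rfl fun j _ => by ring
      rw [s4, s1, s2, s3]
      linear_combination -w * hdw
  tfae_have 3 → 4 := by
    rintro ⟨n, a, ha, ⟨i, hi⟩, h⟩
    refine ⟨n, fun hind => hi ?_⟩
    have h1 := Fintype.linearIndependent_iff.1 hind.linearIndependent (fun i => ⟨a i, ha i⟩) h i
    exact congrArg Subtype.val h1
  tfae_have 4 → 1 := by
    rintro ⟨n, h⟩
    obtain ⟨c, hc, ⟨i, hi⟩, g, hg⟩ := stage_three (R := K) (F := F)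
      (τ.restrict K K hτK) τ (fun a => rfl) (fun i : Fin (n+1) => ⟨del^[(i : ℕ)] f, hiterK _ _ hfK⟩)
      (fun i : Fin (n + 1) => del^[(i : ℕ)] z) (fun i => hiter _) h
    refine ⟨n, fun i => c i, fun i => (hk _).2 (congrArg Subtype.val (hc i)),
      ⟨i, fun h => hi (Subtype.ext h)⟩, g, g.2, ?_⟩
    have := congrArg (Subtype.val) hg
    simpa using this
  tfae_finish
end

section
/- Let F be a field of characteristic zero, τ : F → F a ring homomorphism, k := F^τ its fixed field, K a subfield of F with τ(K) ⊆ K and k ⊆ K, and ∂ : F → F a derivation with ∂ ∘ τ = τ ∘ ∂ and ∂(K) ⊆ K. Let a ∈ K be nonzero and let z ∈ F be a nonzero element with τ(z) = a z. Then the following are equivalent: (1) there exist n ≥ 0, λ₀, …, λₙ ∈ k, not all zero, and g ∈ K such that λ₀(∂(a)/a) + λ₁∂(∂(a)/a) + ⋯ + λₙ∂ⁿ(∂(a)/a) = τ(g) − g; (2) there exist n ≥ 0 and λ₀, …, λₙ ∈ k, not all zero, such that λ₀(∂(z)/z) + λ₁∂(∂(z)/z) + ⋯ + λₙ∂ⁿ(∂(z)/z)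 ∈ K; (3) ∂(z)/z is D-finite over K; (4) z is differentially algebraic over K. -/
set_option synthInstance.maxHeartbeats 400000
set_option maxHeartbeats 1000000

open scoped IntermediateField.algebraAdjoinAdjoin in
theorem basis_D {K F ι : Type*} [Field K] [Field F] [Algebra K F] [CharZero F]
    {x : ι → F} (hx : IsTranscendenceBasis K x) :
    LinearIndependent F (fun i => KaehlerDifferential.D K F (x i)) := by
  classical
  let : Algebra (MvPolynomial ι K) F := (MvPolynomial.aeval x).toAlgebra
  have : IsScalarTower K (MvPolynomial ι K) F :=
    IsScalarTower.of_algebraMap_eq' (MvPolynomial.aeval x).comp_algebraMap.symm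
  have hX : ∀ i, algebraMap (MvPolynomial ι K) F (MvPolynomial.X i) = x i := fun i => by
    change MvPolynomial.aeval x (MvPolynomial.X i) = _
    simp
  have het : Algebra.FormallyEtale (MvPolynomial ι K) F := by
    let : Algebra (MvPolynomial ι K) (Algebra.adjoin K (Set.range x)) :=
      hx.1.aevalEquiv.toAlgHom.toAlgebra
    have : IsScalarTower (MvPolynomial ι K) (Algebra.adjoin K (Set.range x)) F := by
      apply IsScalarTower.of_algebraMap_eq
      intro p
      change MvPolynomial.aeval x p = ((hx.1.aevalEquiv p : Algebra.adjoin K (Set.range x)) : F)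
      simp
    have h1 : Algebra.FormallyEtale (MvPolynomial ι K) (Algebra.adjoin K (Set.range x)) := by
      have := RingHom.Etale.of_bijective (f := algebraMap (MvPolynomial ι K) (Algebra.adjoin K (Set.range x))) hx.1.aevalEquiv.bijective
      rw [RingHom.etale_algebraMap] at this
      infer_instance
    have h2 : Algebra.FormallyEtale (Algebra.adjoin K (Set.range x))
      (IntermediateField.adjoin K (Set.range x)) :=
      .of_isLocalization (nonZeroDivisors _)
    have halg : Algebra.IsAlgebraic (IntermediateField.adjoin K (Set.range x)) F :=
      hx.isAlgebraic_field
    have h3 : Algebra.FormallyEtale (IntermediateField.adjoin K (Set.range x)) F :=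
      Algebra.FormallyEtale.of_isSeparable _ F
    have h4 : Algebra.FormallyEtale (Algebra.adjoin K (Set.range x)) F :=
      .comp _ (IntermediateField.adjoin K (Set.range x)) _
    exact .comp _ (Algebra.adjoin K (Set.range x)) _
  have hb := (KaehlerDifferential.isBaseChange_of_formallyEtale K (MvPolynomial ι K) F)
  let b := (KaehlerDifferential.mvPolynomialBasis K ι)
  have := (hb.basis b).linearIndependent
  have e : (fun i => KaehlerDifferential.D K F (x i)) = hb.basis b := by
    funext i
    rw [IsBaseChange.basis_apply]
    simp [b, hX]
  rw [e]
  exact this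

theorem li_D {K F ι : Type*} [Field K] [Field F] [Algebra K F] [CharZero F]
    {x : ι → F} (hx : AlgebraicIndependent K x) :
    LinearIndependent F (fun i => KaehlerDifferential.D K F (x i)) := by
  obtain ⟨t, hst, ht⟩ := exists_isTranscendenceBasis_superset hx.coe_range
  have := basis_D ht
  exact this.comp (fun i => (⟨x i, hst ⟨i, rfl⟩⟩ : t)) (fun i j h => hx.injective (by simpa using h))

theorem D_aeval {K F ι : Type*} [Fintype ι] [Field K] [Field F] [Algebra K F]
    (x : ι → F) (p : MvPolynomial ι K) :
    KaehlerDifferential.D K F (MvPolynomial.aeval x p) =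
      ∑ i, (MvPolynomial.aeval x (MvPolynomial.pderiv i p)) • KaehlerDifferential.D K F (x i) := by
  classical
  induction p using MvPolynomial.induction_on with
  | C a => simp
  | add p q hp hq => simp [hp, hq, add_smul, Finset.sum_add_distrib]
  | mul_X p j hp =>
    simp only [map_mul, MvPolynomial.aeval_X, Derivation.leibniz, hp, map_add, smul_eq_mul, 
      add_smul, Finset.sum_add_distrib, MvPolynomial.pderiv_X, Finset.smul_sum, smul_smul]
    congr 1
    rw [Finset.sum_eq_single j]
    · simp
    · intro i _ h
      simp [h.symm]
    · simp

theorem ai_of_li_D {K F ι : Type*} [Fintype ι] [Field K] [Field F] [Algebra K F] [CharZero F]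
    {x : ι → F} 
    (h : LinearIndependent F (fun i => KaehlerDifferential.D K F (x i))) :
    AlgebraicIndependent K x := by
  classical
  have : CharZero K := (algebraMap K F).charZero
  rw [algebraicIndependent_iff]
  suffices ∀ n, ∀ p : MvPolynomial ι K, p.totalDegree ≤ n → MvPolynomial.aeval x p = 0 → p = 0 from
    fun p hp => this _ p le_rfl hp
  have key : ∀ p : MvPolynomial ι K, MvPolynomial.aeval x p = 0 → 
      (∀ i, MvPolynomial.pderiv i p = 0) → p = 0 := by
    intro p hp hd
    have : p = MvPolynomial.C (p.coeff 0) := by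
      ext m
      rw [MvPolynomial.coeff_C]
      split_ifs with hm
      · rw [hm]
      · obtain ⟨i, hi⟩ := Finsupp.ne_iff.1 (Ne.symm hm)
        have := MvPolynomial.coeff_pderiv (i := i) p (m - Finsupp.single i 1)
        rw [hd i] at this
        have e : m - Finsupp.single i 1 + Finsupp.single i 1 = m := by
          apply tsub_add_cancel_of_le
          simpa [Finsupp.single_le_iff, Nat.one_le_iff_ne_zero] using hi
        rw [e] at this
        simp only [MvPolynomial.coeff_zero] at this
        rcases mul_eq_zero.1 this.symm with h | h
        · exact h
        · exact absurd h (Nat.cast_add_one_ne_zero _)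
    rw [this] at hp ⊢
    simpa using hp
  intro n
  induction n with
  | zero =>
    intro p hd hp
    rw [Nat.le_zero, MvPolynomial.totalDegree_eq_zero_iff_eq_C] at hd
    rw [hd] at hp ⊢
    simpa using hp
  | succ n ih =>
    intro p hd hp
    apply key p hp
    intro i
    apply ih
    · apply Finset.sup_le
      intro m hm
      rw [MvPolynomial.mem_support_iff, MvPolynomial.coeff_pderiv] at hm
      have := MvPolynomial.le_totalDegree (MvPolynomial.mem_support_iff.2 (left_ne_zero_of_mul hm))
      have h2 := this.trans hd
      rw [Finsupp.sum_add_index' (by simp) (by simp)] at h2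
      simp at h2
      exact h2
    · have := D_aeval x p
      rw [hp, map_zero] at this
      exact Fintype.linearIndependent_iff.1 h _ this.symm i

def TauMod {F : Type*} [Field F] (_τ : F →+* F) (M : Type*) := M

instance {F : Type*} [Field F] (τ : F →+* F) (M : Type*) [AddCommGroup M] :
    AddCommGroup (TauMod τ M) := inferInstanceAs (AddCommGroup M)

instance instTauModule {F : Type*} [Field F] (τ : F →+* F) (M : Type*) [AddCommGroup M] [Module F M] :
    Module F (TauMod τ M) := Module.compHom M τ

theorem exists_T {K F : Type*} [Field K] [Field F] [Algebra K F] (τ : F →+* F)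
    (hτ : ∀ c : K, ∃ c' : K, τ (algebraMap K F c) = algebraMap K F c') :
    ∃ T : Ω[F⁄K] →+ Ω[F⁄K], (∀ (f : F) w, T (f • w) = τ f • T w) ∧
      ∀ f, T (KaehlerDifferential.D K F f) = KaehlerDifferential.D K F (τ f) := by
  let : Module K (TauMod τ Ω[F⁄K]) := Module.compHom _ (algebraMap K F)
  have : IsScalarTower K F (TauMod τ Ω[F⁄K]) := ⟨fun c f m => by
    change (c • f) • m = (algebraMap K F c) • (f • m)
    rw [smul_smul, Algebra.smul_def]⟩
  let d : Derivation K F (TauMod τ Ω[F⁄K]) := Derivation.mk'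
    { toFun := fun f => (KaehlerDifferential.D K F (τ f) : Ω[F⁄K])
      map_add' := fun f g => by 
        rw [map_add, map_add]; rfl
      map_smul' := fun c f => by
        obtain ⟨c', hc⟩ := hτ c
        change KaehlerDifferential.D K F (τ (c • f)) = τ (algebraMap K F c) • KaehlerDifferential.D K F (τ f)
        rw [Algebra.smul_def, map_mul, hc, ← Algebra.smul_def, Derivation.map_smul, algebraMap_smul] }
    (fun f g => by
      change KaehlerDifferential.D K F (τ (f * g)) = τ f • KaehlerDifferential.D K F (τ g) + τ g • KaehlerDifferential.D K F (τ f)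
      rw [map_mul, Derivation.leibniz])
  refine ⟨{ toFun := fun w => d.liftKaehlerDifferential w, map_zero' := map_zero _, map_add' := map_add _ }, ?_, ?_⟩
  · intro f w
    exact map_smul d.liftKaehlerDifferential f w
  · intro f
    exact d.liftKaehlerDifferential_comp_D f

def LieMod {F : Type*} [Field F] (_δ : Derivation ℤ F F) (M : Type*) := M × M

instance {F : Type*} [Field F] (δ : Derivation ℤ F F) (M : Type*) [AddCommGroup M] :
    AddCommGroup (LieMod δ M) := inferInstanceAs (AddCommGroup (M × M))

instance instLieModule {F : Type*} [Field F] (δ : Derivation ℤ F F) (M : Type*) [AddCommGroup M] [Module F M] :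
    Module F (LieMod δ M) where
  smul f m := (f • m.1, f • m.2 + δ f • m.1)
  one_smul m := by
    apply Prod.ext
    · exact one_smul F m.1
    · change (1 : F) • m.2 + δ 1 • m.1 = m.2
      simp
  mul_smul f g m := by
    apply Prod.ext
    · exact mul_smul f g m.1
    · change (f * g) • m.2 + δ (f * g) • m.1 = f • (g • m.2 + δ g • m.1) + δ f • (g • m.1)
      simp only [Derivation.leibniz, smul_eq_mul]
      module
  smul_zero f := by
    apply Prod.ext
    · exact smul_zero f
    · change f • (0 : M) + δ f • (0 : M) = 0
      simp
  smul_add f m n := by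
    apply Prod.ext
    · exact smul_add f m.1 n.1
    · change f • (m.2 + n.2) + δ f • (m.1 + n.1) = (f • m.2 + δ f • m.1) + (f • n.2 + δ f • n.1)
      module
  add_smul f g m := by
    apply Prod.ext
    · exact add_smul f g m.1
    · change (f + g) • m.2 + δ (f + g) • m.1 = (f • m.2 + δ f • m.1) + (g • m.2 + δ g • m.1)
      rw [map_add]
      module
  zero_smul m := by
    apply Prod.ext
    · exact zero_smul F m.1
    · change (0 : F) • m.2 + δ 0 • m.1 = 0
      simp

theorem exists_L {K F : Type*} [Field K] [Field F] [Algebra K F] (δ : Derivation ℤ F F)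
    (hδ : ∀ c : K, ∃ c' : K, δ (algebraMap K F c) = algebraMap K F c') :
    ∃ L : Ω[F⁄K] →+ Ω[F⁄K], (∀ (f : F) w, L (f • w) = δ f • w + f • L w) ∧
      ∀ f, L (KaehlerDifferential.D K F f) = KaehlerDifferential.D K F (δ f) := by
  let : Module K (LieMod δ Ω[F⁄K]) := Module.compHom _ (algebraMap K F)
  have : IsScalarTower K F (LieMod δ Ω[F⁄K]) := ⟨fun c f m => by
    change (c • f) • m = (algebraMap K F c) • (f • m)
    rw [smul_smul, Algebra.smul_def]⟩
  let d : Derivation K F (LieMod δ Ω[F⁄K]) := Derivation.mk'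
    { toFun := fun f => ((KaehlerDifferential.D K F f, KaehlerDifferential.D K F (δ f)) : Ω[F⁄K] × Ω[F⁄K])
      map_add' := fun f g => by 
        rw [map_add, map_add, map_add]; rfl
      map_smul' := fun c f => by
        obtain ⟨c', hc⟩ := hδ c
        apply Prod.ext
        · change KaehlerDifferential.D K F (c • f) = algebraMap K F c • KaehlerDifferential.D K F f
          rw [Derivation.map_smul, algebraMap_smul]
        · change KaehlerDifferential.D K F (δ (c • f)) = algebraMap K F c • KaehlerDifferential.D K F (δ f) + δ (algebraMap K F c) • KaehlerDifferential.D K F f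
          rw [Algebra.smul_def, Derivation.leibniz, hc, map_add, smul_eq_mul, smul_eq_mul,
            ← Algebra.smul_def, mul_comm, ← Algebra.smul_def, Derivation.map_smul, Derivation.map_smul,
            algebraMap_smul, algebraMap_smul] }
    (fun f g => by
      apply Prod.ext
      · exact Derivation.leibniz _ f g
      · change KaehlerDifferential.D K F (δ (f * g)) = (f • KaehlerDifferential.D K F (δ g) + δ f • KaehlerDifferential.D K F g) + 
          (g • KaehlerDifferential.D K F (δ f) + δ g • KaehlerDifferential.D K F f)
        simp only [Derivation.leibniz, map_add, smul_eq_mul]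
        module)
  have hfst : ∀ w : Ω[F⁄K], (d.liftKaehlerDifferential w).1 = w := by
    let pr : LieMod δ Ω[F⁄K] →ₗ[F] Ω[F⁄K] := 
      { toFun := fun m => m.1, map_add' := fun _ _ => rfl, map_smul' := fun _ _ => rfl }
    have : pr ∘ₗ d.liftKaehlerDifferential = LinearMap.id := by
      apply Derivation.liftKaehlerDifferential_unique
      ext f
      change (d.liftKaehlerDifferential (KaehlerDifferential.D K F f)).1 = KaehlerDifferential.D K F f
      rw [d.liftKaehlerDifferential_comp_D f]
      rfl
    intro w
    exact LinearMap.congr_fun this w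
  refine ⟨{ toFun := fun w => (d.liftKaehlerDifferential w).2, 
            map_zero' := by rw [map_zero]; rfl, map_add' := fun u v => by rw [map_add]; rfl }, ?_, ?_⟩
  · intro f w
    change (d.liftKaehlerDifferential (f • w)).2 = δ f • w + f • (d.liftKaehlerDifferential w).2
    rw [map_smul]
    change f • (d.liftKaehlerDifferential w).2 + δ f • (d.liftKaehlerDifferential w).1 = _
    rw [hfst, add_comm]
  · intro f
    change (d.liftKaehlerDifferential (KaehlerDifferential.D K F f)).2 = _
    rw [d.liftKaehlerDifferential_comp_D f]
    rfl

theorem mem_of_alg {K F : Type*} [Field K] [Field F] [Algebra K F] [CharZero F] (τ : F →+* F)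
    (hτ : ∀ c : K, ∃ c' : K, τ (algebraMap K F c) = algebraMap K F c')
    (hk : ∀ u, τ u = u → ∃ c : K, algebraMap K F c = u)
    (w : F) (hw : IsAlgebraic K w) (b : K) (hb : τ w = w + algebraMap K F b) :
    ∃ c : K, algebraMap K F c = w := by
  have hK : CharZero K := (algebraMap K F).charZero
  choose s hs using hτ
  let σ : K →+* K := 
    { toFun := s
      map_one' := (algebraMap K F).injective (by rw [← hs]; simp)
      map_zero' := (algebraMap K F).injective (by rw [← hs]; simp)
      map_mul' := fun x y => (algebraMap K F).injective (by rw [← hs]; simp [hs])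
      map_add' := fun x y => (algebraMap K F).injective (by rw [← hs]; simp [hs]) }
  have hσ : ∀ c, τ (algebraMap K F c) = algebraMap K F (σ c) := hs
  have hint := hw.isIntegral
  set p := minpoly K w with hp
  have hm : p.Monic := minpoly.monic hint
  have hpos : 0 < p.natDegree := minpoly.natDegree_pos hint
  have hq : Polynomial.taylor b (p.map σ) = p := by
    have hmon : (Polynomial.taylor b (p.map σ)).Monic := by
      rw [Polynomial.taylor_apply]
      exact (hm.map σ).comp (Polynomial.monic_X_add_C b) (by simp)
    apply Polynomial.eq_of_monic_of_dvd_of_natDegree_le hm hmon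
    · rw [minpoly.dvd_iff, Polynomial.taylor_apply, Polynomial.aeval_comp]
      have h0 : Polynomial.aeval w p = 0 := minpoly.aeval K w
      have h1 := congrArg τ h0
      rw [map_zero, Polynomial.aeval_def, Polynomial.hom_eval₂] at h1
      rw [Polynomial.aeval_def, Polynomial.eval₂_map]
      have e1 : (algebraMap K F).comp σ = τ.comp (algebraMap K F) := by
        ext c; exact (hσ c).symm
      rw [e1]
      simpa [hb] using h1
    · rw [Polynomial.natDegree_taylor, Polynomial.natDegree_map]
  have hc := congrArg (fun r => Polynomial.coeff r (p.natDegree - 1)) hq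
  simp only [Polynomial.taylor_coeff] at hc
  obtain ⟨d, hd⟩ : ∃ d, p.natDegree = d + 1 := ⟨p.natDegree - 1, by omega⟩
  rw [hd] at hc
  simp only [Nat.add_sub_cancel] at hc
  have hdeg : (Polynomial.hasseDeriv d (p.map σ)).natDegree ≤ 1 := by
    refine (Polynomial.natDegree_hasseDeriv_le _ _).trans ?_
    rw [Polynomial.natDegree_map, hd]; omega
  rw [Polynomial.eq_X_add_C_of_natDegree_le_one hdeg] at hc
  simp only [Polynomial.hasseDeriv_coeff, Polynomial.coeff_map] at hc
  have h1 : p.coeff (1 + d) = 1 := by rw [add_comm, ← hd]; exact hm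
  rw [h1] at hc
  simp at hc
  rw [add_comm 1 d, Nat.choose_succ_self_right] at hc
  -- (d+1) * b + σ c = c
  have hd0 : ((d + 1 : ℕ) : F) ≠ 0 := by exact_mod_cast Nat.succ_ne_zero d
  obtain ⟨c, hcc⟩ := hk (((d + 1 : ℕ) : F) * w + algebraMap K F (p.coeff d)) (by
    rw [map_add, map_mul, map_natCast, hσ, hb]
    have h2 := congrArg (algebraMap K F) hc
    simp only [map_add, map_mul, map_natCast] at h2
    linear_combination h2)
  refine ⟨(c - p.coeff d) / ((d + 1 : ℕ) : K), ?_⟩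
  rw [map_div₀, map_sub, hcc, map_natCast]
  field_simp
  ring
theorem mem_span_of_not_li {E V : Type*} [Field E] [AddCommGroup V] [Module E V] (u : ℕ → V) (n : ℕ)
    (h : ¬ LinearIndependent E (fun i : Fin n => u i)) :
    ∃ m, LinearIndependent E (fun i : Fin m => u i) ∧
      u m ∈ Submodule.span E (Set.range (fun i : Fin m => u i)) := by
  induction n with
  | zero => exact absurd linearIndependent_empty_type h
  | succ n ih =>
    by_cases h' : LinearIndependent E (fun i : Fin n => u i)
    · refine ⟨n, h', ?_⟩
      rw [linearIndependent_finSucc'] at h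
      by_contra h2
      exact h ⟨h', h2⟩
    · exact ih h'

theorem orbit_mem {E V : Type*} [Field E] [AddCommGroup V] [Module E V] (L : V →+ V) (δ : E → E)
    (hL : ∀ c v, L (c • v) = δ c • v + c • L v) (s : Set V)
    (hsL : ∀ v ∈ s, L v ∈ Submodule.span E s) (u : ℕ → V) (hu : ∀ i, u (i + 1) = L (u i))
    (h0 : u 0 ∈ Submodule.span E s) (i : ℕ) : u i ∈ Submodule.span E s := by
  have key : ∀ v ∈ Submodule.span E s, L v ∈ Submodule.span E s := by
    intro v hv
    induction hv using Submodule.span_induction with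
    | mem x hx => exact hsL x hx
    | zero => simp
    | add x y _ _ hx hy => rw [map_add]; exact add_mem hx hy
    | smul c x hx' hx =>
      rw [hL]
      exact add_mem (Submodule.smul_mem _ _ hx') (Submodule.smul_mem _ _ hx)
  induction i with
  | zero => exact h0
  | succ i ih => rw [hu]; exact key _ ih

theorem orbit_dep {E V : Type*} [Field E] [AddCommGroup V] [Module E V] (s : Set V) (hs : s.Finite)
    (u : ℕ → V) (h : ∀ i, u i ∈ Submodule.span E s) :
    ∃ n, ¬ LinearIndependent E (fun i : Fin (n + 1) => u i) := by
  have : FiniteDimensional E (Submodule.span E s) := FiniteDimensional.span_of_finite E hs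
  refine ⟨Module.finrank E (Submodule.span E s), fun hli => ?_⟩
  have h2 : LinearIndependent E (fun i : Fin (Module.finrank E (Submodule.span E s) + 1) =>
      (⟨u i, h i⟩ : Submodule.span E s)) :=
    LinearIndependent.of_comp (Submodule.span E s).subtype hli
  have := h2.fintype_card_le_finrank
  simp at this

theorem tau_dep {F V : Type*} [Field F] [AddCommGroup V] [Module F V] (τ : F →+* F) (T : V →+ V)
    (hT : ∀ (c : F) v, T (c • v) = τ c • T v) (u : ℕ → V) (hu : ∀ i, T (u i) = u i) (n : ℕ)
    (h : ¬ LinearIndependent F (fun i : Fin n => u i)) :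
    ∃ m, ∃ c : Fin m → F, (∀ i, τ (c i) = c i) ∧ u m = ∑ i, c i • u i := by
  obtain ⟨m, hli, hm⟩ := mem_span_of_not_li u n h
  rw [Submodule.mem_span_range_iff_exists_fun] at hm
  obtain ⟨c, hc⟩ := hm
  refine ⟨m, c, ?_, hc.symm⟩
  have h2 := congrArg T hc
  simp only [map_sum, hT, hu] at h2
  have h3 : ∑ i, (τ (c i) - c i) • u i = 0 := by
    simp only [sub_smul, Finset.sum_sub_distrib, hc, h2, sub_self]
  intro i
  exact sub_eq_zero.1 (Fintype.linearIndependent_iff.1 hli _ h3 i)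

/-- Characterization of differential algebraicity over `K` of a nonzero solution `z ∈ F` of
the homogeneous difference equation `τ(z) = a z` with `a ∈ K*`, in the presence of a
derivation `∂` commuting with `τ`. -/
theorem differential_algebraicity_homogeneous
    (F : Type*) [Field F] [CharZero F] (τ : F →+* F)
    (k : Subfield F) (hk : ∀ x : F, x ∈ k ↔ τ x = x)
    (K : Subfield F) (hkK : (k : Set F) ⊆ (K : Set F)) (hτK : ∀ x ∈ K, τ x ∈ K)
    (del : F → F)
    (hdeladd : ∀ x y : F, del (x + y) = del x + del y)
    (hdelmul : ∀ x y : F, del (x * y) = x * del y + del x * y)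
    (hdelτ : ∀ x : F, del (τ x) = τ (del x))
    (hdelK : ∀ x ∈ K, del x ∈ K)
    (a : F) (haK : a ∈ K) (ha0 : a ≠ 0)
    (z : F) (hz0 : z ≠ 0) (hz : τ z = a * z) :
    List.TFAE
      [ ∃ n : ℕ, ∃ lam : Fin (n + 1) → F, (∀ i, lam i ∈ k) ∧ (∃ i, lam i ≠ 0) ∧
          ∃ g ∈ K, ∑ i : Fin (n + 1), lam i * del^[(i : ℕ)] (del a / a) = τ g - g,
        ∃ n : ℕ, ∃ lam : Fin (n + 1) → F, (∀ i, lam i ∈ k) ∧ (∃ i, lam i ≠ 0) ∧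
          (∑ i : Fin (n + 1), lam i * del^[(i : ℕ)] (del z / z)) ∈ K,
        ∃ n : ℕ, ∃ b : Fin (n + 1) → F, (∀ i, b i ∈ K) ∧ (∃ i, b i ≠ 0) ∧
          ∑ i : Fin (n + 1), b i * del^[(i : ℕ)] (del z / z) = 0,
        ∃ n : ℕ, ¬ AlgebraicIndependent K (fun i : Fin (n + 1) => del^[(i : ℕ)] z) ] := by
  have hd0 : del 0 = 0 := by simpa using hdeladd 0 0
  let δ : Derivation ℤ F F := Derivation.mk' (AddMonoidHom.toIntLinearMap (AddMonoidHom.mk' del hdeladd))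
    (fun x y => by
      change del (x * y) = x * del y + y * del x
      rw [hdelmul, mul_comm y])
  have hδ : ∀ x, δ x = del x := fun _ => rfl
  have hd1 : del 1 = 0 := by rw [← hδ]; simp
  have hKτ : ∀ c : K, ∃ c' : K, τ (algebraMap K F c) = algebraMap K F c' :=
    fun c => ⟨⟨τ c, hτK c c.2⟩, rfl⟩
  have hKδ : ∀ c : K, ∃ c' : K, δ (algebraMap K F c) = algebraMap K F c' :=
    fun c => ⟨⟨del c, hdelK c c.2⟩, rfl⟩
  obtain ⟨T, hT1, hT2⟩ := exists_T τ hKτ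
  obtain ⟨L, hL1, hL2⟩ := exists_L δ hKδ
  have hDK : ∀ c ∈ K, KaehlerDifferential.D K F c = 0 := fun c hc =>
    (KaehlerDifferential.D K F).map_algebraMap (⟨c, hc⟩ : K)
  obtain ⟨y, hy⟩ : ∃ y : ℕ → F, y = fun i => del^[i] (del z / z) := ⟨_, rfl⟩
  obtain ⟨Z, hZ⟩ : ∃ Z : ℕ → F, Z = fun i => del^[i] z := ⟨_, rfl⟩
  obtain ⟨b, hb⟩ : ∃ b : ℕ → F, b = fun i => del^[i] (del a / a) := ⟨_, rfl⟩
  have hyi : ∀ i, del^[i] (del z / z) = y i := fun i => by rw [hy]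
  have hbi : ∀ i, del^[i] (del a / a) = b i := fun i => by rw [hb]
  have hZi : ∀ i, del^[i] z = Z i := fun i => by rw [hZ]
  have hys : ∀ i, y (i + 1) = del (y i) := fun i => by
    rw [hy]; exact Function.iterate_succ_apply' _ _ _
  have hbs : ∀ i, b (i + 1) = del (b i) := fun i => by
    rw [hb]; exact Function.iterate_succ_apply' _ _ _
  have hZs : ∀ i, Z (i + 1) = del (Z i) := fun i => by
    rw [hZ]; exact Function.iterate_succ_apply' _ _ _
  have hy0 : z * y 0 = del z := by rw [hy]; simp; field_simp
  have hZ0 : Z 0 = z := by rw [hZ]; rfl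
  have hbK : ∀ i, b i ∈ K := by
    intro i
    induction i with
    | zero => rw [hb]; exact div_mem (hdelK a haK) haK
    | succ i ih => rw [hbs]; exact hdelK _ ih
  have hτy : ∀ i, τ (y i) = y i + b i := by
    intro i
    induction i with
    | zero =>
      rw [hy, hb]
      simp only [Function.iterate_zero, id]
      rw [map_div₀, ← hdelτ, hz, hdelmul]
      field_simp
    | succ i ih => rw [hys, hbs, ← hdelτ, ih, hdeladd]
  simp only [hyi, hbi, hZi]
  have ysum : ∀ (n : ℕ) (lam : Fin (n + 1) → F), (∀ i, lam i ∈ k) →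
      τ (∑ i, lam i * y i) = ∑ i, lam i * y i + ∑ i, lam i * b i := by
    intro n lam hlam
    rw [map_sum, ← Finset.sum_add_distrib]
    refine Finset.sum_congr rfl fun i _ => ?_
    rw [map_mul, (hk _).1 (hlam i), hτy, mul_add]
  have hDy0 : z • KaehlerDifferential.D K F (y 0) + y 0 • KaehlerDifferential.D K F z
      = KaehlerDifferential.D K F (del z) := by
    rw [← hy0, Derivation.leibniz]
  tfae_have 1 → 2 := by
    rintro ⟨n, lam, hlam, hne, g, hg, h⟩
    refine ⟨n, lam, hlam, hne, ?_⟩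
    have : (∑ i, lam i * y i) - g ∈ k := by
      rw [hk, map_sub, ysum n lam hlam, h]; ring
    have := add_mem (hkK this) hg
    simpa using this
  tfae_have 2 → 1 := by
    rintro ⟨n, lam, hlam, hne, h⟩
    refine ⟨n, lam, hlam, hne, _, h, ?_⟩
    rw [ysum n lam hlam]; ring
  tfae_have 2 → 3 := by
    rintro ⟨n, lam, hlam, ⟨j, hj⟩, h⟩
    let u : ℕ → F := fun i => Nat.casesOn i 1 y
    have hnl : ¬ LinearIndependent K (fun i : Fin (n + 2) => u i) := by
      rw [Fintype.not_linearIndependent_iff]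
      refine ⟨Fin.cons (-⟨_, h⟩) (fun i => ⟨lam i, hkK (hlam i)⟩), ?_, j.succ, ?_⟩
      · rw [Fin.sum_univ_succ]
        simp [u, Subfield.smul_def]
      · simp only [Fin.cons_succ, ne_eq]
        exact fun h => hj (congrArg Subtype.val h)
    obtain ⟨m, -, hm⟩ := mem_span_of_not_li u _ hnl
    have hmem : ∀ i ≤ m, u i ∈ Submodule.span K (Set.range (fun i : Fin m => u i)) := by
      intro i hi
      rcases hi.lt_or_eq with h | h
      · exact Submodule.subset_span ⟨⟨i, h⟩, rfl⟩
      · rw [h]; exact hm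
    have hm0 : 1 ≤ m := by
      by_contra h0
      have : m = 0 := by omega
      subst this
      simp [u] at hm
    obtain ⟨N, hN⟩ := orbit_dep (E := K) (Set.range (fun i : Fin m => u i)) (Set.finite_range _) y
      (orbit_mem (AddMonoidHom.mk' del hdeladd) (fun c : K => (⟨del c, hdelK c c.2⟩ : K))
        (fun c v => by
          change del (c * v) = del c * v + c * del v
          rw [hdelmul, add_comm]) _ 
        (by
          rintro _ ⟨⟨i, hi⟩, rfl⟩
          cases i with
          | zero =>
            change del 1 ∈ _
            rw [hd1]; exact zero_mem _
          | succ i =>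
            change del (y i) ∈ _
            rw [← hys]
            exact hmem (i + 2) hi) y hys (hmem 1 hm0))
    rw [Fintype.not_linearIndependent_iff] at hN
    obtain ⟨g, hg, i, hi⟩ := hN
    exact ⟨N, fun i => g i, fun i => (g i).2, ⟨i, fun h => hi (Subtype.ext h)⟩, hg⟩
  tfae_have 3 → 4 := by
    rintro ⟨n, c, hc, ⟨j, hj⟩, h⟩
    have hnl : ¬ LinearIndependent K (fun i : Fin (n + 1) => y i) := by
      rw [Fintype.not_linearIndependent_iff]
      exact ⟨fun i => ⟨c i, hc i⟩, h, j, fun h => hj (congrArg Subtype.val h)⟩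
    obtain ⟨m, -, hm⟩ := mem_span_of_not_li y _ hnl
    rw [Submodule.mem_span_range_iff_exists_fun] at hm
    obtain ⟨g, hg⟩ := hm
    let s : Set (Ω[F⁄K]) := insert (KaehlerDifferential.D K F z)
      (Set.range (fun i : Fin m => KaehlerDifferential.D K F (y i)))
    have hmem : ∀ i ≤ m, KaehlerDifferential.D K F (y i) ∈ Submodule.span F s := by
      have hlt : ∀ i < m, KaehlerDifferential.D K F (y i) ∈ Submodule.span F s :=
        fun i h => Submodule.subset_span (Or.inr ⟨⟨i, h⟩, rfl⟩)
      intro i hi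
      rcases hi.lt_or_eq with h | h
      · exact hlt i h
      · rw [h, ← hg, map_sum]
        refine sum_mem fun i _ => ?_
        rw [Subfield.smul_def, smul_eq_mul, Derivation.leibniz, hDK _ (g i).2, smul_zero, add_zero]
        exact Submodule.smul_mem _ _ (hlt i i.2)
    have hz' : KaehlerDifferential.D K F z ∈ Submodule.span F s := Submodule.subset_span (Or.inl rfl)
    obtain ⟨N, hN⟩ := orbit_dep (E := F) s ((Set.finite_range _).insert _)
      (fun i => KaehlerDifferential.D K F (Z i))
      (orbit_mem L δ hL1 s (by
          rintro _ (rfl | ⟨⟨i, hi⟩, rfl⟩)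
          · rw [hL2, hδ, ← hDy0]
            exact add_mem (Submodule.smul_mem _ _ (hmem 0 (Nat.zero_le _)))
              (Submodule.smul_mem _ _ hz')
          · change L (KaehlerDifferential.D K F (y i)) ∈ _
            rw [hL2, hδ, ← hys]
            exact hmem (i + 1) hi) _ (fun i => by rw [hL2, hδ, ← hZs]) (by rw [hZ0]; exact hz'))
    exact ⟨N, fun hai => hN (li_D hai)⟩
  tfae_have 4 → 2 := by
    rintro ⟨n, hn⟩
    have hnl : ¬ LinearIndependent F
        (fun i : Fin (n + 1) => (fun j => KaehlerDifferential.D K F (Z j)) i) :=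
      fun h => hn (ai_of_li_D h)
    obtain ⟨m, -, hm⟩ := mem_span_of_not_li (fun j => KaehlerDifferential.D K F (Z j)) _ hnl
    let s : Set (Ω[F⁄K]) := Set.range (fun i : Fin m => KaehlerDifferential.D K F (Z i))
    have hmem : ∀ i ≤ m, KaehlerDifferential.D K F (Z i) ∈ Submodule.span F s := by
      intro i hi
      rcases hi.lt_or_eq with h | h
      · exact Submodule.subset_span ⟨⟨i, h⟩, rfl⟩
      · rw [h]; exact hm
    have hsL : ∀ v ∈ s, L v ∈ Submodule.span F s := by
      rintro _ ⟨⟨i, hi⟩, rfl⟩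
      change L (KaehlerDifferential.D K F (Z i)) ∈ _
      rw [hL2, hδ, ← hZs]
      exact hmem (i + 1) hi
    have hall := orbit_mem L δ hL1 s hsL (fun i => KaehlerDifferential.D K F (Z i))
      (fun i => by rw [hL2, hδ, ← hZs]) (hmem 0 (Nat.zero_le _))
    have h0 := hall 0
    have h1 := hall 1
    simp only [zero_add, hZs 0, hZ0] at h0 h1
    have hy0m : KaehlerDifferential.D K F (y 0) ∈ Submodule.span F s := by
      rw [← hDy0] at h1
      have h2 := Submodule.smul_mem _ z⁻¹ ((Submodule.add_mem_iff_left _ (Submodule.smul_mem _ _ h0)).1 h1)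
      rwa [smul_smul, inv_mul_cancel₀ hz0, one_smul] at h2
    obtain ⟨N, hN⟩ := orbit_dep (E := F) s (Set.finite_range _)
      (fun i => KaehlerDifferential.D K F (y i))
      (orbit_mem L δ hL1 s hsL _ (fun i => by rw [hL2, hδ, ← hys]) hy0m)
    obtain ⟨m, c, hc, hcy⟩ := tau_dep τ T hT1 (fun i => KaehlerDifferential.D K F (y i))
      (fun i => by rw [hT2, hτy, map_add, hDK _ (hbK i), add_zero]) _ hN
    let lam : Fin (m + 1) → F := Fin.snoc (fun i => - c i) 1
    have hlam : ∀ i, lam i ∈ k := by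
      intro i
      induction i using Fin.lastCases with
      | last => simp [lam]
      | cast i =>
        simp only [lam, Fin.snoc_castSucc]
        exact neg_mem ((hk _).2 (hc i))
    refine ⟨m, lam, hlam, ⟨Fin.last m, by simp [lam]⟩, ?_⟩
    have hDw : KaehlerDifferential.D K F (∑ i, lam i * y i) = 0 := by
      rw [map_sum]
      have : ∀ i : Fin (m + 1), KaehlerDifferential.D K F (lam i * y i)
          = lam i • KaehlerDifferential.D K F (y i) := fun i => by
        rw [Derivation.leibniz, hDK _ (hkK (hlam i)), smul_zero, add_zero]
      simp only [this]
      rw [Fin.sum_univ_castSucc]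
      simp [lam, hcy]
    have halg : IsAlgebraic K (∑ i, lam i * y i) := by
      by_contra htr
      have hai : AlgebraicIndependent K (fun _ : Unit => ∑ i, lam i * y i) :=
        algebraicIndependent_unique_type_iff.2 htr
      exact (li_D hai).ne_zero () hDw
    obtain ⟨c', hc'⟩ := mem_of_alg τ hKτ (fun u hu => ⟨⟨u, hkK ((hk u).2 hu)⟩, rfl⟩) _ halg
      ⟨∑ i, lam i * b i, sum_mem fun i _ => mul_mem (hkK (hlam i)) (hbK i)⟩ (ysum m lam hlam)
    rw [← hc']
    exact c'.2
  tfae_finish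
end

section
/- Let k be a field of characteristic zero and C ⊆ k an algebraically closed subfield. Consider the field k(X) of rational functions over k, with the standard derivation d/dX, and let τ : k(X) → k(X) be the k-algebra automorphism determined by X ↦ X + 1. Let f ∈ C(X) be a rational function with coefficients in C, viewed inside k(X). If there exist n ≥ 0, λ₀, …, λₙ ∈ k, not all zero, and g ∈ k(X) such that λ₀f + λ₁(d/dX)(f) + ⋯ + λₙ(d/dX)ⁿ(f) = τ(g) − g, then there exist μ₀, …, μₙ ∈ C, not all zero, and h ∈ C(X) such that μ₀f + μ₁(d/dX)(f) + ⋯ + μₙ(d/dX)ⁿ(f) = h(X+1) − h(X). -/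
set_option synthInstance.maxHeartbeats 400000
set_option maxHeartbeats 1000000

open Polynomial in
lemma aux_spec {k : Type*} [Field k] (C : Subfield k) [IsAlgClosed C] (S : Set k) (hS : S.Finite) :
    ∃ A : Subalgebra C k, S ⊆ A ∧ Nonempty (A →ₐ[C] C) := by
  refine ⟨Algebra.adjoin C S, Algebra.subset_adjoin, ?_⟩
  set A := Algebra.adjoin C S
  have hft : Algebra.FiniteType C A :=
    (Subalgebra.fg_iff_finiteType _).1 (Subalgebra.fg_def.2 ⟨S, hS, rfl⟩)
  obtain ⟨m, hm⟩ := Ideal.exists_maximal A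
  let : Field (A ⧸ m) := Ideal.Quotient.field m
  have : Algebra.FiniteType C (A ⧸ m) :=
    hft.of_surjective (Ideal.Quotient.mkₐ C m) (Ideal.Quotient.mkₐ_surjective C m)
  have : Module.Finite C (A ⧸ m) := finite_of_finite_type_of_isJacobsonRing C (A ⧸ m)
  have : Algebra.IsAlgebraic C (A ⧸ m) := Algebra.IsAlgebraic.of_finite C (A ⧸ m)
  exact ⟨(IsAlgClosed.lift (R := C) (S := A ⧸ m) (M := C)).comp (Ideal.Quotient.mkₐ C m)⟩

open Polynomial in
lemma aux_D {k : Type*} [Field k]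
    (D : Derivation k (RatFunc k) (RatFunc k)) (hD : D RatFunc.X = 1) (p : k[X]) :
    D (algebraMap k[X] (RatFunc k) p) = algebraMap k[X] (RatFunc k) (derivative p) := by
  have h1 : ∀ q : k[X], algebraMap k[X] (RatFunc k) q = aeval RatFunc.X q := by
    intro q
    have := Polynomial.aeval_algebraMap_apply (RatFunc k) (X : k[X]) q
    rw [RatFunc.algebraMap_X] at this
    rw [this]; simp
  rw [h1, h1, Derivation.map_aeval, hD]; simp

open Polynomial in
lemma aux_tau {k : Type*} [Field k]
    (τ : RatFunc k →ₐ[k] RatFunc k) (hτ : τ RatFunc.X = RatFunc.X + 1) (p : k[X]) :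
    τ (algebraMap k[X] (RatFunc k) p) = algebraMap k[X] (RatFunc k) (p.comp (X + 1)) := by
  have h1 : ∀ q r : k[X], algebraMap k[X] (RatFunc k) (q.comp r)
      = aeval (algebraMap k[X] (RatFunc k) r) q := by
    intro q r
    rw [Polynomial.aeval_algebraMap_apply]; rfl
  have h2 := h1 p X
  rw [comp_X] at h2
  rw [h2, h1, ← Polynomial.aeval_algHom_apply]
  simp [hτ]

open Polynomial in
lemma aux_mem {k : Type*} [Field k] (C : Subfield k) (f : RatFunc k)
    (hf : f ∈ Subfield.closure
      { u : RatFunc k | ∃ p : Polynomial k, (∀ i, p.coeff i ∈ C) ∧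
          u = algebraMap (Polynomial k) (RatFunc k) p }) :
    ∃ a b : C[X], b ≠ 0 ∧ f * algebraMap k[X] (RatFunc k) (b.map (algebraMap C k)) =
      algebraMap k[X] (RatFunc k) (a.map (algebraMap C k)) := by
  have hne : ∀ b : C[X], b ≠ 0 → algebraMap k[X] (RatFunc k) (b.map (algebraMap C k)) ≠ 0 := by
    intro b hb
    exact RatFunc.algebraMap_ne_zero ((Polynomial.map_ne_zero_iff (algebraMap C k).injective).2 hb)
  induction hf using Subfield.closure_induction with
  | mem x hx =>
    obtain ⟨p, hp, rfl⟩ := hx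
    have : p ∈ lifts (algebraMap C k) := by
      rw [lifts_iff_coeff_lifts]
      intro n
      exact ⟨⟨_, hp n⟩, rfl⟩
    obtain ⟨a, rfl⟩ := (mem_lifts _).1 this
    exact ⟨a, 1, one_ne_zero, by simp⟩
  | one => exact ⟨1, 1, one_ne_zero, by simp⟩
  | add x y _ _ hx hy =>
    obtain ⟨a, b, hb, h⟩ := hx
    obtain ⟨c, d, hd, h'⟩ := hy
    refine ⟨a * d + c * b, b * d, mul_ne_zero hb hd, ?_⟩
    simp only [Polynomial.map_mul, Polynomial.map_add, map_mul, map_add]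
    rw [← h, ← h']; ring
  | neg x _ hx =>
    obtain ⟨a, b, hb, h⟩ := hx
    refine ⟨-a, b, hb, ?_⟩
    simp only [Polynomial.map_neg, map_neg]
    rw [← h]; ring
  | inv x _ hx =>
    obtain ⟨a, b, hb, h⟩ := hx
    by_cases hx0 : x = 0
    · exact ⟨0, 1, one_ne_zero, by simp [hx0]⟩
    · refine ⟨b, a, ?_, ?_⟩
      · rintro rfl
        simp at h
        exact h.elim hx0 hb
      · rw [← h]; field_simp
  | mul x y _ _ hx hy =>
    obtain ⟨a, b, hb, h⟩ := hx
    obtain ⟨c, d, hd, h'⟩ := hy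
    refine ⟨a * c, b * d, mul_ne_zero hb hd, ?_⟩
    simp only [Polynomial.map_mul, map_mul]
    rw [← h, ← h']; ring

open Polynomial in
lemma aux_iter {k : Type*} [Field k] (C : Subfield k)
    (D : Derivation k (RatFunc k) (RatFunc k)) (hD : D RatFunc.X = 1) (f : RatFunc k)
    (a b : C[X]) (h : f * algebraMap k[X] (RatFunc k) (b.map (algebraMap C k)) =
      algebraMap k[X] (RatFunc k) (a.map (algebraMap C k))) (i : ℕ) :
    ∃ N : C[X], (⇑D)^[i] f * algebraMap k[X] (RatFunc k) (b.map (algebraMap C k)) ^ (i + 1) =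
      algebraMap k[X] (RatFunc k) (N.map (algebraMap C k)) := by
  induction i with
  | zero => exact ⟨a, by simpa using h⟩
  | succ i ih =>
    obtain ⟨N, hN⟩ := ih
    refine ⟨derivative N * b - (i + 1 : ℕ) * N * derivative b, ?_⟩
    have h2 := congrArg D hN
    rw [aux_D D hD, Derivation.leibniz, Derivation.leibniz_pow, aux_D D hD] at h2
    simp only [Polynomial.map_mul, Polynomial.map_sub, map_mul, map_sub, ← derivative_map,
      Polynomial.map_natCast, map_natCast]
    rw [← h2, ← hN, Function.iterate_succ_apply']
    simp only [smul_eq_mul, nsmul_eq_mul, Nat.add_sub_cancel]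
    ring

/-- Descent of constants for finite difference equations: if some nonzero `k`-linear
combination of `f, f', …, f⁽ⁿ⁾` (with `f ∈ C(X)`) is of the form `g(X+1) - g(X)` for some
`g ∈ k(X)`, then this already happens with coefficients in `C` and `h ∈ C(X)`,
where `C ⊆ k` is algebraically closed. -/
theorem descent_of_constants_finite_difference
    (k : Type*) [Field k] [CharZero k]
    (C : Subfield k) [IsAlgClosed C]
    (D : Derivation k (RatFunc k) (RatFunc k)) (hD : D RatFunc.X = 1)
    (τ : RatFunc k →ₐ[k] RatFunc k) (hτ : τ RatFunc.X = RatFunc.X + 1)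
    (CX : Subfield (RatFunc k))
    (hCX : CX = Subfield.closure
      { u : RatFunc k | ∃ p : Polynomial k, (∀ i, p.coeff i ∈ C) ∧
          u = algebraMap (Polynomial k) (RatFunc k) p })
    (f : RatFunc k) (hf : f ∈ CX)
    (n : ℕ) (lam : Fin (n + 1) → k) (hlam : ∃ i, lam i ≠ 0) (g : RatFunc k)
    (h : ∑ i : Fin (n + 1), lam i • (⇑D)^[(i : ℕ)] f = τ g - g) :
    ∃ mu : Fin (n + 1) → k, (∀ i, mu i ∈ C) ∧ (∃ i, mu i ≠ 0) ∧
      ∃ h' ∈ CX, ∑ i : Fin (n + 1), mu i • (⇑D)^[(i : ℕ)] f = τ h' - h' := by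
  classical
  subst hCX
  obtain ⟨a, b, hb, hab⟩ := aux_mem C f hf
  choose N hN using aux_iter C D hD f a b hab
  set ι := algebraMap (Polynomial k) (RatFunc k) with hι
  have hιinj : Function.Injective ι := RatFunc.algebraMap_injective k
  have hb' : ι (b.map (algebraMap C k)) ≠ 0 :=
    RatFunc.algebraMap_ne_zero
      ((Polynomial.map_ne_zero_iff (algebraMap C k).injective).2 hb)
  -- common denominator
  have hM : ∀ i : Fin (n + 1), (⇑D)^[(i : ℕ)] f * ι ((b ^ (n + 1)).map (algebraMap C k)) =
      ι ((N i * b ^ (n - i)).map (algebraMap C k)) := by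
    intro i
    have : b ^ (n + 1) = b ^ ((i : ℕ) + 1) * b ^ (n - (i : ℕ)) := by
      rw [← pow_add]; congr 1; omega
    rw [Polynomial.map_mul, map_mul, ← hN, this]
    simp only [Polynomial.map_mul, Polynomial.map_pow, map_mul, map_pow]
    ring
  set B := b ^ (n + 1) with hBdef
  have hB : B ≠ 0 := pow_ne_zero _ hb
  have hB' : ι (B.map (algebraMap C k)) ≠ 0 :=
    RatFunc.algebraMap_ne_zero
      ((Polynomial.map_ne_zero_iff (algebraMap C k).injective).2 hB)
  generalize hMd : (fun i : Fin (n + 1) => N i * b ^ (n - (i : ℕ))) = M at *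
  have hM : ∀ i : Fin (n + 1), (⇑D)^[(i : ℕ)] f * ι (B.map (algebraMap C k)) =
      ι ((M i).map (algebraMap C k)) := by
    intro i; rw [hM i, ← hMd]
  -- key equivalence
  have key : ∀ (l : Fin (n + 1) → k) (P Q : Polynomial k), Q ≠ 0 →
      ((∑ i, l i • (⇑D)^[(i : ℕ)] f = τ (ι P / ι Q) - ι P / ι Q) ↔
        (∑ i, Polynomial.C (l i) * (M i).map (algebraMap C k)) * (Q * Q.comp (Polynomial.X + 1)) =
          B.map (algebraMap C k) * (P.comp (Polynomial.X + 1) * Q -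
            P * Q.comp (Polynomial.X + 1))) := by
    intro l P Q hQ
    have hQ1 : ι Q ≠ 0 := RatFunc.algebraMap_ne_zero hQ
    have hQ2 : ι (Q.comp (Polynomial.X + 1)) ≠ 0 := by
      rw [← aux_tau τ hτ]
      exact (map_ne_zero τ).2 hQ1
    have hsum : ι (∑ i, Polynomial.C (l i) * (M i).map (algebraMap C k)) =
        (∑ i, l i • (⇑D)^[(i : ℕ)] f) * ι (B.map (algebraMap C k)) := by
      rw [map_sum, Finset.sum_mul]
      refine Finset.sum_congr rfl fun i _ => ?_
      rw [map_mul, ← hM, Algebra.smul_def, mul_assoc]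
      rfl
    rw [← hιinj.eq_iff, map_mul, hsum, map_div₀, aux_tau τ hτ, aux_tau τ hτ]
    simp only [map_mul, map_sub]
    rw [div_sub_div _ _ hQ2 hQ1, eq_div_iff (mul_ne_zero hQ2 hQ1)]
    constructor
    · intro e
      linear_combination ι (B.map (algebraMap C k)) * e
    · intro e
      apply mul_left_cancel₀ hB'
      linear_combination e
  obtain ⟨i₀, hi₀⟩ := hlam
  have hQ : g.denom ≠ 0 := g.denom_ne_zero
  have hg : g = ι g.num / ι g.denom := (RatFunc.num_div_denom g).symm
  generalize g.num = P at hg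
  generalize g.denom = Q at hg hQ
  rw [hg, key _ _ _ hQ] at h
  obtain ⟨A, hSA, ⟨φ⟩⟩ := aux_spec C
    (Set.range lam ∪ {(lam i₀)⁻¹, Q.leadingCoeff⁻¹} ∪ P.coeffs ∪ Q.coeffs)
    (((((Set.finite_range _).union (by simp)).union (Finset.finite_toSet _)).union
      (Finset.finite_toSet _)))
  have hl : ∀ i, lam i ∈ A := fun i => hSA (by simp)
  have hinv : (lam i₀)⁻¹ ∈ A := hSA (by simp)
  have hqinv : Q.leadingCoeff⁻¹ ∈ A := hSA (by simp)
  have lift : ∀ R : Polynomial k, (∀ x ∈ R.coeffs, x ∈ A) →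
      ∃ R' : Polynomial A, R'.map (algebraMap A k) = R := by
    intro R hR
    refine (Polynomial.mem_lifts _).1 ((Polynomial.lifts_iff_coeff_lifts _).2 fun i => ?_)
    by_cases h0 : R.coeff i = 0
    · exact ⟨0, by simp [h0]⟩
    · exact ⟨⟨_, hR _ (Polynomial.coeff_mem_coeffs h0)⟩, rfl⟩
  obtain ⟨P', rfl⟩ := lift P (fun x hx => hSA (by simp [hx]))
  obtain ⟨Q', rfl⟩ := lift Q (fun x hx => hSA (by simp [hx]))
  have hAinj : Function.Injective (algebraMap A k) := Subtype.val_injective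
  have hφ : (φ : A →+* C).comp (algebraMap C A) = RingHom.id C := by
    ext x; simp
  have hCA : (algebraMap A k).comp (algebraMap C A) = algebraMap C k := rfl
  let l' : Fin (n + 1) → A := fun i => ⟨lam i, hl i⟩
  have hA : (∑ i, Polynomial.C (l' i) * (M i).map (algebraMap C A)) *
      (Q' * Q'.comp (Polynomial.X + 1)) =
          B.map (algebraMap C A) * (P'.comp (Polynomial.X + 1) * Q' -
            P' * Q'.comp (Polynomial.X + 1)) := by
    apply Polynomial.map_injective _ hAinj
    simp only [Polynomial.map_mul, Polynomial.map_sub, Polynomial.map_sum, Polynomial.map_comp,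
      Polynomial.map_add, Polynomial.map_X, Polynomial.map_one, Polynomial.map_C,
      Polynomial.map_map, hCA]
    exact h
  have hk := congrArg (Polynomial.map ((algebraMap C k).comp (φ : A →+* C))) hA
  have hcomp : ((algebraMap C k).comp (φ : A →+* C)).comp (algebraMap C A) = algebraMap C k := by
    rw [RingHom.comp_assoc, hφ]; rfl
  simp only [Polynomial.map_mul, Polynomial.map_sub, Polynomial.map_sum, Polynomial.map_comp,
      Polynomial.map_add, Polynomial.map_X, Polynomial.map_one, Polynomial.map_C,
      Polynomial.map_map, hcomp] at hk
  have unit : ∀ x : A, (x : k) ≠ 0 → (x : k)⁻¹ ∈ A → φ x ≠ 0 := by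
    intro x hx hx' h0
    have : x * ⟨_, hx'⟩ = 1 := Subtype.ext (mul_inv_cancel₀ hx)
    have h1 := congrArg φ this
    rw [map_mul, h0, zero_mul, map_one] at h1
    exact zero_ne_one h1
  have hQne : Q'.map ((algebraMap C k).comp (φ : A →+* C)) ≠ 0 := by
    intro h0
    have h1 := congrArg (fun p => Polynomial.coeff p Q'.natDegree) h0
    simp only [Polynomial.coeff_map, Polynomial.coeff_zero, RingHom.comp_apply] at h1
    have hlc : (Q'.map (algebraMap A k)).leadingCoeff = (Q'.leadingCoeff : k) :=
      Polynomial.leadingCoeff_map_of_injective hAinj _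
    refine unit Q'.leadingCoeff ?_ ?_ ((map_eq_zero (algebraMap C k)).1 h1)
    · rw [← hlc]; exact Polynomial.leadingCoeff_ne_zero.2 hQ
    · rw [← hlc]; exact hqinv
  refine ⟨fun i => (φ (l' i) : k), fun i => (φ (l' i)).2, ⟨i₀, ?_⟩, _, ?_,
    (key _ _ _ hQne).2 hk⟩
  · intro h0
    exact unit (l' i₀) hi₀ hinv (Subtype.ext h0)
  · refine div_mem (Subfield.subset_closure ⟨_, ?_, rfl⟩) (Subfield.subset_closure ⟨_, ?_, rfl⟩)
    · intro i; rw [Polynomial.coeff_map]; exact (φ _).2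
    · intro i; rw [Polynomial.coeff_map]; exact (φ _).2
end

section
/- Let F be a field of characteristic zero, τ : F → F a ring homomorphism with fixed field k := F^τ, and ∂ : F → F a derivation with ∂ ∘ τ = τ ∘ ∂. Let x ∈ F be transcendental over k with τ(x) = x + 1 and ∂(x) = 1, and let K := k(x) ⊆ F be the subfield generated by k and x. Let C ⊆ k be an algebraically closed subfield with ∂(c) = 0 for all c ∈ C. Let f ∈ C(x) ⊆ K be a nonzero rational function in x with coefficients in C, and let z ∈ F satisfy τ(z) = z + f. If for every n ≥ 0, every λ₀, …, λₙ ∈ C not all zero, and every g ∈ C(x) one has λ₀f + λ₁∂(f) + ⋯ + λₙ∂ⁿ(f) ≠ τ(g) − g, then z is differentially transcendental over K, i.e. for every n ≥ 0 the elements z, ∂(z), …, ∂ⁿ(z) are algebraically independent over K. -/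
set_option synthInstance.maxHeartbeats 400000
set_option maxHeartbeats 1000000


open MvPolynomial in
theorem aux_T {K : Type*} [Field K] {n : ℕ} (m : MonomialOrder (Fin n)) (f : Fin n → K)
    (s : Fin n →₀ ℕ) :
    m.degree (∏ i, (X i + C (f i) : MvPolynomial (Fin n) K) ^ s i) = s ∧
    coeff s (∏ i, (X i + C (f i) : MvPolynomial (Fin n) K) ^ s i) = 1 := by
  have hm : ∀ i, m.Monic (X i + C (f i) : MvPolynomial (Fin n) K) := fun i => m.monic_X_add_C i _
  have hM : m.Monic (∏ i, (X i + C (f i) : MvPolynomial (Fin n) K) ^ s i) :=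
    MonomialOrder.Monic.prod (fun i _ => (hm i).pow)
  have hd : m.degree (∏ i, (X i + C (f i) : MvPolynomial (Fin n) K) ^ s i) = s := by
    rw [MonomialOrder.degree_prod (fun i _ => pow_ne_zero _ (hm i).ne_zero)]
    simp only [MonomialOrder.degree_pow, MonomialOrder.degree_X_add_C]
    ext j
    simp [Finsupp.single_apply]
  refine ⟨hd, ?_⟩
  have := hM.coeff_degree
  rwa [hd] at this

open MvPolynomial in
theorem aux_inv {K F : Type*} [Field K] [Field F] [Algebra K F] (σ : K →+* K) (τ : F →+* F)
    (hστ : ∀ a, τ (algebraMap K F a) = algebraMap K F (σ a)) {n : ℕ} (z : Fin n → F)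
    (f : Fin n → K) (hz : ∀ i, τ (z i) = z i + algebraMap K F (f i))
    (h : ¬ AlgebraicIndependent K z) :
    ∃ P : MvPolynomial (Fin n) K, P.totalDegree ≠ 0 ∧
      eval₂Hom (C.comp σ) (fun i => X i + C (f i)) P = P := by
  classical
  set S := eval₂Hom ((C : K →+* MvPolynomial (Fin n) K).comp σ) (fun i => X i + C (f i)) with hS
  have hSz : ∀ P, aeval z (S P) = τ (aeval z P) := by
    intro P
    induction P using MvPolynomial.induction_on with
    | C a => simp [hS, hστ]
    | add p q hp hq => simp [hp, hq]
    | mul_X p i hp =>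
      have hSX : S (X i) = X i + C (f i) := by simp [hS]
      rw [map_mul, map_mul, hp, hSX, map_mul, map_mul, map_add, aeval_X, hz, aeval_C]
  let m : MonomialOrder (Fin n) := MonomialOrder.lex
  have hex : ∃ d : m.syn, ∃ P : MvPolynomial (Fin n) K, P ≠ 0 ∧ aeval z P = 0 ∧
      m.toSyn (m.degree P) = d := by
    rw [algebraicIndependent_iff] at h
    push Not at h
    obtain ⟨P, h1, h2⟩ := h
    exact ⟨_, P, h2, h1, rfl⟩
  obtain ⟨d, ⟨P₀, hP₀, hzP₀, rfl⟩, hmin⟩ :=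
    WellFounded.has_min (wellFounded_lt (α := m.syn)) {d | ∃ P : MvPolynomial (Fin n) K, P ≠ 0 ∧ aeval z P = 0 ∧
      m.toSyn (m.degree P) = d} hex
  set s := m.degree P₀ with hs
  have hc0 : coeff s P₀ ≠ 0 := MonomialOrder.coeff_degree_ne_zero_iff.2 hP₀
  set P := C (coeff s P₀)⁻¹ * P₀ with hP
  have hP1 : coeff s P = 1 := by rw [hP, coeff_C_mul, inv_mul_cancel₀ hc0]
  have hPt : ∀ t, m.toSyn s < m.toSyn t → coeff t P = 0 := by
    intro t ht
    rw [hP, coeff_C_mul, MonomialOrder.coeff_eq_zero_of_lt ht, mul_zero]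
  have hPz : aeval z P = 0 := by simp [hP, hzP₀]
  have hPne : P ≠ 0 := by
    rintro h0; rw [h0] at hP1; simp at hP1
  have hcoeff : ∀ t, coeff t (S P) = ∑ u ∈ P.support, σ (coeff u P) *
      coeff t (∏ i, (X i + C (f i) : MvPolynomial (Fin n) K) ^ u i) := by
    intro t
    rw [hS, coe_eval₂Hom, eval₂_eq', coeff_sum]
    refine Finset.sum_congr rfl fun u _ => ?_
    rw [RingHom.comp_apply, coeff_C_mul]
  have hle : ∀ u ∈ P.support, m.toSyn u ≤ m.toSyn s := by
    intro u hu
    by_contra hlt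
    exact (mem_support_iff.1 hu) (hPt u (not_le.1 hlt))
  have hSt : ∀ t, m.toSyn s ≤ m.toSyn t → coeff t (S P - P) = 0 := by
    intro t ht
    rw [coeff_sub, hcoeff]
    rcases eq_or_lt_of_le ht with ht | ht
    · have hts : t = s := (m.toSyn.injective ht).symm
      subst hts
      rw [Finset.sum_eq_single s]
      · rw [(aux_T m f s).2, hP1]; simp
      · intro u hu hus
        rw [MonomialOrder.coeff_eq_zero_of_lt (m := m) (f := ∏ i, (X i + C (f i)) ^ u i), mul_zero]
        rw [(aux_T m f u).1]
        exact lt_of_le_of_ne (hle u hu) (fun h => hus (m.toSyn.injective h))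
      · intro hns
        exact absurd hP1 (by rw [notMem_support_iff.1 hns]; simp)
    · rw [hPt t ht, sub_zero]
      refine Finset.sum_eq_zero fun u hu => ?_
      rw [MonomialOrder.coeff_eq_zero_of_lt (m := m) (f := ∏ i, (X i + C (f i)) ^ u i), mul_zero]
      rw [(aux_T m f u).1]
      exact lt_of_le_of_lt (hle u hu) ht
  refine ⟨P, ?_, ?_⟩
  · intro hd
    rw [totalDegree_eq_zero_iff_eq_C] at hd
    rw [hd] at hPz hPne
    simp at hPz
    exact hPne (by rw [hPz]; simp)
  · by_contra hne
    have hne' : S P - P ≠ 0 := sub_ne_zero.2 hne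
    refine hmin _ ⟨S P - P, hne', by rw [map_sub, hSz, hPz]; simp, rfl⟩ ?_
    by_contra hlt
    exact MonomialOrder.coeff_degree_ne_zero_iff.2 hne' (hSt _ (not_lt.1 hlt))

open MvPolynomial in
theorem aux_const {K : Type*} [Field K] [CharZero K] {n : ℕ} (P : MvPolynomial (Fin n) K)
    (h : ∀ i, pderiv i P = 0) : P = C (coeff 0 P) := by
  classical
  ext s
  rw [coeff_C]
  split_ifs with hs
  · rw [hs]
  · have : ∃ i, s i ≠ 0 := by
      by_contra hc
      push Not at hc
      exact hs (by ext i; simp [hc])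
    obtain ⟨i, hi⟩ := this
    have h1 := congrArg (coeff (s - Finsupp.single i 1)) (h i)
    rw [coeff_pderiv] at h1
    have h2 : s - Finsupp.single i 1 + Finsupp.single i 1 = s := by
      apply tsub_add_cancel_of_le
      simpa using Nat.one_le_iff_ne_zero.2 hi
    rw [h2, coeff_zero] at h1
    rcases mul_eq_zero.1 h1 with h3 | h3
    · exact h3
    · exfalso
      exact Nat.cast_add_one_ne_zero _ h3

open MvPolynomial in
theorem aux_step1 {K F : Type*} [Field K] [CharZero K] [Field F] [Algebra K F] (σ : K →+* K) (τ : F →+* F)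
    (hστ : ∀ a, τ (algebraMap K F a) = algebraMap K F (σ a)) {n : ℕ} (z : Fin n → F)
    (f : Fin n → K) (hz : ∀ i, τ (z i) = z i + algebraMap K F (f i))
    (h : ¬ AlgebraicIndependent K z) :
    ∃ (c : Fin n → K) (b : K), (∀ i, σ (c i) = c i) ∧ (∃ i, c i ≠ 0) ∧
      ∑ i, c i * f i = σ b - b := by
  classical
  have hex := aux_inv σ τ hστ z f hz h
  set S := eval₂Hom ((C : K →+* MvPolynomial (Fin n) K).comp σ) (fun i => X i + C (f i)) with hS
  have hSC : ∀ a, S (C a) = C (σ a) := by intro a; simp [hS]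
  have hSX : ∀ i, S (X i) = X i + C (f i) := by intro a; simp [hS]
  have hpd : ∀ i P, pderiv i (S P) = S (pderiv i P) := by
    intro i P
    induction P using MvPolynomial.induction_on with
    | C a => simp [hSC]
    | add p q hp hq => simp [hp, hq]
    | mul_X p j hp =>
      simp only [map_mul, hSX, Derivation.leibniz, hp, map_add, smul_eq_mul, pderiv_C, add_zero,
        pderiv_X]
      by_cases hij : j = i
      · subst hij; simp
      · simp [Pi.single_apply, hij]
  have hex2 : ∃ d, ∃ P : MvPolynomial (Fin n) K, P.totalDegree ≠ 0 ∧ S P = P ∧ P.totalDegree = d := by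
    obtain ⟨P, h1, h2⟩ := hex
    exact ⟨_, P, h1, h2, rfl⟩
  obtain ⟨P, hP0, hSP, hPd⟩ := Nat.find_spec hex2
  have hmin := fun d (hd : d < Nat.find hex2) => Nat.find_min hex2 hd
  rw [← hPd] at hmin
  have hdeg : ∀ i, (pderiv i P).totalDegree < P.totalDegree := by
    intro i
    rw [totalDegree, Finset.sup_lt_iff (by simpa using Nat.pos_of_ne_zero hP0)]
    intro s hs
    rw [mem_support_iff, coeff_pderiv] at hs
    have := le_totalDegree (mem_support_iff.2 (left_ne_zero_of_mul hs))
    have e : ((s + Finsupp.single i 1).sum fun _ e => e) = (s.sum fun _ e => e) + 1 := by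
      rw [Finsupp.sum_add_index'] <;> simp
    omega
  have hc : ∀ i, ∃ c : K, pderiv i P = C c := by
    intro i
    have : (pderiv i P).totalDegree = 0 := by
      by_contra hne
      exact hmin _ (hdeg i) ⟨_, hne, by rw [← hpd, hSP], rfl⟩
    exact ⟨_, totalDegree_eq_zero_iff_eq_C.1 this⟩
  choose c hc using hc
  have hPform : ∃ b, P = ∑ i, C (c i) * X i + C b := by
    refine ⟨_, sub_eq_iff_eq_add'.1 (aux_const (P - ∑ i, C (c i) * X i) ?_)⟩
    intro i
    rw [map_sub, hc, map_sum, Finset.sum_eq_single i]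
    · simp
    · intro j _ hj; simp [pderiv_X, Pi.single_apply, hj]
    · simp
  obtain ⟨b, hb⟩ := hPform
  have hfix : ∀ i, σ (c i) = c i := by
    intro i
    have := hpd i P
    rw [hSP, hc, hSC] at this
    exact (C_injective _ _ this).symm
  refine ⟨c, -b, hfix, ?_, ?_⟩
  · by_contra hall
    push Not at hall
    apply hP0
    rw [hb]; simp [hall]
  · rw [hb] at hSP
    simp only [map_add, map_sum, map_mul, hSC, hSX, hfix, mul_add, Finset.sum_add_distrib] at hSP
    have h2 : C (∑ i, c i * f i) = (C (σ (-b) - -b) : MvPolynomial (Fin n) K) := by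
      simp only [map_sum, map_mul, map_sub, map_neg]
      linear_combination hSP
    exact C_injective _ _ h2

open Polynomial in
theorem aux_frac {F : Type*} [Field F] (L : Subfield F) (x : F) (u : F)
    (hu : u ∈ Subfield.closure ((L : Set F) ∪ {x})) :
    ∃ P Q : L[X], aeval x Q ≠ 0 ∧ aeval x Q * u = aeval x P := by
  induction hu using Subfield.closure_induction with
  | mem a ha =>
    rcases ha with ha | ha
    · exact ⟨C ⟨a, ha⟩, 1, by simp, by simp; rfl⟩
    · rw [Set.mem_singleton_iff] at ha
      exact ⟨X, 1, by simp, by simp [ha]⟩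
  | one => exact ⟨1, 1, by simp, by simp⟩
  | add a b _ _ ha hb =>
    obtain ⟨P, Q, h1, h2⟩ := ha
    obtain ⟨P', Q', h1', h2'⟩ := hb
    refine ⟨P * Q' + P' * Q, Q * Q', by simp [h1, h1'], ?_⟩
    simp only [map_mul, map_add]
    rw [← h2, ← h2']; ring
  | neg a _ ha =>
    obtain ⟨P, Q, h1, h2⟩ := ha
    exact ⟨-P, Q, h1, by rw [map_neg, ← h2]; ring⟩
  | inv a _ ha =>
    obtain ⟨P, Q, h1, h2⟩ := ha
    by_cases h0 : a = 0
    · exact ⟨0, 1, by simp, by simp [h0]⟩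
    · refine ⟨Q, P, by rw [← h2]; exact mul_ne_zero h1 h0, ?_⟩
      rw [← h2]; field_simp
  | mul a b _ _ ha hb =>
    obtain ⟨P, Q, h1, h2⟩ := ha
    obtain ⟨P', Q', h1', h2'⟩ := hb
    refine ⟨P * P', Q * Q', by simp [h1, h1'], ?_⟩
    simp only [map_mul]
    rw [← h2, ← h2']; ring

/-- `τ` preserves `L(x)` -/
theorem aux_stable {F : Type*} [Field F] (τ : F →+* F) (L : Subfield F) (x : F)
    (hL : ∀ a ∈ L, τ a = a) (hx : τ x = x + 1) (u : F)
    (hu : u ∈ Subfield.closure ((L : Set F) ∪ {x})) :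
    τ u ∈ Subfield.closure ((L : Set F) ∪ {x}) := by
  induction hu using Subfield.closure_induction with
  | mem a ha =>
    rcases ha with ha | ha
    · rw [hL a ha]; exact Subfield.subset_closure (Or.inl ha)
    · rw [Set.mem_singleton_iff] at ha
      rw [ha, hx]
      exact add_mem (Subfield.subset_closure (Or.inr rfl)) (one_mem _)
  | one => rw [map_one]; exact one_mem _
  | add a b _ _ ha hb => rw [map_add]; exact add_mem ha hb
  | neg a _ ha => rw [map_neg]; exact neg_mem ha
  | inv a _ ha => rw [map_inv₀]; exact inv_mem ha
  | mul a b _ _ ha hb => rw [map_mul]; exact mul_mem ha hb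

theorem aux_del {F : Type*} [Field F] (del : F → F)
    (hdeladd : ∀ a b : F, del (a + b) = del a + del b)
    (hdelmul : ∀ a b : F, del (a * b) = a * del b + del a * b) (L : Subfield F) (x : F)
    (hL : ∀ a ∈ L, del a = 0) (hx : del x = 1) (u : F)
    (hu : u ∈ Subfield.closure ((L : Set F) ∪ {x})) :
    del u ∈ Subfield.closure ((L : Set F) ∪ {x}) := by
  have h1 : del 1 = 0 := hL 1 (one_mem _)
  have h0 : del 0 = 0 := hL 0 (zero_mem _)
  induction hu using Subfield.closure_induction with
  | mem a ha =>
    rcases ha with ha | ha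
    · rw [hL a ha]; exact zero_mem _
    · rw [Set.mem_singleton_iff] at ha
      rw [ha, hx]
      exact one_mem _
  | one => rw [h1]; exact zero_mem _
  | add a b _ _ ha hb => rw [hdeladd]; exact add_mem ha hb
  | neg a _ ha =>
    have : del (-a) = - del a := by
      have := hdeladd a (-a)
      rw [add_neg_cancel, h0] at this
      linear_combination -this
    rw [this]; exact neg_mem ha
  | inv a hm ha =>
    by_cases ha0 : a = 0
    · rw [ha0, inv_zero, h0]; exact zero_mem _
    · have : del (a⁻¹) = - (del a * a⁻¹ * a⁻¹) := by
        have := hdelmul a a⁻¹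
        rw [mul_inv_cancel₀ ha0, h1] at this
        field_simp at this ⊢
        linear_combination -this
      rw [this]
      exact neg_mem (mul_mem (mul_mem ha (inv_mem hm)) (inv_mem hm))
  | mul a b ha' hb' ha hb =>
    rw [hdelmul]; exact add_mem (mul_mem ha' hb) (mul_mem ha hb')

/-- linear disjointness of `k` and `C(x)` over `C` -/
theorem aux_disj {F : Type*} [Field F] (k C : Subfield F) (hCk : (C : Set F) ⊆ k) (x : F)
    (hx : Transcendental k x) (φ : F →ₗ[C] C) {ι : Type*} [Fintype ι] (a u : ι → F)
    (ha : ∀ i, a i ∈ k) (hu : ∀ i, u i ∈ Subfield.closure ((C : Set F) ∪ {x}))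
    (h : ∑ i, a i * u i = 0) : ∑ i, (φ (a i) : F) * u i = 0 := by
  classical
  choose P Q hQ hPQ using fun i => aux_frac C x (u i) (hu i)
  let D : F := ∏ i, Polynomial.aeval x (Q i)
  have hD : D ≠ 0 := Finset.prod_ne_zero_iff.2 fun i _ => hQ i
  let R : ι → Polynomial C := fun i => P i * ∏ j ∈ Finset.univ.erase i, Q j
  have hR : ∀ i, Polynomial.aeval x (R i) = D * u i := by
    intro i
    simp only [R, D, map_mul, map_prod]
    rw [← hPQ, ← Finset.mul_prod_erase Finset.univ _ (Finset.mem_univ i)]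
    ring
  let ic : C →+* k := Subfield.inclusion hCk
  let S : Polynomial k := ∑ i, Polynomial.C ⟨a i, ha i⟩ * (R i).map ic
  have hmap : ∀ p : Polynomial C, Polynomial.aeval x (p.map ic) = Polynomial.aeval x p := by
    intro p
    rw [Polynomial.aeval_def, Polynomial.aeval_def, Polynomial.eval₂_map]
    rfl
  have hS0 : Polynomial.aeval x S = 0 := by
    simp only [S, map_sum, map_mul, hmap, hR, Polynomial.aeval_C]
    calc _ = D * ∑ i, a i * u i := by
          rw [Finset.mul_sum]
          refine Finset.sum_congr rfl fun i _ => ?_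
          change a i * _ = _
          ring
      _ = 0 := by rw [h, mul_zero]
  have hS : S = 0 := by
    by_contra hne
    exact hx ⟨S, hne, hS0⟩
  have hco : ∀ m, ∑ i, (R i).coeff m * φ (a i) = 0 := by
    intro m
    have h1 := congrArg (fun p : Polynomial k => ((p.coeff m : k) : F)) hS
    simp only [S, Polynomial.finsetSum_coeff, Polynomial.coeff_C_mul, Polynomial.coeff_map,
      Polynomial.coeff_zero] at h1
    have h2 : ∑ i, (R i).coeff m • a i = 0 := by
      rw [← ZeroMemClass.coe_zero k, ← h1]
      push_cast
      refine Finset.sum_congr rfl fun i _ => ?_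
      rw [mul_comm]; rfl
    have h3 := congrArg φ h2
    simpa only [map_sum, map_smul, smul_eq_mul, map_zero] using h3
  have hpoly : ∑ i, Polynomial.C (φ (a i)) * R i = 0 := by
    ext m
    simp only [Polynomial.finsetSum_coeff, Polynomial.coeff_C_mul, Polynomial.coeff_zero]
    rw [← hco m]
    congr 1
    exact Finset.sum_congr rfl fun i _ => mul_comm _ _
  have hfin := congrArg (Polynomial.aeval x) hpoly
  simp only [map_sum, map_mul, hR, Polynomial.aeval_C, map_zero] at hfin
  have : D * ∑ i, (φ (a i) : F) * u i = 0 := by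
    rw [← hfin, Finset.mul_sum]
    refine Finset.sum_congr rfl fun i _ => ?_
    change _ = (φ (a i) : F) * _
    ring
  exact (mul_eq_zero.1 this).resolve_left hD

theorem aux_periodic {k : Type*} [Field k] [CharZero k] (q : Polynomial k)
    (h : q.comp (Polynomial.X + 1) = q) : q = Polynomial.C (q.eval 0) := by
  have h1 : ∀ n : ℕ, q.eval (n : k) = q.eval 0 := by
    intro n
    induction n with
    | zero => simp
    | succ n ih =>
      rw [← ih]
      conv_rhs => rw [← h]
      simp
  apply Polynomial.eq_of_infinite_eval_eq
  refine Set.Infinite.mono (s := Set.range (fun n : ℕ => (n : k))) ?_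
    (Set.infinite_range_of_injective Nat.cast_injective)
  rintro _ ⟨n, rfl⟩
  simp [h1]

/-- if `τ g - g` lies in the `k`-span of `C(x)`, so does `g ∈ k(x)`. -/
theorem aux_denom {F : Type*} [Field F] [CharZero F] (τ : F →+* F) (k C : Subfield F)
    (hk : ∀ a ∈ k, τ a = a) (hCk : (C : Set F) ⊆ k) (x : F)
    (hτx : τ x = x + 1) (g : F) (hg : g ∈ Subfield.closure ((k : Set F) ∪ {x}))
    (h : τ g - g ∈ Submodule.span k (Subfield.closure ((C : Set F) ∪ {x}) : Set F)) :
    g ∈ Submodule.span k (Subfield.closure ((C : Set F) ∪ {x}) : Set F) := by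
  set M := Submodule.span k (Subfield.closure ((C : Set F) ∪ {x}) : Set F) with hM
  have hxM : ∀ r ∈ M, x * r ∈ M := by
    intro r hr
    induction hr using Submodule.span_induction with
    | mem a ha =>
      exact Submodule.subset_span (mul_mem (Subfield.subset_closure (Or.inr rfl)) ha)
    | zero => rw [mul_zero]; exact zero_mem _
    | add a b _ _ ha hb => rw [mul_add]; exact add_mem ha hb
    | smul c a _ ha => rw [mul_smul_comm]; exact Submodule.smul_mem _ _ ha
  have hτM : ∀ r ∈ M, τ r ∈ M := by
    intro r hr
    induction hr using Submodule.span_induction with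
    | mem a ha =>
      exact Submodule.subset_span (aux_stable τ C x (fun a ha => hk a (hCk ha)) hτx a ha)
    | zero => rw [map_zero]; exact zero_mem _
    | add a b _ _ ha hb => rw [map_add]; exact add_mem ha hb
    | smul c a _ ha =>
      have : τ (c • a) = c • τ a := by
        change τ ((c : F) * a) = (c : F) * τ a
        rw [map_mul, hk _ c.2]
      rw [this]; exact Submodule.smul_mem _ _ ha
  have hpM : ∀ (p : Polynomial k), ∀ r ∈ M, Polynomial.aeval x p * r ∈ M := by
    intro p
    induction p using Polynomial.induction_on' with
    | add p q hp hq => intro r hr; rw [map_add, add_mul]; exact add_mem (hp r hr) (hq r hr)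
    | monomial n a =>
      intro r hr
      rw [Polynomial.aeval_monomial, mul_assoc, ← Algebra.smul_def]
      apply Submodule.smul_mem
      induction n with
      | zero => simpa using hr
      | succ n ih => rw [pow_succ', mul_assoc]; exact hxM _ ih
  have hτp : ∀ p : Polynomial k, τ (Polynomial.aeval x p) =
      Polynomial.aeval x (p.comp (Polynomial.X + 1)) := by
    intro p
    induction p using Polynomial.induction_on' with
    | add p q hp hq => simp [hp, hq]
    | monomial n a =>
      have : τ (algebraMap k F a) = algebraMap k F a := hk _ a.2
      simp [Polynomial.aeval_monomial, this, hτx]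
  have hJ : ∀ p : Polynomial k, Polynomial.aeval x p * g ∈ M →
      Polynomial.aeval x (p.comp (Polynomial.X + 1)) * g ∈ M := by
    intro p hp
    have h1 := hτM _ hp
    rw [map_mul, hτp] at h1
    have h2 := hpM (p.comp (Polynomial.X + 1)) _ h
    have := sub_mem h1 h2
    rwa [← mul_sub, sub_sub_cancel] at this
  classical
  have hex : ∃ d, ∃ q : Polynomial k, q ≠ 0 ∧ Polynomial.aeval x q * g ∈ M ∧ q.natDegree = d := by
    obtain ⟨P, Q, hQ, hPQ⟩ := aux_frac k x g hg
    refine ⟨_, Q, ?_, ?_, rfl⟩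
    · rintro rfl; simp at hQ
    · rw [hPQ, ← mul_one (Polynomial.aeval x P)]
      exact hpM _ _ (Submodule.subset_span (one_mem _))
  obtain ⟨q, hq0, hqM, hqd⟩ := Nat.find_spec hex
  have hmin := fun d (hd : d < Nat.find hex) => Nat.find_min hex hd
  rw [← hqd] at hmin
  have hper : q.comp (Polynomial.X + 1) = q := by
    by_contra hne
    have hne' : q.comp (Polynomial.X + 1) - q ≠ 0 := sub_ne_zero.2 hne
    have e1 : (Polynomial.X + 1 : Polynomial k) = Polynomial.X + Polynomial.C 1 := by simp
    have hnd : (Polynomial.X + 1 : Polynomial k).natDegree = 1 := by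
      rw [e1, Polynomial.natDegree_X_add_C]
    have hdeg : (q.comp (Polynomial.X + 1)).degree = q.degree := by
      have hc0 : q.comp (Polynomial.X + 1) ≠ 0 := by
        intro h0
        rw [Polynomial.comp_eq_zero_iff] at h0
        rcases h0 with h0 | ⟨_, h0⟩
        · exact hq0 h0
        · rw [h0, Polynomial.natDegree_C] at hnd; omega
      rw [Polynomial.degree_eq_natDegree hc0, Polynomial.degree_eq_natDegree hq0,
        Polynomial.natDegree_comp, hnd, mul_one]
    have hlt : (q.comp (Polynomial.X + 1) - q).degree < q.degree := by
      rw [← hdeg]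
      refine Polynomial.degree_sub_lt_left hdeg ?_ ?_
      · rintro h0; rw [h0, Polynomial.degree_zero] at hdeg
        exact hq0 (Polynomial.degree_eq_bot.1 hdeg.symm)
      · rw [Polynomial.leadingCoeff_comp (by omega), e1, Polynomial.leadingCoeff_X_add_C]; simp
    refine hmin _ (Polynomial.natDegree_lt_natDegree hne' hlt) ⟨_, hne', ?_, rfl⟩
    rw [map_sub, sub_mul]
    exact sub_mem (hJ q hqM) hqM
  have hconst := aux_periodic q hper
  have hc : q.eval 0 ≠ 0 := by
    intro h0; rw [h0, map_zero] at hconst; exact hq0 hconst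
  rw [hconst, Polynomial.aeval_C, ← Algebra.smul_def] at hqM
  exact (Submodule.smul_mem_iff _ hc).1 hqM

/-- Criterion for differential transcendence of solutions of `τ(z) = z + f`, `f ∈ C(x)`,
over `K = k(x)`, where `τ(x) = x + 1`: if no nonzero `C`-linear combination of the
derivatives of `f` is of the form `τ(g) - g` with `g ∈ C(x)`, then `z` is differentially
transcendental over `K`. -/
theorem differential_transcendence_criterion_finite_difference
    (F : Type*) [Field F] [CharZero F] (τ : F →+* F)
    (k : Subfield F) (hk : ∀ a : F, a ∈ k ↔ τ a = a)
    (del : F → F)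
    (hdeladd : ∀ a b : F, del (a + b) = del a + del b)
    (hdelmul : ∀ a b : F, del (a * b) = a * del b + del a * b)
    (hdelτ : ∀ a : F, del (τ a) = τ (del a))
    (x : F) (hxtr : Transcendental k x) (hτx : τ x = x + 1) (hdelx : del x = 1)
    (K : Subfield F) (hK : K = Subfield.closure ((k : Set F) ∪ {x}))
    (C : Subfield F) (hCk : (C : Set F) ⊆ (k : Set F)) [IsAlgClosed C]
    (hdelC : ∀ c ∈ C, del c = 0)
    (Cx : Subfield F) (hCx : Cx = Subfield.closure ((C : Set F) ∪ {x}))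
    (f : F) (hf : f ∈ Cx) (hf0 : f ≠ 0)
    (z : F) (hz : τ z = z + f)
    (H : ∀ (n : ℕ) (lam : Fin (n + 1) → F), (∀ i, lam i ∈ C) → (∃ i, lam i ≠ 0) →
      ∀ g ∈ Cx, ∑ i : Fin (n + 1), lam i * del^[(i : ℕ)] f ≠ τ g - g) :
    ∀ n : ℕ, AlgebraicIndependent K (fun i : Fin (n + 1) => del^[(i : ℕ)] z) := by
  intro n
  by_contra hnot
  have hkfix : ∀ a ∈ k, τ a = a := fun a ha => (hk a).1 ha
  have hCfix : ∀ a ∈ C, τ a = a := fun a ha => hkfix a (hCk ha)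
  have hKτ : ∀ a ∈ K, τ a ∈ K := by
    subst hK; exact fun a ha => aux_stable τ k x hkfix hτx a ha
  have hCxK : ∀ a ∈ Cx, a ∈ K := by
    subst hK hCx
    exact fun a ha => Subfield.closure_mono (Set.union_subset_union_left _ hCk) ha
  have hfi : ∀ i : ℕ, del^[i] f ∈ Cx := by
    intro i
    induction i with
    | zero => exact hf
    | succ i ih =>
      rw [Function.iterate_succ_apply']
      subst hCx
      exact aux_del del hdeladd hdelmul C x hdelC hdelx _ ih
  have hzi : ∀ i : ℕ, τ (del^[i] z) = del^[i] z + del^[i] f := by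
    intro i
    induction i with
    | zero => exact hz
    | succ i ih =>
      simp only [Function.iterate_succ_apply']
      rw [← hdelτ, ih, hdeladd]
  let σ : K →+* K := (τ.comp K.subtype).codRestrict K (fun a => hKτ a a.2)
  obtain ⟨c, b, hcfix, ⟨i₀, hi₀⟩, hsum⟩ := aux_step1 (K := K) (F := F) σ τ (fun a => rfl)
    (fun i : Fin (n + 1) => del^[(i : ℕ)] z)
    (fun i => ⟨del^[(i : ℕ)] f, hCxK _ (hfi i)⟩) (fun i => hzi i) hnot
  have hck : ∀ i, (c i : F) ∈ k := fun i => (hk _).2 (congrArg Subtype.val (hcfix i))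
  have hsumF : ∑ i, (c i : F) * del^[(i : ℕ)] f = τ b - b := by
    have := congrArg (K.subtype) hsum
    simp only [map_sum, map_mul, map_sub] at this
    exact this
  have hbK : (b : F) ∈ Subfield.closure ((k : Set F) ∪ {x}) := hK ▸ b.2
  have hbM : (b : F) ∈ Submodule.span k (Subfield.closure ((C : Set F) ∪ {x}) : Set F) := by
    refine aux_denom τ k C hkfix hCk x hτx b hbK ?_
    rw [← hsumF]
    refine Submodule.sum_mem _ fun i _ => ?_
    exact Submodule.smul_mem _ (⟨c i, hck i⟩ : k) (Submodule.subset_span (hCx ▸ hfi i))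
  rw [← hCx] at hbM
  obtain ⟨m, κ, g, hg⟩ := Submodule.mem_span_set'.1 hbM
  have hci : (c i₀ : F) ≠ 0 := fun h => hi₀ (Subtype.ext h)
  obtain ⟨φ, hφ⟩ := Module.exists_dual_forall_apply_ne_zero (K := C) (M := F)
    (fun _ : Unit => (c i₀ : F)) (fun _ => hci)
  have hdisj := aux_disj k C hCk x hxtr φ (ι := Fin (n + 1) ⊕ Fin m)
    (Sum.elim (fun i => (c i : F)) (fun j => -(κ j : F)))
    (Sum.elim (fun i => del^[(i : ℕ)] f) (fun j => τ (g j) - g j))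
    (by rintro (i | j)
        · exact hck i
        · exact neg_mem (κ j).2)
    (by rw [← hCx]
        rintro (i | j)
        · exact hfi i
        · refine sub_mem ?_ (g j).2
          have := (g j).2
          subst hCx
          exact aux_stable τ C x hCfix hτx _ this)
    (by
      rw [Fintype.sum_sum_type]
      simp only [Sum.elim_inl, Sum.elim_inr]
      rw [hsumF, ← hg, map_sum, ← Finset.sum_sub_distrib, ← Finset.sum_add_distrib]
      refine Finset.sum_eq_zero fun j _ => ?_
      change τ ((κ j : F) * g j) - (κ j : F) * g j + _ = 0
      rw [map_mul, hkfix _ (κ j).2]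
      ring)
  rw [Fintype.sum_sum_type] at hdisj
  simp only [Sum.elim_inl, Sum.elim_inr] at hdisj
  refine H n (fun i => (φ (c i) : F)) (fun i => (φ (c i)).2)
    ⟨i₀, fun h => hφ () (Subtype.ext h)⟩ (∑ j, (φ (κ j) : F) * g j)
    (sum_mem fun j _ => ?_) ?_
  · refine mul_mem ?_ (g j).2
    rw [hCx]
    exact Subfield.subset_closure (Or.inl (φ (κ j)).2)
  · rw [eq_neg_of_add_eq_zero_left hdisj, map_sum, ← Finset.sum_sub_distrib,
      ← Finset.sum_neg_distrib]
    refine Finset.sum_congr rfl fun j _ => ?_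
    rw [map_mul, hCfix _ (φ (κ j)).2, map_neg]
    push_cast
    ring
end

section
/- In the field ℂ(X) of rational functions over ℂ with standard derivation D = d/dX, for every n ≥ 0, every λ₀, …, λₙ ∈ ℂ not all zero, and every g ∈ ℂ(X), one has λ₀·(1/X) + λ₁·D(1/X) + ⋯ + λₙ·Dⁿ(1/X) ≠ σ(g) − g, where σ : ℂ(X) → ℂ(X) is the ℂ-algebra automorphism determined by X ↦ X + 1. -/
set_option synthInstance.maxHeartbeats 400000
set_option maxHeartbeats 1000000

/-- `f` is regular at `a`. -/
def RegAt (a : ℂ) (f : RatFunc ℂ) : Prop :=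
  ∃ p q : Polynomial ℂ, q.eval a ≠ 0 ∧
    f * algebraMap (Polynomial ℂ) (RatFunc ℂ) q = algebraMap (Polynomial ℂ) (RatFunc ℂ) p

theorem RegAt.sub {a : ℂ} {f g : RatFunc ℂ} (hf : RegAt a f) (hg : RegAt a g) :
    RegAt a (f - g) := by
  obtain ⟨p, q, hq, h⟩ := hf
  obtain ⟨p', q', hq', h'⟩ := hg
  refine ⟨p * q' - p' * q, q * q', by simp [hq, hq'], ?_⟩
  simp only [map_mul, map_sub, ← h, ← h']
  ring

theorem sigma_poly (σ : RatFunc ℂ →ₐ[ℂ] RatFunc ℂ) (hσ : σ RatFunc.X = RatFunc.X + 1)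
    (p : Polynomial ℂ) : σ (algebraMap (Polynomial ℂ) (RatFunc ℂ) p) =
      algebraMap (Polynomial ℂ) (RatFunc ℂ) (p.comp (Polynomial.X + 1)) := by
  induction p using Polynomial.induction_on' with
  | add p q hp hq => simp [hp, hq]
  | monomial n a =>
    rw [← Polynomial.C_mul_X_pow_eq_monomial]
    have : σ (RatFunc.C a) = RatFunc.C a := by
      have := σ.commutes a
      simpa [RatFunc.algebraMap_eq_C] using this
    simp [hσ, this]

theorem RegAt.sigma {σ : RatFunc ℂ →ₐ[ℂ] RatFunc ℂ} (hσ : σ RatFunc.X = RatFunc.X + 1)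
    {a : ℂ} {f : RatFunc ℂ} : RegAt a (σ f) ↔ RegAt (a + 1) f := by
  constructor
  · rintro ⟨p, q, hq, h⟩
    refine ⟨p.comp (Polynomial.X - 1), q.comp (Polynomial.X - 1), by simpa using hq, ?_⟩
    apply σ.toRingHom.injective
    simp only [AlgHom.toRingHom_eq_coe, RingHom.coe_coe, map_mul, sigma_poly σ hσ,
      Polynomial.comp_assoc]
    simpa using h
  · rintro ⟨p, q, hq, h⟩
    refine ⟨p.comp (Polynomial.X + 1), q.comp (Polynomial.X + 1), by simpa using hq, ?_⟩
    rw [← sigma_poly σ hσ, ← sigma_poly σ hσ, ← map_mul, h]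

theorem finite_not_regAt (f : RatFunc ℂ) : {a | ¬ RegAt a f}.Finite := by
  refine (f.denom.roots.toFinset.finite_toSet).subset ?_
  intro a ha
  have h0 : f.denom ≠ 0 := f.denom_ne_zero
  simp only [Finset.mem_coe, Multiset.mem_toFinset, Polynomial.mem_roots h0, Polynomial.IsRoot]
  by_contra h
  refine ha ⟨f.num, f.denom, h, ?_⟩
  have h1 : algebraMap (Polynomial ℂ) (RatFunc ℂ) f.denom ≠ 0 := by simpa using h0
  conv_lhs => rw [← RatFunc.num_div_denom f]
  rw [RatFunc.num_div_denom f]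
  nth_rewrite 1 [← RatFunc.num_div_denom f]
  field_simp

theorem iter_D (D : Derivation ℂ (RatFunc ℂ) (RatFunc ℂ)) (hD : D RatFunc.X = 1) (i : ℕ) :
    (⇑D)^[i] (RatFunc.X⁻¹) = ((-1) ^ i * (i.factorial : ℂ)) • (RatFunc.X⁻¹) ^ (i + 1) := by
  induction i with
  | zero => simp
  | succ i ih =>
    rw [Function.iterate_succ_apply', ih, D.map_smul, D.leibniz_pow, D.leibniz_inv, hD]
    simp only [smul_eq_mul]
    simp only [Algebra.smul_def, Nat.factorial_succ, nsmul_eq_mul]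
    simp only [Nat.add_sub_cancel, map_mul, map_pow, map_neg, map_one, map_natCast]
    push_cast
    ring

theorem F_mul (D : Derivation ℂ (RatFunc ℂ) (RatFunc ℂ)) (hD : D RatFunc.X = 1)
    (n : ℕ) (lam : Fin (n + 1) → ℂ) :
    (∑ i : Fin (n + 1), lam i • (⇑D)^[(i : ℕ)] (RatFunc.X⁻¹)) *
      algebraMap (Polynomial ℂ) (RatFunc ℂ) (Polynomial.X ^ (n + 1)) =
    algebraMap (Polynomial ℂ) (RatFunc ℂ) (∑ i : Fin (n + 1),
      Polynomial.monomial (n - (i : ℕ)) (lam i * ((-1) ^ (i : ℕ) * ((i : ℕ).factorial : ℂ)))) := by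
  rw [map_sum, Finset.sum_mul]
  refine Finset.sum_congr rfl fun i _ => ?_
  rw [iter_D D hD, smul_smul, ← Polynomial.C_mul_X_pow_eq_monomial, map_mul, map_pow, map_pow,
    RatFunc.algebraMap_X, RatFunc.algebraMap_C, Algebra.smul_def, RatFunc.algebraMap_eq_C, mul_assoc]
  congr 1
  have h : n + 1 = (i + 1) + (n - (i : ℕ)) := by have := i.2; omega
  have hX : (RatFunc.X : RatFunc ℂ) ≠ 0 := RatFunc.X_ne_zero
  generalize (i : ℕ) = k at h ⊢
  have h2 : (RatFunc.X : RatFunc ℂ) ^ (n + 1) = RatFunc.X ^ (k + 1) * RatFunc.X ^ (n - k) := by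
    rw [← pow_add, ← h]
  rw [h2, ← mul_assoc, ← mul_pow, inv_mul_cancel₀ hX, one_pow, one_mul]

theorem not_reg_zero (D : Derivation ℂ (RatFunc ℂ) (RatFunc ℂ)) (hD : D RatFunc.X = 1)
    (n : ℕ) (lam : Fin (n + 1) → ℂ) (hlam : ∃ i, lam i ≠ 0) :
    ¬ RegAt 0 (∑ i : Fin (n + 1), lam i • (⇑D)^[(i : ℕ)] (RatFunc.X⁻¹)) := by
  rintro ⟨p, q, hq, h⟩
  have hF := F_mul D hD n lam
  set P : Polynomial ℂ := ∑ i : Fin (n + 1),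
      Polynomial.monomial (n - (i : ℕ)) (lam i * ((-1) ^ (i : ℕ) * ((i : ℕ).factorial : ℂ))) with hP
  have e : Polynomial.X ^ (n + 1) * p = P * q := by
    apply RatFunc.algebraMap_injective ℂ
    rw [map_mul, map_mul, ← hF, ← h]
    ring
  have hd : (Polynomial.X : Polynomial ℂ) ^ (n + 1) ∣ P := by
    refine Polynomial.prime_X.pow_dvd_of_dvd_mul_right (n + 1) ?_ (Dvd.intro _ e)
    rw [Polynomial.X_dvd_iff, Polynomial.coeff_zero_eq_eval_zero]
    exact hq
  obtain ⟨i, hi⟩ := hlam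
  have hc := (Polynomial.X_pow_dvd_iff.1 hd) (n - i) (by omega)
  rw [hP, Polynomial.finsetSum_coeff, Finset.sum_eq_single i] at hc
  · simp [hi, Nat.factorial_ne_zero] at hc
  · intro j _ hj
    rw [Polynomial.coeff_monomial, if_neg]
    intro h'
    apply hj
    ext
    omega
  · simp

/-- In `ℂ(X)` with the standard derivation `D = d/dX` and the shift automorphism
`σ : X ↦ X + 1`, no nonzero `ℂ`-linear combination of `1/X, D(1/X), …, Dⁿ(1/X)` is of the
form `σ(g) - g` with `g ∈ ℂ(X)`. -/
theorem one_over_X_not_summable_finite_difference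
    (D : Derivation ℂ (RatFunc ℂ) (RatFunc ℂ)) (hD : D RatFunc.X = 1)
    (σ : RatFunc ℂ →ₐ[ℂ] RatFunc ℂ) (hσ : σ RatFunc.X = RatFunc.X + 1)
    (n : ℕ) (lam : Fin (n + 1) → ℂ) (hlam : ∃ i, lam i ≠ 0) (g : RatFunc ℂ) :
    ∑ i : Fin (n + 1), lam i • (⇑D)^[(i : ℕ)] (RatFunc.X⁻¹) ≠ σ g - g := by
  intro hg
  have h0 := not_reg_zero D hD n lam hlam
  have h1 : ∀ a : ℂ, a ≠ 0 → RegAt a (σ g - g) := fun a ha => by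
    rw [← hg]
    exact ⟨_, Polynomial.X ^ (n + 1), by simp [ha], F_mul D hD n lam⟩
  rw [hg] at h0
  have hfin := finite_not_regAt g
  have key : ∀ a : ℂ, a ≠ 0 → (RegAt a g ↔ RegAt (a + 1) g) := fun a ha => by
    rw [← RegAt.sigma hσ]
    constructor
    · intro h
      have h2 : RegAt a (0 : RatFunc ℂ) := ⟨0, 1, by simp, by simp⟩
      simpa using (h1 a ha).sub (h2.sub h)
    · intro h
      simpa using h.sub (h1 a ha)
  by_cases hr : RegAt 0 g
  · have hs : ¬ RegAt (0 + 1) g := fun h => h0 (((RegAt.sigma hσ).2 h).sub hr)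
    have : ∀ k : ℕ, ¬ RegAt ((k : ℂ) + 1) g := by
      intro k
      induction k with
      | zero => simpa using hs
      | succ k ih =>
        rw [key _ (Nat.cast_add_one_ne_zero k)] at ih
        simpa using ih
    refine Set.infinite_of_injective_forall_mem (f := fun k : ℕ => (k : ℂ) + 1) ?_ this hfin
    intro a b hab
    simpa using hab
  · have : ∀ k : ℕ, ¬ RegAt (-(k : ℂ)) g := by
      intro k
      induction k with
      | zero => simpa using hr
      | succ k ih =>
        rw [key _ (neg_ne_zero.2 (by exact_mod_cast Nat.succ_ne_zero k))]
        simpa using ih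
    refine Set.infinite_of_injective_forall_mem (f := fun k : ℕ => -(k : ℂ)) ?_ this hfin
    intro a b hab
    simpa using hab
end

section
/- Let F be a field, τ : F → F a ring automorphism, k := F^τ its fixed field, and K a subfield of F with τ(K) = K and k ⊆ K. Let A ∈ GL_d(K), let U ∈ GL_d(F) satisfy τ(U) = A·U, let R be the K-subalgebra of F generated by the entries of U and (det U)⁻¹, and let L ⊆ F be the field of fractions of R inside F (i.e. the subfield of F generated by K and the entries of U). Then for f ∈ L the following are equivalent: (1) f ∈ R; (2) the K-linear span of {τⁿ(f) : n ≥ 0} in F is a finite-dimensional K-vector space. -/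
set_option synthInstance.maxHeartbeats 400000
set_option maxHeartbeats 1000000

open scoped TensorProduct

section PV
variable {F : Type*} [Field F]

/-- `τ ⊗ τ` on `F ⊗[K] F`. -/
noncomputable def tauT (τ : F ≃+* F) (K : Subfield F) (hτK : ∀ a : F, a ∈ K ↔ τ a ∈ K) :
    F ⊗[K] F →+ F ⊗[K] F :=
  TensorProduct.liftAddHom
    { toFun := fun a =>
        { toFun := fun b => (τ a) ⊗ₜ[K] (τ b)
          map_zero' := by simp
          map_add' := fun x y => by rw [map_add, TensorProduct.tmul_add] }
      map_zero' := by ext; simp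
      map_add' := fun x y => by ext z; simp [TensorProduct.add_tmul] }
    (by
      intro r m n
      have h1 : τ (r • m) = (⟨τ r, (hτK r).1 r.2⟩ : K) • τ m := by
        simp [Subfield.smul_def]
      have h2 : τ (r • n) = (⟨τ r, (hτK r).1 r.2⟩ : K) • τ n := by
        simp [Subfield.smul_def]
      simp only [AddMonoidHom.coe_mk, ZeroHom.coe_mk]
      rw [h1, h2, TensorProduct.smul_tmul])

variable (τ : F ≃+* F) (K : Subfield F) (hτK : ∀ a : F, a ∈ K ↔ τ a ∈ K)

theorem tauT_tmul (a b : F) : tauT τ K hτK (a ⊗ₜ b) = (τ a) ⊗ₜ (τ b) := rfl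

theorem tauT_mul (x y : F ⊗[K] F) :
    tauT τ K hτK (x * y) = tauT τ K hτK x * tauT τ K hτK y := by
  induction x using TensorProduct.induction_on with
  | zero => simp
  | add x₁ x₂ h1 h2 => rw [add_mul, map_add, h1, h2, map_add, add_mul]
  | tmul a b =>
    induction y using TensorProduct.induction_on with
    | zero => simp
    | add x₁ x₂ h1 h2 => rw [mul_add, map_add, h1, h2, map_add, mul_add]
    | tmul c d => simp [tauT_tmul]

theorem tauT_smul (a : F) (x : F ⊗[K] F) :
    tauT τ K hτK (a • x) = τ a • tauT τ K hτK x := by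
  induction x using TensorProduct.induction_on with
  | zero => simp
  | add x₁ x₂ h1 h2 => rw [smul_add, map_add, h1, h2, map_add, smul_add]
  | tmul c d => simp [tauT_tmul, TensorProduct.smul_tmul']

/-- multiplication map -/
noncomputable def mT : F ⊗[K] F →ₐ[F] F :=
  Algebra.TensorProduct.lift (AlgHom.id F F) (AlgHom.id K F) (fun _ _ => mul_comm _ _)

theorem mT_tmul (a b : F) : mT K (a ⊗ₜ b) = a * b := by
  exact Algebra.TensorProduct.lift_tmul _ _ _ _ _

theorem mT_tau (x : F ⊗[K] F) : mT K (tauT τ K hτK x) = τ (mT K x) := by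
  induction x using TensorProduct.induction_on with
  | zero => simp
  | add x₁ x₂ h1 h2 => simp only [map_add, h1, h2]
  | tmul c d => simp [tauT_tmul, mT_tmul]

/-- The subring of invariants in the image of `R ⊗ R`. -/
noncomputable def BT (R : Subalgebra K F) : Subring (F ⊗[K] F) where
  carrier := {x | tauT τ K hτK x = x ∧ x ∈ (Algebra.TensorProduct.map R.val R.val).range}
  mul_mem' := fun {a b} ha hb => ⟨by rw [tauT_mul, ha.1, hb.1], mul_mem ha.2 hb.2⟩
  add_mem' := fun {a b} ha hb => ⟨by rw [map_add, ha.1, hb.1], add_mem ha.2 hb.2⟩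
  one_mem' := ⟨by rw [Algebra.TensorProduct.one_def, tauT_tmul, map_one], one_mem _⟩
  zero_mem' := ⟨map_zero _, zero_mem _⟩
  neg_mem' := fun {a} ha => ⟨by rw [map_neg, ha.1], neg_mem ha.2⟩

theorem tmul_mem_range (R : Subalgebra K F) {a b : F} (ha : a ∈ R) (hb : b ∈ R) :
    a ⊗ₜ[K] b ∈ (Algebra.TensorProduct.map R.val R.val).range :=
  ⟨(⟨a, ha⟩ : R) ⊗ₜ (⟨b, hb⟩ : R), by simp⟩

/-- Descent: shortest length argument. -/
theorem descent (hkK : ∀ a : F, τ a = a → a ∈ K) (R : Subalgebra K F)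
    (N : Submodule F (F ⊗[K] F)) (hN : ∀ x ∈ N, tauT τ K hτK x ∈ N) (n : ℕ) :
    ∀ c : (BT τ K hτK R) →₀ F, c.support.card ≤ n →
      Finsupp.linearCombination F (fun b : BT τ K hτK R => (b : F ⊗[K] F)) c ∈ N →
      mT K (Finsupp.linearCombination F (fun b : BT τ K hτK R => (b : F ⊗[K] F)) c) ≠ 0 →
      ∃ x ∈ BT τ K hτK R, x ∈ N ∧ mT K x ≠ 0 := by
  classical
  set ℓ := Finsupp.linearCombination F (fun b : BT τ K hτK R => (b : F ⊗[K] F)) with hℓ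
  have htau : ∀ c : (BT τ K hτK R) →₀ F,
      ℓ (c.mapRange τ (map_zero τ)) = tauT τ K hτK (ℓ c) := by
    intro c
    induction c using Finsupp.induction_linear with
    | zero => simp
    | add f g hf hg => rw [Finsupp.mapRange_add (by simp), map_add, hf, hg, map_add, map_add]
    | single a b => simp [hℓ, tauT_smul, a.2.1]
  induction n with
  | zero =>
    intro c hc _ hm
    have : c = 0 := by simpa using hc
    simp [this] at hm
  | succ n ih =>
    intro c hc hcN hm
    have hc0 : c ≠ 0 := by rintro rfl; simp at hm
    obtain ⟨b0, hb0⟩ := Finsupp.support_nonempty_iff.2 hc0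
    have hb0' : c b0 ≠ 0 := by simpa using hb0
    set c1 := (c b0)⁻¹ • c with hc1
    have hc1s : c1.support ⊆ c.support := Finsupp.support_smul
    have hc1N : ℓ c1 ∈ N := by rw [hc1, map_smul]; exact N.smul_mem _ hcN
    have hc1m : mT K (ℓ c1) ≠ 0 := by
      rw [hc1, map_smul, map_smul, smul_eq_mul]
      exact mul_ne_zero (inv_ne_zero hb0') hm
    have hc1b : c1 b0 = 1 := by simp [hc1, hb0']
    clear_value c1
    set y := c1.mapRange τ (map_zero τ) - c1 with hy
    have hyb : ∀ b, y b = τ (c1 b) - c1 b := by intro b; simp [hy]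
    have hyN : ℓ y ∈ N := by
      rw [hy, map_sub, htau]; exact N.sub_mem (hN _ hc1N) hc1N
    have hcard : ∀ (b) (z : (BT τ K hτK R) →₀ F), b ∈ c.support → z b = 0 →
        (∀ b, c1 b = 0 → z b = 0) → z.support.card ≤ n := by
      intro b z hb hz h
      have : z.support ⊆ c.support.erase b := by
        intro b' hb'
        have hzb' : z b' ≠ 0 := by simpa using hb'
        refine Finset.mem_erase.2 ⟨?_, hc1s ?_⟩
        · rintro rfl; exact hzb' hz
        · rw [Finsupp.mem_support_iff]; exact fun h' => hzb' (h _ h')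
      have h2 := Finset.card_le_card this
      rw [Finset.card_erase_of_mem hb] at h2
      omega
    by_cases hy0 : y = 0
    · have hk : ∀ b, c1 b ∈ K := fun b => hkK _ (by
        have := hyb b; rw [hy0] at this
        exact sub_eq_zero.1 this.symm)
      refine ⟨ℓ c1, ⟨?_, ?_⟩, hc1N, hc1m⟩
      · rw [← htau]; exact congrArg _ (sub_eq_zero.1 hy0)
      · rw [hℓ, Finsupp.linearCombination_apply]
        refine Subalgebra.sum_mem _ fun b _ => ?_
        have : c1 b • (b : F ⊗[K] F) = (⟨c1 b, hk b⟩ : K) • (b : F ⊗[K] F) := rfl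
        simp only [this]
        exact Subalgebra.smul_mem _ b.2.2 _
    · by_cases hym : mT K (ℓ y) = 0
      · obtain ⟨b1, hb1⟩ := Finsupp.support_nonempty_iff.2 hy0
        have hb1' : y b1 ≠ 0 := by simpa using hb1
        refine ih (c1 - (c1 b1 / y b1) • y) (hcard b1 _ ?_ ?_ ?_) ?_ ?_
        · apply hc1s
          rw [Finsupp.mem_support_iff]
          intro h; apply hb1'; rw [hyb, h]; simp
        · simp [hb1']
        · intro b hb; simp [hyb, hb]
        · rw [map_sub, map_smul]; exact N.sub_mem hc1N (N.smul_mem _ hyN)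
        · rw [map_sub, map_smul, map_sub, map_smul, hym]; simpa using hc1m
      · refine ih y (hcard b0 _ hb0 ?_ ?_) hyN hym
        · rw [hyb, hc1b]; simp
        · intro b hb; rw [hyb, hb]; simp

/-- The subring spanned over `F` by invariants contains `1 ⊗ R`, hence `R` is `τ`-simple. -/
theorem tau_simple (hkK : ∀ a : F, τ a = a → a ∈ K) (R : Subalgebra K F)
    (hspan : ∀ r ∈ R, (1 : F) ⊗ₜ[K] r ∈
      Submodule.span F (BT τ K hτK R : Set (F ⊗[K] F)))
    (I : Submodule K F) (hIR : ∀ r ∈ R, ∀ x ∈ I, r * x ∈ I) (hIle : ∀ x ∈ I, x ∈ R)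
    (hIτ : ∀ x ∈ I, τ x ∈ I) (r : F) (hr : r ∈ I) (hr0 : r ≠ 0) : (1 : F) ∈ I := by
  set N : Submodule F (F ⊗[K] F) :=
    Submodule.span F ((fun b : F => (1 : F) ⊗ₜ[K] b) '' (I : Set F)) with hNdef
  have hN : ∀ x ∈ N, tauT τ K hτK x ∈ N := by
    intro x hx
    induction hx using Submodule.span_induction with
    | mem x hx =>
      obtain ⟨b, hb, rfl⟩ := hx
      refine Submodule.subset_span ⟨τ b, hIτ b hb, ?_⟩
      simp [tauT_tmul]
    | zero => simp
    | add x y _ _ hx hy => rw [map_add]; exact N.add_mem hx hy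
    | smul a x _ hx => rw [tauT_smul]; exact N.smul_mem _ hx
  have h1 := hspan r (hIle r hr)
  have hrange : Set.range (fun b : BT τ K hτK R => (b : F ⊗[K] F)) = (BT τ K hτK R : Set _) :=
    Subtype.range_coe
  rw [← hrange] at h1
  obtain ⟨c, hc⟩ := Finsupp.mem_span_range_iff_exists_finsupp.1 h1
  have hc' : Finsupp.linearCombination F (fun b : BT τ K hτK R => (b : F ⊗[K] F)) c
      = (1 : F) ⊗ₜ[K] r := hc
  obtain ⟨x, hxB, hxN, hxm⟩ := descent τ K hτK hkK R N hN _ c le_rfl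
    (by rw [hc']; exact Submodule.subset_span ⟨r, hr, rfl⟩)
    (by rw [hc', mT_tmul]; simpa using hr0)
  obtain ⟨σ, hσ⟩ := (Subalgebra.toSubmodule R).subtype.exists_leftInverse_of_injective
    (LinearMap.ker_eq_bot.2 Subtype.val_injective)
  let E : F ⊗[K] F →ₗ[K] F :=
    LinearMap.mul' K F ∘ₗ LinearMap.rTensor F ((Subalgebra.toSubmodule R).subtype ∘ₗ σ)
  have hE : ∀ a b : F, E (a ⊗ₜ b) = (σ a : F) * b := fun a b => rfl
  have hσR : ∀ a ∈ R, (σ a : F) = a := fun a ha => by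
    have := LinearMap.congr_fun hσ ⟨a, ha⟩
    exact congrArg Subtype.val this
  have hEN : ∀ a : F, ∀ x ∈ N, E (a • x) ∈ I := by
    intro a x hx
    induction hx using Submodule.span_induction generalizing a with
    | mem x hx =>
      obtain ⟨b, hb, rfl⟩ := hx
      rw [TensorProduct.smul_tmul', hE]
      exact hIR _ (σ _).2 _ hb
    | zero => simp
    | add x y _ _ hx hy => rw [smul_add, map_add]; exact I.add_mem (hx a) (hy a)
    | smul b x _ hx => rw [smul_smul]; exact hx _
  have hES : E x = mT K x := by
    obtain ⟨z, hz⟩ := hxB.2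
    rw [← hz]
    clear hz
    induction z using TensorProduct.induction_on with
    | zero => simp
    | add x y hx hy => simp only [map_add] at hx hy ⊢; rw [hx, hy]
    | tmul a b =>
      change E ((a : F) ⊗ₜ (b : F)) = mT K ((a : F) ⊗ₜ (b : F))
      rw [hE, mT_tmul, hσR _ a.2]
  have hmI : mT K x ∈ I := by rw [← hES, ← one_smul F x]; exact hEN 1 x hxN
  have hmK : mT K x ∈ K := hkK _ (by rw [← mT_tau τ K hτK, hxB.1])
  have := I.smul_mem (⟨mT K x, hmK⟩⁻¹ : K) hmI
  have h3 : (⟨mT K x, hmK⟩⁻¹ : K) • mT K x = 1 := by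
    simp [Subfield.smul_def, hxm]
  rwa [h3] at this

/-- entries of inverse in K -/
theorem inv_entries {d : ℕ} (A : Matrix (Fin d) (Fin d) F) (hA : ∀ i j, A i j ∈ K) :
    ∀ i j, A⁻¹ i j ∈ K := by
  set A' : Matrix (Fin d) (Fin d) K := fun i j => ⟨A i j, hA i j⟩ with hA'
  have h : A = A'.map K.subtype := by ext; rfl
  have hd : A.det = K.subtype A'.det := by rw [h]; exact (RingHom.map_det _ _).symm
  have ha : A.adjugate = (A'.adjugate).map K.subtype := by
    rw [h]; exact (RingHom.map_adjugate K.subtype A').symm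
  intro i j
  rw [Matrix.inv_def, Ring.inverse_eq_inv', hd, ha]
  exact K.mul_mem (K.inv_mem (A'.det).2) (A'.adjugate i j).2

end PV

/-- An element `f` of the Picard-Vessiot field `L = K(U)` belongs to the Picard-Vessiot ring
`R = K[U, (det U)⁻¹]` if and only if the `K`-span of its `τ`-iterates is finite-dimensional. -/
theorem mem_picardVessiot_ring_iff_finite_span
    (F : Type*) [Field F] (τ : F ≃+* F)
    (k : Subfield F) (hk : ∀ a : F, a ∈ k ↔ τ a = a)
    (K : Subfield F) (hkK : (k : Set F) ⊆ (K : Set F)) (hτK : ∀ a : F, a ∈ K ↔ τ a ∈ K)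
    (d : ℕ) (A U : Matrix (Fin d) (Fin d) F)
    (hA : ∀ i j, A i j ∈ K) (hAdet : A.det ≠ 0) (hUdet : U.det ≠ 0)
    (hU : U.map τ = A * U)
    (R : Subalgebra K F)
    (hR : R = Algebra.adjoin K
      ((Set.range fun p : Fin d × Fin d => U p.1 p.2) ∪ {(U.det)⁻¹}))
    (L : Subfield F)
    (hL : L = Subfield.closure ((K : Set F) ∪ Set.range fun p : Fin d × Fin d => U p.1 p.2))
    (f : F) (hf : f ∈ L) :
    f ∈ R ↔
      FiniteDimensional K (Submodule.span K (Set.range fun n : ℕ => (⇑τ)^[n] f)) := by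
  have hkK' : ∀ a : F, τ a = a → a ∈ K := fun a ha => hkK ((hk a).2 ha)
  have hτU : ∀ i j, τ (U i j) = ∑ l, A i l * U l j := fun i j => by
    have := congrFun (congrFun hU i) j
    simpa [Matrix.mul_apply] using this
  have hτdet : τ U.det = A.det * U.det := by
    rw [← Matrix.det_mul, ← hU]; exact RingHom.map_det (τ : F →+* F) U
  have hdetK : A.det ∈ K := by
    rw [Matrix.det_apply]
    refine K.sum_mem fun σ _ => ?_
    rcases Int.units_eq_one_or (Equiv.Perm.sign σ) with h | h <;> rw [h]
    · simpa using K.prod_mem fun i _ => hA _ _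
    · simpa using K.prod_mem fun i _ => hA _ _
  have hUR : ∀ i j, U i j ∈ R := fun i j => by
    rw [hR]; exact Algebra.subset_adjoin (Or.inl ⟨(i, j), rfl⟩)
  have hdR : (U.det)⁻¹ ∈ R := by
    rw [hR]; exact Algebra.subset_adjoin (Or.inr rfl)
  have hKR : ∀ a ∈ K, a ∈ R := fun a ha => R.algebraMap_mem ⟨a, ha⟩
  have hτsK : ∀ a ∈ K, τ.symm a ∈ K := fun a ha => (hτK _).2 (by simpa using ha)
  constructor
  · intro hfR
    have key : ∃ W : Submodule K F, W.FG ∧ (∀ w ∈ W, τ w ∈ W) ∧ f ∈ W := by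
      have stab : ∀ S : Set F, (∀ s ∈ S, τ s ∈ Submodule.span K S) →
          ∀ w ∈ Submodule.span K S, τ w ∈ Submodule.span K S := by
        intro S hS w hw
        induction hw using Submodule.span_induction with
        | mem x hx => exact hS x hx
        | zero => simp
        | add x y _ _ hx hy => rw [map_add]; exact Submodule.add_mem _ hx hy
        | smul a x _ hx =>
          have h1 : τ (a • x) = (⟨τ a, (hτK a).1 a.2⟩ : K) • τ x := by
            simp [Subfield.smul_def]
          rw [h1]; exact Submodule.smul_mem _ _ hx
      clear hf
      rw [hR] at hfR
      induction hfR using Algebra.adjoin_induction with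
      | mem x hx =>
        rcases hx with ⟨p, rfl⟩ | hx
        · refine ⟨Submodule.span K (Set.range fun p : Fin d × Fin d => U p.1 p.2),
            Submodule.fg_span (Set.finite_range _), stab _ ?_, Submodule.subset_span ⟨p, rfl⟩⟩
          rintro _ ⟨⟨i, j⟩, rfl⟩
          simp only [hτU]
          refine Submodule.sum_mem _ fun l _ => ?_
          exact Submodule.smul_mem _ (⟨A i l, hA i l⟩ : K) (Submodule.subset_span ⟨(l, j), rfl⟩)
        · rw [Set.mem_singleton_iff] at hx
          subst hx
          refine ⟨Submodule.span K {(U.det)⁻¹}, Submodule.fg_span (Set.finite_singleton _),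
            stab _ ?_, Submodule.subset_span rfl⟩
          rintro _ rfl
          rw [map_inv₀, hτdet, mul_inv]
          exact Submodule.smul_mem _ (⟨A.det⁻¹, K.inv_mem hdetK⟩ : K) (Submodule.subset_span rfl)
      | algebraMap r =>
        refine ⟨Submodule.span K {1}, Submodule.fg_span (Set.finite_singleton _),
            stab _ ?_, ?_⟩
        · rintro _ rfl
          rw [map_one]; exact Submodule.subset_span rfl
        · rw [Algebra.algebraMap_eq_smul_one]
          exact Submodule.smul_mem _ _ (Submodule.subset_span rfl)
      | add x y _ _ hx hy =>
        obtain ⟨W1, h1, h2, h3⟩ := hx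
        obtain ⟨W2, g1, g2, g3⟩ := hy
        refine ⟨W1 ⊔ W2, h1.sup g1, fun w hw => ?_, Submodule.add_mem_sup h3 g3⟩
        obtain ⟨x, hx, y, hy, rfl⟩ := Submodule.mem_sup.1 hw
        rw [map_add]; exact Submodule.add_mem_sup (h2 x hx) (g2 y hy)
      | mul x y _ _ hx hy =>
        obtain ⟨W1, h1, h2, h3⟩ := hx
        obtain ⟨W2, g1, g2, g3⟩ := hy
        refine ⟨W1 * W2, h1.mul g1, fun w hw => ?_, Submodule.mul_mem_mul h3 g3⟩
        induction hw using Submodule.mul_induction_on' with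
        | mem_mul_mem x hx y hy =>
          rw [map_mul]; exact Submodule.mul_mem_mul (h2 x hx) (g2 y hy)
        | add x _ y _ hx hy => rw [map_add]; exact Submodule.add_mem _ hx hy
    obtain ⟨W, hW, hWτ, hfW⟩ := key
    have hle : Submodule.span K (Set.range fun n : ℕ => (⇑τ)^[n] f) ≤ W := by
      rw [Submodule.span_le]
      rintro _ ⟨n, rfl⟩
      induction n with
      | zero => exact hfW
      | succ n ih =>
        simp only [Function.iterate_succ_apply'] at ih ⊢
        exact hWτ _ ih
    have : FiniteDimensional K W := Module.Finite.iff_fg.2 hW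
    exact Submodule.finiteDimensional_of_le hle
  · intro hfin
    -- `τ` and its inverse preserve `R`
    have hτR : ∀ r ∈ R, τ r ∈ R := by
      intro r hr
      rw [hR] at hr
      induction hr using Algebra.adjoin_induction with
      | mem x hx =>
        rcases hx with ⟨p, rfl⟩ | hx
        · simp only [hτU]
          exact R.sum_mem fun l _ => R.mul_mem (hKR _ (hA _ _)) (hUR _ _)
        · rw [Set.mem_singleton_iff] at hx
          subst hx
          rw [map_inv₀, hτdet, mul_inv]
          exact R.mul_mem (hKR _ (K.inv_mem hdetK)) hdR
      | algebraMap r => exact hKR _ ((hτK r).1 r.2)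
      | add x y _ _ hx hy => rw [map_add]; exact R.add_mem hx hy
      | mul x y _ _ hx hy => rw [map_mul]; exact R.mul_mem hx hy
    have hτsR : ∀ r ∈ R, τ.symm r ∈ R := by
      have hUs : U.map τ.symm = (A.map τ.symm)⁻¹ * U := by
        have h1 : U = A.map τ.symm * U.map τ.symm := by
          have h2 : (U.map τ).map τ.symm = (A * U).map τ.symm := by rw [hU]
          have h3 : (A * U).map τ.symm = A.map τ.symm * U.map τ.symm :=
            Matrix.map_mul (f := (τ.symm : F →+* F))
          rw [← h3, ← h2]; ext; simp
        have hdet : IsUnit (A.map τ.symm).det := by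
          have : (A.map τ.symm).det = τ.symm A.det :=
            (RingHom.map_det (τ.symm : F →+* F) A).symm
          rw [this]; exact (by simpa using hAdet : τ.symm A.det ≠ 0).isUnit
        conv_rhs => rw [h1]
        rw [← Matrix.mul_assoc, Matrix.nonsing_inv_mul _ hdet, Matrix.one_mul]
      have hinv := inv_entries K (A.map τ.symm) (fun i j => hτsK _ (hA i j))
      have hτsU : ∀ i j, τ.symm (U i j) = ∑ l, (A.map τ.symm)⁻¹ i l * U l j := fun i j => by
        have := congrFun (congrFun hUs i) j
        rwa [Matrix.mul_apply] at this
      have hτsdet : τ.symm (U.det)⁻¹ = τ.symm A.det * (U.det)⁻¹ := by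
        have : U.det = τ.symm A.det * τ.symm U.det := by
          rw [← map_mul, ← hτdet]; simp
        have h2 : τ.symm U.det ≠ 0 := by simpa using hUdet
        have h3 : τ.symm A.det ≠ 0 := by simpa using hAdet
        rw [map_inv₀]
        conv_rhs => rw [this]
        field_simp
      intro r hr
      rw [hR] at hr
      induction hr using Algebra.adjoin_induction with
      | mem x hx =>
        rcases hx with ⟨p, rfl⟩ | hx
        · simp only [hτsU]
          exact R.sum_mem fun l _ => R.mul_mem (hKR _ (hinv _ _)) (hUR _ _)
        · rw [Set.mem_singleton_iff] at hx
          subst hx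
          rw [hτsdet]
          exact R.mul_mem (hKR _ (hτsK _ hdetK)) hdR
      | algebraMap r => exact hKR _ (hτsK _ r.2)
      | add x y _ _ hx hy => rw [map_add]; exact R.add_mem hx hy
      | mul x y _ _ hx hy => rw [map_mul]; exact R.mul_mem hx hy
    -- the spanning property
    have hUinvR : ∀ i j, U⁻¹ i j ∈ R := by
      set U' : Matrix (Fin d) (Fin d) R := fun i j => ⟨U i j, hUR i j⟩ with hU'
      have ha : U.adjugate = (U'.adjugate).map R.val :=
        (RingHom.map_adjugate (R.val : R →+* F) U').symm
      intro i j
      rw [Matrix.inv_def, Ring.inverse_eq_inv', ha]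
      exact R.mul_mem hdR (U'.adjugate i j).2
    have hdetUR : U.det ∈ R := by
      have h : U.det * U.det * (U.det)⁻¹ ∈ R → U.det ∈ R := by
        intro h; rwa [mul_inv_cancel_right₀ hUdet] at h
      set U' : Matrix (Fin d) (Fin d) R := fun i j => ⟨U i j, hUR i j⟩ with hU'
      have ha : U.det = R.val U'.det := (RingHom.map_det (R.val : R →+* F) U').symm
      rw [ha]; exact (U'.det).2
    have hτinv : ∀ i p, ∑ l, τ (U⁻¹ i l) * A l p = U⁻¹ i p := by
      have hu : IsUnit U.det := hUdet.isUnit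
      have h1 : (U⁻¹).map τ * U.map τ = 1 := by
        have : (U⁻¹ * U).map τ = (U⁻¹).map τ * U.map τ := Matrix.map_mul (f := (τ : F →+* F))
        rw [← this, Matrix.nonsing_inv_mul _ hu]
        exact Matrix.map_one _ (map_zero τ) (map_one τ)
      rw [hU, ← Matrix.mul_assoc] at h1
      have h2 : (U⁻¹).map τ * A = U⁻¹ := (Matrix.inv_eq_left_inv h1).symm
      intro i p
      have := congrFun (congrFun h2 i) p
      rwa [Matrix.mul_apply] at this
    have hspan : ∀ r ∈ R, (1 : F) ⊗ₜ[K] r ∈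
        Submodule.span F (BT τ K hτK R : Set (F ⊗[K] F)) := by
      intro r hr
      rw [hR] at hr
      induction hr using Algebra.adjoin_induction with
      | mem x hx =>
        rcases hx with ⟨⟨i, j⟩, rfl⟩ | hx
        · have hZ : ∀ q, (∑ l, (U⁻¹ q l) ⊗ₜ[K] (U l j)) ∈ BT τ K hτK R := by
            intro q
            refine ⟨?_, Subalgebra.sum_mem _ fun l _ => tmul_mem_range K R (hUinvR _ _) (hUR _ _)⟩
            rw [map_sum]
            simp only [tauT_tmul, hτU, TensorProduct.tmul_sum]
            rw [Finset.sum_comm]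
            refine Finset.sum_congr rfl fun p _ => ?_
            rw [← hτinv q p, TensorProduct.sum_tmul]
            refine Finset.sum_congr rfl fun l _ => ?_
            have e1 : A l p * U p j = (⟨A l p, hA l p⟩ : K) • U p j := rfl
            have e2 : τ (U⁻¹ q l) * A l p = (⟨A l p, hA l p⟩ : K) • τ (U⁻¹ q l) := mul_comm _ _
            rw [e1, e2, TensorProduct.smul_tmul]
          have : (1 : F) ⊗ₜ[K] U i j = ∑ q, U i q • ∑ l, (U⁻¹ q l) ⊗ₜ[K] (U l j) := by
            simp only [Finset.smul_sum, TensorProduct.smul_tmul', smul_eq_mul]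
            rw [Finset.sum_comm]
            simp only [← TensorProduct.sum_tmul, ← Matrix.mul_apply]
            rw [Matrix.mul_nonsing_inv _ hUdet.isUnit]
            rw [Finset.sum_eq_single i]
            · simp
            · intro b _ hb; rw [Matrix.one_apply_ne hb.symm]; simp
            · simp
          simp only [this]
          exact Submodule.sum_mem _ fun q _ => Submodule.smul_mem _ _ (Submodule.subset_span (hZ q))
        · rw [Set.mem_singleton_iff] at hx
          subst hx
          have hb : U.det ⊗ₜ[K] (U.det)⁻¹ ∈ BT τ K hτK R := by
            refine ⟨?_, tmul_mem_range K R hdetUR hdR⟩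
            rw [tauT_tmul, map_inv₀, hτdet, mul_inv]
            have e1 : A.det * U.det = (⟨A.det, hdetK⟩ : K) • U.det := rfl
            have e2 : A.det⁻¹ * (U.det)⁻¹ = (⟨A.det, hdetK⟩⁻¹ : K) • (U.det)⁻¹ := rfl
            have hne : (⟨A.det, hdetK⟩ : K) ≠ 0 := fun h => hAdet (congrArg Subtype.val h)
            rw [e1, e2, TensorProduct.smul_tmul, smul_smul, mul_inv_cancel₀ hne, one_smul]
          have : (1 : F) ⊗ₜ[K] (U.det)⁻¹ = (U.det)⁻¹ • (U.det ⊗ₜ[K] (U.det)⁻¹) := by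
            rw [TensorProduct.smul_tmul', smul_eq_mul, inv_mul_cancel₀ hUdet]
          rw [this]
          exact Submodule.smul_mem _ _ (Submodule.subset_span hb)
      | algebraMap r =>
        have : (1 : F) ⊗ₜ[K] (algebraMap K F r) = (r : F) • (1 : F ⊗[K] F) := by
          rw [Algebra.algebraMap_eq_smul_one, ← TensorProduct.smul_tmul,
            Algebra.TensorProduct.one_def, TensorProduct.smul_tmul']
          rfl
        rw [this]
        exact Submodule.smul_mem _ _ (Submodule.subset_span (one_mem _))
      | add x y _ _ hx hy => rw [TensorProduct.tmul_add]; exact Submodule.add_mem _ hx hy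
      | mul x y _ _ hx hy =>
        have : (1 : F) ⊗ₜ[K] (x * y) = ((1 : F) ⊗ₜ[K] x) * ((1 : F) ⊗ₜ[K] y) := by simp
        rw [this]
        have h := Submodule.mul_mem_mul hx hy
        rw [Submodule.span_mul_span] at h
        refine Submodule.span_mono ?_ h
        rintro _ ⟨a, ha, b, hb, rfl⟩
        exact mul_mem ha hb
    -- common denominators
    have hQ : ∃ b ∈ R, b ≠ 0 ∧ f * b ∈ R := by
      clear hfin
      rw [hL] at hf
      induction hf using Subfield.closure_induction with
      | mem x hx =>
        refine ⟨1, R.one_mem, one_ne_zero, ?_⟩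
        rw [mul_one]
        rcases hx with hx | ⟨p, rfl⟩
        · exact hKR _ hx
        · exact hUR _ _
      | one => exact ⟨1, R.one_mem, one_ne_zero, by simp⟩
      | add x y _ _ hx hy =>
        obtain ⟨b, hb, hb0, hxb⟩ := hx
        obtain ⟨c, hc, hc0, hyc⟩ := hy
        refine ⟨b * c, R.mul_mem hb hc, mul_ne_zero hb0 hc0, ?_⟩
        have : (x + y) * (b * c) = (x * b) * c + (y * c) * b := by ring
        rw [this]; exact R.add_mem (R.mul_mem hxb hc) (R.mul_mem hyc hb)
      | neg x _ hx =>
        obtain ⟨b, hb, hb0, hxb⟩ := hx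
        exact ⟨b, hb, hb0, by rw [neg_mul]; exact R.neg_mem hxb⟩
      | inv x _ hx =>
        obtain ⟨b, hb, hb0, hxb⟩ := hx
        by_cases hx0 : x = 0
        · exact ⟨1, R.one_mem, one_ne_zero, by simp [hx0]⟩
        · exact ⟨x * b, hxb, mul_ne_zero hx0 hb0, by rwa [inv_mul_cancel_left₀ hx0]⟩
      | mul x y _ _ hx hy =>
        obtain ⟨b, hb, hb0, hxb⟩ := hx
        obtain ⟨c, hc, hc0, hyc⟩ := hy
        refine ⟨b * c, R.mul_mem hb hc, mul_ne_zero hb0 hc0, ?_⟩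
        have : (x * y) * (b * c) = (x * b) * (y * c) := by ring
        rw [this]; exact R.mul_mem hxb hyc
    let Q : Submodule K F :=
      { carrier := {x | ∃ b ∈ R, b ≠ 0 ∧ x * b ∈ R}
        zero_mem' := ⟨1, R.one_mem, one_ne_zero, by simp⟩
        add_mem' := by
          rintro x y ⟨b, hb, hb0, hxb⟩ ⟨c, hc, hc0, hyc⟩
          refine ⟨b * c, R.mul_mem hb hc, mul_ne_zero hb0 hc0, ?_⟩
          have : (x + y) * (b * c) = (x * b) * c + (y * c) * b := by ring
          rw [this]; exact R.add_mem (R.mul_mem hxb hc) (R.mul_mem hyc hb)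
        smul_mem' := by
          rintro a x ⟨b, hb, hb0, hxb⟩
          exact ⟨b, hb, hb0, by rw [smul_mul_assoc]; exact R.smul_mem hxb a⟩ }
    have hVQ : Submodule.span K (Set.range fun n : ℕ => (⇑τ)^[n] f) ≤ Q := by
      rw [Submodule.span_le]
      rintro _ ⟨n, rfl⟩
      induction n with
      | zero => exact hQ
      | succ n ih =>
        obtain ⟨b, hb, hb0, hxb⟩ := ih
        refine ⟨τ b, hτR _ hb, by simpa using hb0, ?_⟩
        simp only [Function.iterate_succ_apply']
        rw [← map_mul]; exact hτR _ hxb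
    have hden : ∀ W : Submodule K F, W.FG → W ≤ Q → ∃ b ∈ R, b ≠ 0 ∧ ∀ w ∈ W, w * b ∈ R := by
      intro W hW
      induction W, hW using Submodule.fg_induction with
      | singleton x =>
        intro hle
        obtain ⟨b, hb, hb0, hxb⟩ := hle (Submodule.mem_span_singleton_self x)
        refine ⟨b, hb, hb0, fun w hw => ?_⟩
        obtain ⟨a, rfl⟩ := Submodule.mem_span_singleton.1 hw
        rw [smul_mul_assoc]; exact R.smul_mem hxb a
      | sup W1 W2 _ _ h1 h2 =>
        intro hle
        obtain ⟨b, hb, hb0, hxb⟩ := h1 (le_sup_left.trans hle)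
        obtain ⟨c, hc, hc0, hyc⟩ := h2 (le_sup_right.trans hle)
        refine ⟨b * c, R.mul_mem hb hc, mul_ne_zero hb0 hc0, fun w hw => ?_⟩
        obtain ⟨x, hx, y, hy, rfl⟩ := Submodule.mem_sup.1 hw
        have : (x + y) * (b * c) = (x * b) * c + (y * c) * b := by ring
        rw [this]; exact R.add_mem (R.mul_mem (hxb x hx) hc) (R.mul_mem (hyc y hy) hb)
    obtain ⟨r, hr, hr0, hrV⟩ := hden _ (Module.Finite.iff_fg.1 hfin) hVQ
    let I : Submodule K F :=
      { carrier := {x | x ∈ R ∧ ∃ N : ℕ, ∀ n ≥ N, x * (⇑τ)^[n] f ∈ R}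
        zero_mem' := ⟨R.zero_mem, 0, fun n _ => by simp⟩
        add_mem' := by
          rintro x y ⟨hx, N, hN⟩ ⟨hy, M, hM⟩
          refine ⟨R.add_mem hx hy, max N M, fun n hn => ?_⟩
          rw [add_mul]
          exact R.add_mem (hN n (le_of_max_le_left hn)) (hM n (le_of_max_le_right hn))
        smul_mem' := by
          rintro a x ⟨hx, N, hN⟩
          exact ⟨R.smul_mem hx a, N, fun n hn => by
            rw [smul_mul_assoc]; exact R.smul_mem (hN n hn) a⟩ }
    have h1 : (1 : F) ∈ I := by
      refine tau_simple τ K hτK hkK' R hspan I ?_ (fun x hx => hx.1) ?_ r ?_ hr0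
      · rintro s hs x ⟨hx, N, hN⟩
        exact ⟨R.mul_mem hs hx, N, fun n hn => by
          rw [mul_assoc]; exact R.mul_mem hs (hN n hn)⟩
      · rintro x ⟨hx, N, hN⟩
        refine ⟨hτR _ hx, N + 1, fun n hn => ?_⟩
        obtain ⟨m, rfl⟩ : ∃ m, n = m + 1 := ⟨n - 1, by omega⟩
        rw [Function.iterate_succ_apply', ← map_mul]
        exact hτR _ (hN m (by omega))
      · exact ⟨hr, 0, fun n _ => by
          rw [mul_comm]; exact hrV _ (Submodule.subset_span ⟨n, rfl⟩)⟩
    obtain ⟨_, N, hN⟩ := h1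
    have hdown : ∀ n : ℕ, (⇑τ)^[n] f ∈ R → f ∈ R := by
      intro n
      induction n with
      | zero => exact id
      | succ n ih =>
        intro h
        rw [Function.iterate_succ_apply'] at h
        exact ih (by simpa using hτsR _ h)
    exact hdown N (by simpa using hN N le_rfl)
end
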